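/- arXiv:0901.3623 — 3 statements merged into one kernel-verified Lean document; each statement's English description precedes it below -/
import Mathlib

section
/- Let α be an ordinal. Then the Banach space C([0,α]) of continuous real-valued functions on the compact ordinal interval [0,α] (with the order topology), equipped with the supremum norm, admits an equivalent norm which is simultaneously C^1-smooth and LUR and is a limit, uniform on bounded sets, of C^∞-smooth norms. -/
open Filter Topology

/-- `N` is a norm on the vector space `Y`. -/
def IsNorm {Y : Type*} [AddCommGroup Y] [Module ℝ Y] (N : Y → ℝ) : Prop :=
  (∀ y, 0 ≤ N y) ∧ (∀ y, N y = 0 ↔ y = 0) ∧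
    (∀ (c : ℝ) (y : Y), N (c • y) = |c| * N y) ∧ (∀ y z, N (y + z) ≤ N y + N z)

/-- `N` is a norm equivalent to the given norm of `Y`. -/
def IsEquivNorm {Y : Type*} [NormedAddCommGroup Y] [NormedSpace ℝ Y] (N : Y → ℝ) : Prop :=
  IsNorm N ∧ ∃ a b : ℝ, 0 < a ∧ 0 < b ∧ ∀ y, a * ‖y‖ ≤ N y ∧ N y ≤ b * ‖y‖

/-- `N` is locally uniformly rotund: `N (x_r - x) → 0` whenever
`2 N(x_r)² + 2 N(x)² - N(x_r + x)² → 0`. -/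
def IsLUR {Y : Type*} [NormedAddCommGroup Y] [NormedSpace ℝ Y] (N : Y → ℝ) : Prop :=
  ∀ (x : Y) (xr : ℕ → Y),
    Tendsto (fun r => 2 * N (xr r) ^ 2 + 2 * N x ^ 2 - N (xr r + x) ^ 2) atTop (𝓝 0) →
      Tendsto (fun r => N (xr r - x)) atTop (𝓝 0)

/-- `N` is `k`-times continuously Fréchet differentiable away from the origin. -/
def IsCkSmoothNorm {Y : Type*} [NormedAddCommGroup Y] [NormedSpace ℝ Y]
    (k : WithTop ℕ∞) (N : Y → ℝ) : Prop :=
  ContDiffOn ℝ k N {y | y ≠ 0}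

/-- `N` is a limit, uniform on bounded sets, of equivalent `C^k`-smooth norms. -/
def IsUniformLimitOfCkSmoothNorms {Y : Type*} [NormedAddCommGroup Y] [NormedSpace ℝ Y]
    (k : WithTop ℕ∞) (N : Y → ℝ) : Prop :=
  ∃ Ni : ℕ → Y → ℝ, (∀ i, IsEquivNorm (Ni i) ∧ IsCkSmoothNorm k (Ni i)) ∧
    ∀ R > (0 : ℝ), ∀ ε > (0 : ℝ), ∃ i₀ : ℕ, ∀ i ≥ i₀, ∀ y : Y, ‖y‖ ≤ R → |Ni i y - N y| ≤ ε

/-- The ordinal interval `[0, α]` (with its order topology, induced from `Ordinal`)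
is a compact space. -/
instance Ordinal.compactSpace_Iic (α : Ordinal) : CompactSpace (Set.Iic α) :=
  isCompact_iff_compactSpace.mp (by rw [← Set.Icc_bot]; exact isCompact_Icc)


/-- Sublinear functionals. -/
def IsSubl {E : Type*} [NormedAddCommGroup E] [NormedSpace ℝ E] (p : E → ℝ) : Prop :=
  (∀ x y, p (x + y) ≤ p x + p y) ∧ ∀ (c : ℝ) (x : E), 0 < c → p (c • x) = c * p x

/-- Smooth off zero. -/
def SmoothOff {E : Type*} [NormedAddCommGroup E] [NormedSpace ℝ E] (p : E → ℝ) : Prop :=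
  ∀ x : E, x ≠ 0 → ContDiffAt ℝ ((⊤ : ℕ∞) : WithTop ℕ∞) p x

/-- Sublinear functionals that can be approximated from below by smooth ones. -/
def Smb {E : Type*} [NormedAddCommGroup E] [NormedSpace ℝ E] (p : E → ℝ) : Prop :=
  IsSubl p ∧ ∀ ε > (0 : ℝ), ∃ q : E → ℝ, IsSubl q ∧ SmoothOff q ∧
    ∀ x, p x - ε * ‖x‖ ≤ q x ∧ q x ≤ p x

theorem IsSubl.zero {E : Type*} [NormedAddCommGroup E] [NormedSpace ℝ E] {p : E → ℝ}
    (hp : IsSubl p) : p 0 = 0 := by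
  have := hp.2 2 0 (by norm_num)
  rw [smul_zero] at this
  linarith

theorem IsSubl.convexOn {E : Type*} [NormedAddCommGroup E] [NormedSpace ℝ E] {p : E → ℝ}
    (hp : IsSubl p) : ConvexOn ℝ Set.univ p := by
  refine ⟨convex_univ, fun x _ y _ a b ha hb hab => ?_⟩
  have h0 := hp.zero
  have key : ∀ (c : ℝ) (x : E), 0 ≤ c → p (c • x) = c * p x := by
    intro c x hc
    rcases hc.eq_or_lt with rfl | hc
    · simp [h0]
    · exact hp.2 c x hc
  calc p (a • x + b • y) ≤ p (a • x) + p (b • y) := hp.1 _ _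
    _ = a • p x + b • p y := by rw [key a x ha, key b y hb]; rfl

theorem IsSubl.sub_le {E : Type*} [NormedAddCommGroup E] [NormedSpace ℝ E] {p : E → ℝ}
    (hp : IsSubl p) {C : ℝ} (hC : ∀ x, p x ≤ C * ‖x‖) (x y : E) : p x - p y ≤ C * ‖x - y‖ := by
  have := hp.1 (x - y) y
  rw [sub_add_cancel] at this
  linarith [hC (x - y)]

theorem IsSubl.continuous {E : Type*} [NormedAddCommGroup E] [NormedSpace ℝ E] {p : E → ℝ}
    (hp : IsSubl p) {C : ℝ} (hC : ∀ x, p x ≤ C * ‖x‖) : Continuous p := by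
  refine continuous_iff_continuousAt.2 fun x => ?_
  rw [ContinuousAt, tendsto_iff_norm_sub_tendsto_zero]
  have h : ∀ y, ‖p y - p x‖ ≤ C * ‖y - x‖ := by
    intro y
    rw [Real.norm_eq_abs, abs_le]
    constructor
    · have := hp.sub_le hC x y
      rw [norm_sub_rev] at this
      linarith
    · exact hp.sub_le hC y x
  refine squeeze_zero (fun _ => norm_nonneg _) h ?_
  have : Continuous fun y : E => C * ‖y - x‖ := by fun_prop
  have := this.tendsto x
  simpa using this

/-- The profile function. -/
theorem exists_profile : ∃ ρ : ℝ → ℝ, ContDiff ℝ ((⊤ : ℕ∞) : WithTop ℕ∞) ρ ∧ Monotone ρ ∧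
    ConvexOn ℝ Set.univ ρ ∧ (∀ u ≤ 0, ρ u = 0) ∧ (∀ u, 0 ≤ ρ u) ∧ ∀ u ≥ 3, 1 < ρ u := by
  have hc : Continuous Real.smoothTransition := Real.smoothTransition.continuous
  let ρ : ℝ → ℝ := fun u => ∫ s in (0 : ℝ)..u, Real.smoothTransition s
  have hd : ∀ u, HasDerivAt ρ (Real.smoothTransition u) u := fun u =>
    intervalIntegral.integral_hasDerivAt_right (hc.intervalIntegrable _ _)
      hc.aestronglyMeasurable.stronglyMeasurableAtFilter hc.continuousAt
  have hdd : Differentiable ℝ ρ := fun u => (hd u).differentiableAt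
  have hder : deriv ρ = Real.smoothTransition := funext fun u => (hd u).deriv
  have hmono : Monotone ρ := monotone_of_deriv_nonneg hdd (by
    intro u; rw [hder]; exact Real.smoothTransition.nonneg u)
  have hz : ∀ u ≤ 0, ρ u = 0 := by
    intro u hu
    show ∫ s in (0 : ℝ)..u, Real.smoothTransition s = 0
    rw [intervalIntegral.integral_congr (g := fun _ => (0 : ℝ))]
    · simp
    · intro s hs
      rw [Set.uIcc_of_ge hu] at hs
      exact Real.smoothTransition.zero_of_nonpos hs.2
  have h0 : ρ 0 = 0 := hz 0 le_rfl
  refine ⟨ρ, ?_, hmono, ?_, hz, ?_, ?_⟩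
  · rw [contDiff_infty_iff_deriv]
    refine ⟨hdd, ?_⟩
    rw [hder]
    exact Real.smoothTransition.contDiff
  · exact Monotone.convexOn_univ_of_deriv hdd (by rw [hder]; exact Real.smoothTransition.monotone)
  · intro u
    rcases le_total u 0 with h | h
    · rw [hz u h]
    · rw [← h0]; exact hmono h
  · intro u hu
    refine lt_of_lt_of_le ?_ (hmono hu)
    have h1 : 0 ≤ ρ 1 := by rw [← h0]; exact hmono zero_le_one
    have : ρ 3 = ρ 1 + ∫ s in (1 : ℝ)..3, Real.smoothTransition s :=
      (intervalIntegral.integral_add_adjacent_intervals (hc.intervalIntegrable _ _)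
        (hc.intervalIntegrable _ _)).symm
    rw [this, intervalIntegral.integral_congr (g := fun _ => (1 : ℝ))]
    · simp; linarith
    · intro s hs
      rw [Set.uIcc_of_le (by norm_num)] at hs
      exact Real.smoothTransition.one_of_one_le hs.1

/-- Smoothness of gauges. -/
theorem gauge_smooth {E : Type*} [NormedAddCommGroup E] [NormedSpace ℝ E] [CompleteSpace E]
    (V : Set E) (hV : IsOpen V) (Φ : E → ℝ) (hΦ : ConvexOn ℝ V Φ) (hΦ0 : Φ 0 = 0)
    (h0V : (0 : E) ∈ V)
    (hsm : ∀ x ∈ V, ContDiffAt ℝ ((⊤ : ℕ∞) : WithTop ℕ∞) Φ x)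
    (hcl : IsClosed {x | x ∈ V ∧ Φ x ≤ 1})
    (R : ℝ) (hR : ∀ x ∈ V, ‖x‖ ≤ R) :
    IsSubl (gauge {x | x ∈ V ∧ Φ x ≤ 1}) ∧ SmoothOff (gauge {x | x ∈ V ∧ Φ x ≤ 1}) := by
  set D : Set E := {x | x ∈ V ∧ Φ x ≤ 1} with hD
  have hconv : Convex ℝ D := hΦ.convex_le 1
  have hnh : D ∈ 𝓝 (0 : E) := by
    have h1 : ∀ᶠ x in 𝓝 (0 : E), Φ x < 1 :=
      (hsm 0 h0V).continuousAt.eventually_lt continuousAt_const (by simp [hΦ0])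
    filter_upwards [h1, hV.mem_nhds h0V] with x hx hx2
    exact ⟨hx2, hx.le⟩
  have habs : Absorbent ℝ D := absorbent_nhds_zero hnh
  have hsmul : ∀ (c : ℝ) (x : E), 0 ≤ c → gauge D (c • x) = c * gauge D x := by
    intro c x hc
    have := gauge_smul_of_nonneg (s := D) hc x
    simpa using this
  have hle1 : ∀ x, gauge D x ≤ 1 → x ∈ D := by
    intro x hx
    have := (gauge_le_one_iff_mem_closure hconv hnh).1 hx
    rwa [hcl.closure_eq] at this
  have hpos : ∀ x, x ≠ 0 → 0 < gauge D x := by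
    intro x hx
    rw [gauge_pos habs]
    · exact hx
    · refine (NormedSpace.isVonNBounded_iff ℝ).2 ?_
      exact (isBounded_iff_forall_norm_le).2 ⟨R, fun x hx => hR x hx.1⟩
  -- points on the level set have gauge one
  have hlev : ∀ z ∈ V, Φ z = 1 → gauge D z = 1 := by
    intro z hz hz1
    refine le_antisymm (gauge_le_one_of_mem ⟨hz, hz1.le⟩) ?_
    by_contra hlt
    push Not at hlt
    obtain ⟨s, hs0, hs1, hs⟩ := exists_lt_of_gauge_lt habs hlt
    obtain ⟨d, hd, rfl⟩ := hs
    have := hΦ.2 hd.1 h0V hs0.le (sub_nonneg.2 hs1.le) (by ring)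
    simp only [smul_zero, add_zero, hΦ0, smul_eq_mul, mul_zero] at this
    have hz1' : Φ (s • d) = 1 := hz1
    have := hd.2
    nlinarith
  refine ⟨⟨fun x y => gauge_add_le hconv habs x y, fun c x hc => hsmul c x hc.le⟩, ?_⟩
  intro f hf
  set l := gauge D f with hl
  have hlpos : 0 < l := hpos f hf
  set μ : ℝ := l⁻¹ with hμ
  have hμpos : 0 < μ := inv_pos.2 hlpos
  set z := μ • f with hz
  have hzg : gauge D z = 1 := by
    rw [hz, hsmul _ _ hμpos.le, ← hl, hμ, inv_mul_cancel₀ hlpos.ne']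
  have hzD : z ∈ D := hle1 z hzg.le
  have hΦz : Φ z = 1 := by
    refine le_antisymm hzD.2 ?_
    by_contra hlt
    push Not at hlt
    have : z ∈ interior D := by
      rw [mem_interior_iff_mem_nhds]
      have h1 : ∀ᶠ x in 𝓝 z, Φ x < 1 :=
        (hsm z hzD.1).continuousAt.eventually_lt continuousAt_const hlt
      filter_upwards [h1, hV.mem_nhds hzD.1] with x hx hx2
      exact ⟨hx2, hx.le⟩
    have := (gauge_lt_one_iff_mem_interior hconv hnh).2 this
    linarith
  -- derivative in the radial direction
  have hdz : DifferentiableAt ℝ Φ z := (hsm z hzD.1).differentiableAt (by simp)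
  have hrad : 0 < fderiv ℝ Φ z z := by
    have hline : HasDerivAt (fun s : ℝ => Φ (z + s • (-z))) (fderiv ℝ Φ z (-z)) 0 := by
      have h1 : HasDerivAt (fun s : ℝ => z + s • (-z)) (-z) 0 := by
        simpa using ((hasDerivAt_id (0 : ℝ)).smul_const (-z)).const_add z
      have h2 : HasFDerivAt Φ (fderiv ℝ Φ z) (z + (0 : ℝ) • (-z)) := by
        simpa using hdz.hasFDerivAt
      exact h2.comp_hasDerivAt (0 : ℝ) h1
    have hle : fderiv ℝ Φ z (-z) ≤ -1 := by
      have htend := (hasDerivWithinAt_iff_tendsto_slope'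
        (by simp : (0 : ℝ) ∉ Set.Ioi (0 : ℝ))).1 (hline.hasDerivWithinAt (s := Set.Ioi 0))
      refine le_of_tendsto htend ?_
      have : Set.Ioo (0 : ℝ) 1 ∈ 𝓝[>] (0 : ℝ) := Ioo_mem_nhdsGT one_pos
      filter_upwards [this] with s hs
      rw [slope_def_field]
      simp only [zero_smul, add_zero, sub_zero, hΦz]
      rw [div_le_iff₀ hs.1]
      have := hΦ.2 hzD.1 h0V (sub_nonneg.2 hs.2.le) hs.1.le (by ring)
      simp only [smul_zero, add_zero, hΦ0, smul_eq_mul, mul_zero, hΦz] at this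
      have e : z + s • (-z) = (1 - s) • z := by rw [smul_neg, sub_smul, one_smul, sub_eq_add_neg]
      rw [e]
      linarith
    rw [map_neg] at hle
    linarith
  -- implicit function theorem
  let G : E × ℝ → ℝ := fun w => Φ (w.2 • w.1)
  have hG : ContDiffAt ℝ ((⊤ : ℕ∞) : WithTop ℕ∞) G (f, μ) := by
    have h1 : ContDiffAt ℝ ((⊤ : ℕ∞) : WithTop ℕ∞) (fun w : E × ℝ => w.2 • w.1) (f, μ) := by
      fun_prop
    exact ContDiffAt.comp (f, μ) (g := Φ) (f := fun w : E × ℝ => w.2 • w.1) (hsm z hzD.1) h1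
  have hGd : (fderiv ℝ G (f, μ) ∘L .inr ℝ E ℝ) 1 = fderiv ℝ Φ z f := by
    have h1 : HasFDerivAt G (fderiv ℝ G (f, μ)) (f, μ) :=
      (hG.differentiableAt (by simp)).hasFDerivAt
    have h2 : HasDerivAt (fun s : ℝ => ((f, s) : E × ℝ)) (0, 1) μ :=
      (hasDerivAt_const μ f).prodMk (hasDerivAt_id μ)
    have h3 := h1.comp_hasDerivAt μ h2
    have h4 : HasDerivAt (fun s : ℝ => s • f) f μ := by
      simpa using (hasDerivAt_id μ).smul_const f
    have h5 := HasFDerivAt.comp_hasDerivAt (l := Φ) μ (hdz.hasFDerivAt) h4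
    have := h3.unique h5
    simpa using this
  have hne : fderiv ℝ Φ z f ≠ 0 := by
    rw [hz, map_smul, smul_eq_mul, ← hz] at hrad
    intro h
    rw [h] at hrad
    simp at hrad
  have hinv : (fderiv ℝ G (f, μ) ∘L .inr ℝ E ℝ).IsInvertible := by
    refine ⟨ContinuousLinearEquiv.unitsEquivAut ℝ (Units.mk0 _ hne), ?_⟩
    ext
    rw [hGd]
    simp
  set ψ := hG.implicitFunction (by simp) hinv with hψ
  have hψs : ContDiffAt ℝ ((⊤ : ℕ∞) : WithTop ℕ∞) ψ f :=
    hG.contDiffAt_implicitFunction (by simp) hinv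
  have hψ0 : ψ f = μ := hG.implicitFunction_apply_self (by simp) hinv
  have hψe : ∀ᶠ x in 𝓝 f, G (x, ψ x) = G (f, μ) :=
    hG.eventually_apply_implicitFunction (by simp) hinv
  have hGf : G (f, μ) = 1 := hΦz
  have hψpos : ∀ᶠ x in 𝓝 f, 0 < ψ x :=
    continuousAt_const.eventually_lt hψs.continuousAt (by rw [hψ0]; exact hμpos)
  have hψV : ∀ᶠ x in 𝓝 f, ψ x • x ∈ V := by
    have : ContinuousAt (fun x => ψ x • x) f := hψs.continuousAt.smul continuousAt_id
    refine this.preimage_mem_nhds (hV.mem_nhds ?_)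
    rw [hψ0]; exact hzD.1
  have hEq : gauge D =ᶠ[𝓝 f] fun x => (ψ x)⁻¹ := by
    filter_upwards [hψe, hψpos, hψV] with x h1 h2 h3
    have h4 : gauge D (ψ x • x) = 1 := hlev _ h3 (by rw [← hGf, ← h1])
    rw [hsmul _ _ h2.le] at h4
    exact eq_inv_of_mul_eq_one_right h4
  exact (hψs.inv (by rw [hψ0]; exact hμpos.ne')).congr_of_eventuallyEq hEq



/-- Supremum lemma with certificates. -/
theorem Smb.sup {E : Type*} [NormedAddCommGroup E] [NormedSpace ℝ E] [CompleteSpace E]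
    {ι : Type*} (p : ι → E → ℝ) (hp : ∀ i, Smb (p i)) (P : E → ℝ) (c C L : ℝ)
    (hc : 0 < c) (hC : 0 < C) (hL : 0 ≤ L)
    (hPc : ∀ x, c * ‖x‖ ≤ P x) (hPC : ∀ x, P x ≤ C * ‖x‖)
    (hle : ∀ i x, p i x ≤ P x) (T : ι → E →L[ℝ] ℝ) (κ : ι → ℝ)
    (hT : ∀ i x, T i x ≤ L * ‖x‖) (hκ : ∀ i, κ i ≤ 1)
    (hfin : ∀ x, ∀ r > (0 : ℝ), {i | r < T i x + κ i}.Finite)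
    (hatt : ∀ x, x ≠ 0 → ∃ i, p i x = P x ∧ 0 < T i x + κ i) : Smb P := by
  classical
  have hP0 : P 0 = 0 := by
    have h1 := hPc 0
    have h2 := hPC 0
    simp only [norm_zero, mul_zero] at h1 h2
    exact le_antisymm h2 h1
  have hPpos : ∀ x, x ≠ 0 → 0 < P x := fun x hx =>
    lt_of_lt_of_le (mul_pos hc (norm_pos_iff.2 hx)) (hPc x)
  have hPnn : ∀ x, 0 ≤ P x := fun x => le_trans (by positivity) (hPc x)
  have hPs : IsSubl P := by
    constructor
    · intro x y
      by_cases h : x + y = 0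
      · rw [h, hP0]; linarith [hPnn x, hPnn y]
      · obtain ⟨i, hi, -⟩ := hatt _ h
        rw [← hi]
        linarith [(hp i).1.1 x y, hle i x, hle i y]
    · intro a x ha
      by_cases h : x = 0
      · simp [h, hP0]
      · apply le_antisymm
        · obtain ⟨i, hi, -⟩ := hatt (a • x) (smul_ne_zero ha.ne' h)
          rw [← hi, (hp i).1.2 a x ha]
          exact mul_le_mul_of_nonneg_left (hle i x) ha.le
        · obtain ⟨i, hi, -⟩ := hatt x h
          rw [← hi, ← (hp i).1.2 a x ha]
          exact hle i _
  have hPcont : Continuous P := hPs.continuous hPC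
  refine ⟨hPs, fun ε hε => ?_⟩
  obtain ⟨ρ, hρs, hρm, hρc, hρ0, hρnn, hρ1⟩ := exists_profile
  set K : ℝ := L / c + 1 with hK
  have hKpos : 0 < K := by positivity
  have hK1 : 1 ≤ K := by rw [hK]; linarith [div_nonneg hL hc.le]
  set δ : ℝ := min (1 / 2) (ε / C) with hδ
  have hδpos : 0 < δ := lt_min (by norm_num) (by positivity)
  have hδ1 : δ ≤ 1 / 2 := min_le_left _ _
  have hδC : δ * C ≤ ε := by
    have : δ ≤ ε / C := min_le_right _ _
    rwa [le_div_iff₀ hC] at this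
  let η : ℕ → ℝ := fun k => δ / (K * (k + 1))
  have hηpos : ∀ k, 0 < η k := fun k => by positivity
  have hηK : ∀ k, η k * K = δ / (k + 1) := fun k => by
    simp only [η]; field_simp
  have hηKδ : ∀ k, η k * K ≤ δ := fun k => by
    rw [hηK]
    exact div_le_self hδpos.le (by linarith [(Nat.cast_nonneg k : (0 : ℝ) ≤ k)])
  have hη0 : ∀ k, η k ≤ η 0 := fun k => by
    simp only [η]
    gcongr
    simp
  have hex : ∀ i k, ∃ q : E → ℝ, IsSubl q ∧ SmoothOff q ∧
      ∀ x, p i x - (c * η k / (k + 1)) * ‖x‖ ≤ q x ∧ q x ≤ p i x := fun i k =>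
    (hp i).2 _ (by have := hηpos k; positivity)
  choose q hqs hqsm hqb using hex
  let X : ι → E → ℝ := fun i y => T i y + κ i
  have hXK : ∀ i y, P y ≤ 1 → X i y ≤ K := by
    intro i y hy
    have h1 : ‖y‖ ≤ 1 / c := by rw [le_div_iff₀ hc]; linarith [hPc y]
    have h2 := hT i y
    have h3 := mul_le_mul_of_nonneg_left h1 hL
    have h4 := hκ i
    simp only [X, hK]
    have : L * (1 / c) = L / c := by ring
    linarith
  have hXL : ∀ i y z, X i z ≤ X i y + L * ‖z - y‖ := by
    intro i y z
    have := hT i (z - y)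
    rw [map_sub] at this
    simp only [X]; linarith
  let A : ι × ℕ → E → ℝ := fun w y =>
    (q w.1 w.2 y + η w.2 * X w.1 y - 1) * ((w.2 + 1) / η w.2)
  let t : ι × ℕ → E → ℝ := fun w y => ρ (A w y)
  have hfac : ∀ k : ℕ, (0 : ℝ) < (k + 1) / η k := fun k => by have := hηpos k; positivity
  have htnn : ∀ w y, 0 ≤ t w y := fun w y => hρnn _
  have htz : ∀ w y, P y + η w.2 * X w.1 y ≤ 1 → t w y = 0 := by
    intro w y h
    apply hρ0
    apply mul_nonpos_of_nonpos_of_nonneg _ (hfac w.2).le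
    have := (hqb w.1 w.2 y).2
    have := hle w.1 y
    linarith
  have htδ : ∀ w y, P y ≤ 1 - δ → t w y = 0 := by
    intro w y h
    apply htz
    have := mul_le_mul_of_nonneg_left (hXK w.1 y (by linarith)) (hηpos w.2).le
    linarith [hηKδ w.2]
  set V : Set E := {y | P y < 1} with hV
  have hVo : IsOpen V := isOpen_lt hPcont continuous_const
  have hVc : Convex ℝ V := by
    have := hPs.convexOn.convex_lt 1
    simpa [hV] using this
  have h0V : (0 : E) ∈ V := by simp [hV, hP0]
  let Φ : E → ℝ := fun y => ∑' w, t w y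
  -- local finiteness
  have hloc : ∀ y ∈ V, ∃ J : Finset (ι × ℕ), ∀ᶠ z in 𝓝 y, ∀ w ∉ J, t w z = 0 := by
    intro y hy
    have hy' : P y < 1 := hy
    set g := 1 - P y with hg
    have hgpos : 0 < g := by linarith
    have hrpos : 0 < g / (4 * η 0) := by have := hηpos 0; positivity
    obtain ⟨k0, hk0⟩ : ∃ k0 : ℕ, δ / (g / 2) < k0 := exists_nat_gt _
    have hk0' : ∀ k : ℕ, k0 ≤ k → η k * K ≤ g / 2 := by
      intro k hk
      rw [hηK, div_le_iff₀ (by positivity)]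
      rw [div_lt_iff₀ (by positivity)] at hk0
      have : (k0 : ℝ) ≤ k := by exact_mod_cast hk
      nlinarith
    refine ⟨(hfin y _ hrpos).toFinset ×ˢ Finset.range k0, ?_⟩
    have e1 : ∀ᶠ z in 𝓝 y, P z < 1 - g / 2 :=
      hPcont.continuousAt.eventually_lt continuousAt_const (by linarith)
    have e2 : ∀ᶠ z in 𝓝 y, L * ‖z - y‖ < g / (4 * η 0) := by
      have hcc : Continuous fun z : E => L * ‖z - y‖ := by fun_prop
      exact hcc.continuousAt.eventually_lt continuousAt_const (by simpa using hrpos)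
    filter_upwards [e1, e2] with z h1 h2 w hw
    apply htz
    suffices η w.2 * X w.1 z ≤ g / 2 by linarith
    by_cases hk : k0 ≤ w.2
    · exact le_trans (mul_le_mul_of_nonneg_left (hXK w.1 z (by linarith)) (hηpos w.2).le)
        (hk0' _ hk)
    · have hx : X w.1 y ≤ g / (4 * η 0) := by
        by_contra hcon
        push Not at hcon
        apply hw
        rw [Finset.mem_product]
        exact ⟨(Set.Finite.mem_toFinset _).2 hcon, Finset.mem_range.2 (not_le.1 hk)⟩
      have hx2 : X w.1 z ≤ g / (2 * η 0) := by
        have := hXL w.1 y z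
        have e : g / (4 * η 0) + g / (4 * η 0) = g / (2 * η 0) := by
          have := hηpos 0; field_simp; norm_num
        linarith
      have hη0p := hηpos 0
      calc η w.2 * X w.1 z ≤ η w.2 * (g / (2 * η 0)) :=
            mul_le_mul_of_nonneg_left hx2 (hηpos _).le
        _ ≤ η 0 * (g / (2 * η 0)) := mul_le_mul_of_nonneg_right (hη0 _) (by positivity)
        _ = g / 2 := by field_simp
  have hloc' : ∀ y ∈ V, ∃ J : Finset (ι × ℕ), ∀ w ∉ J, t w y = 0 := fun y hy => by
    obtain ⟨J, hJ⟩ := hloc y hy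
    exact ⟨J, hJ.self_of_nhds⟩
  have htc : ∀ w, ConvexOn ℝ Set.univ (t w) := by
    intro w
    have h1 : ConvexOn ℝ Set.univ (A w) := by
      refine ⟨convex_univ, fun x _ y _ a b ha hb hab => ?_⟩
      have h2 := (hqs w.1 w.2).convexOn.2 (Set.mem_univ x) (Set.mem_univ y) ha hb hab
      simp only [smul_eq_mul] at h2
      have hb' : b = 1 - a := by linarith
      subst hb'
      have h3 := mul_le_mul_of_nonneg_right h2 (hfac w.2).le
      simp only [A, X, map_add, map_smul, smul_eq_mul]
      linear_combination h3
    refine ⟨convex_univ, fun x hx y hy a b ha hb hab => ?_⟩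
    exact le_trans (hρm (h1.2 hx hy ha hb hab))
      (hρc.2 (Set.mem_univ _) (Set.mem_univ _) ha hb hab)
  have hts : ∀ w y, ContDiffAt ℝ ((⊤ : ℕ∞) : WithTop ℕ∞) (t w) y := by
    intro w y
    by_cases hy : y = 0
    · subst hy
      have : t w =ᶠ[𝓝 0] fun _ => (0 : ℝ) := by
        have : ∀ᶠ z in 𝓝 (0 : E), P z < 1 - δ :=
          hPcont.continuousAt.eventually_lt continuousAt_const (by rw [hP0]; linarith)
        filter_upwards [this] with z hz
        exact htδ w z hz.le
      exact contDiffAt_const.congr_of_eventuallyEq this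
    · have h1 : ContDiffAt ℝ ((⊤ : ℕ∞) : WithTop ℕ∞) (A w) y := by
        have h2 := hqsm w.1 w.2 y hy
        have h3 : ContDiffAt ℝ ((⊤ : ℕ∞) : WithTop ℕ∞) (X w.1) y :=
          (T w.1).contDiff.contDiffAt.add contDiffAt_const
        exact ((h2.add (contDiffAt_const.mul h3)).sub contDiffAt_const).mul contDiffAt_const
      exact ContDiffAt.comp y (hρs.contDiffAt) h1
  have hΦs : ∀ y ∈ V, ContDiffAt ℝ ((⊤ : ℕ∞) : WithTop ℕ∞) Φ y := by
    intro y hy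
    obtain ⟨J, hJ⟩ := hloc y hy
    have : Φ =ᶠ[𝓝 y] fun z => ∑ w ∈ J, t w z := by
      filter_upwards [hJ] with z hz
      exact tsum_eq_sum hz
    exact (ContDiffAt.sum fun w _ => hts w y).congr_of_eventuallyEq this
  have hΦc : ConvexOn ℝ V Φ := by
    refine ⟨hVc, fun x hx y hy a b ha hb hab => ?_⟩
    obtain ⟨J1, h1⟩ := hloc' x hx
    obtain ⟨J2, h2⟩ := hloc' y hy
    obtain ⟨J3, h3⟩ := hloc' _ (hVc hx hy ha hb hab)
    have e1 : Φ x = ∑ w ∈ J1 ∪ J2 ∪ J3, t w x :=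
      tsum_eq_sum fun w hw => h1 w (by simp at hw; tauto)
    have e2 : Φ y = ∑ w ∈ J1 ∪ J2 ∪ J3, t w y :=
      tsum_eq_sum fun w hw => h2 w (by simp at hw; tauto)
    have e3 : Φ (a • x + b • y) = ∑ w ∈ J1 ∪ J2 ∪ J3, t w (a • x + b • y) :=
      tsum_eq_sum fun w hw => h3 w (by simp at hw; tauto)
    rw [e1, e2, e3, smul_eq_mul, smul_eq_mul, Finset.mul_sum, Finset.mul_sum,
      ← Finset.sum_add_distrib]
    exact Finset.sum_le_sum fun w _ => (htc w).2 (Set.mem_univ _) (Set.mem_univ _) ha hb hab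
  have hΦδ : ∀ y, P y ≤ 1 - δ → Φ y = 0 := by
    intro y hy
    show ∑' w, t w y = 0
    simp only [fun w => htδ w y hy, tsum_zero]
  have hΦ0 : Φ 0 = 0 := hΦδ 0 (by rw [hP0]; linarith)
  have htΦ : ∀ y ∈ V, ∀ w, t w y ≤ Φ y := by
    intro y hy w
    obtain ⟨J, hJ⟩ := hloc' y hy
    have hs : Summable fun w => t w y := summable_of_ne_finset_zero (s := J) hJ
    exact hs.le_tsum w fun j _ => htnn j y
  have hcl : IsClosed {x | x ∈ V ∧ Φ x ≤ 1} := by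
    refine isClosed_of_closure_subset fun y hy => ?_
    have hfr := mem_closure_iff_frequently.1 hy
    have hy1 : P y ≤ 1 := by
      by_contra hcon
      push Not at hcon
      have : ∀ᶠ z in 𝓝 y, 1 < P z := continuousAt_const.eventually_lt hPcont.continuousAt hcon
      obtain ⟨z, hz, hz2⟩ := (hfr.and_eventually this).exists
      have : P z < 1 := hz.1
      linarith
    rcases hy1.lt_or_eq with hy2 | hy2
    · refine ⟨hy2, ?_⟩
      by_contra hcon
      push Not at hcon
      have : ∀ᶠ z in 𝓝 y, 1 < Φ z :=
        continuousAt_const.eventually_lt (hΦs y hy2).continuousAt hcon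
      obtain ⟨z, hz, hz2⟩ := (hfr.and_eventually this).exists
      have := hz.2
      linarith
    · exfalso
      have hyne : y ≠ 0 := by
        rintro rfl
        rw [hP0] at hy2
        norm_num at hy2
      obtain ⟨i, hi, hτ⟩ := hatt y hyne
      set τ := T i y + κ i with hτdef
      obtain ⟨k, hk⟩ : ∃ k : ℕ, 4 / τ < k := exists_nat_gt _
      have ht1 : 1 < t (i, k) y := by
        apply hρ1
        have hb := (hqb i k y).1
        have hyn : ‖y‖ ≤ 1 / c := by rw [le_div_iff₀ hc]; linarith [hPc y]
        have hηk := hηpos k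
        have hb2 : c * η k / (k + 1) * ‖y‖ ≤ η k / (k + 1) := by
          calc c * η k / (k + 1) * ‖y‖ ≤ c * η k / (k + 1) * (1 / c) :=
                mul_le_mul_of_nonneg_left hyn (by positivity)
            _ = η k / (k + 1) := by field_simp
        have hlow : η k * τ - η k / (k + 1) ≤ q i k y + η k * X i y - 1 := by
          have : X i y = τ := rfl
          rw [this]
          rw [hi, hy2] at hb
          linarith
        have h2 := mul_le_mul_of_nonneg_right hlow (hfac k).le
        have h3 : (η k * τ - η k / (k + 1)) * ((k + 1) / η k) = (k + 1) * τ - 1 := by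
          field_simp
        rw [h3] at h2
        rw [div_lt_iff₀ hτ] at hk
        have h4 : A (i, k) y = (q i k y + η k * X i y - 1) * ((k + 1) / η k) := rfl
        rw [h4]
        nlinarith
      have : ∀ᶠ z in 𝓝 y, 1 < t (i, k) z :=
        continuousAt_const.eventually_lt (hts (i, k) y).continuousAt ht1
      obtain ⟨z, hz, hz2⟩ := (hfr.and_eventually this).exists
      have h1 := hz.2
      have h2 := htΦ z hz.1 (i, k)
      linarith
  have hR : ∀ x ∈ V, ‖x‖ ≤ 1 / c := by
    intro x hx
    have : P x < 1 := hx
    rw [le_div_iff₀ hc]; linarith [hPc x]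
  obtain ⟨hgs, hgsm⟩ := gauge_smooth V hVo Φ hΦc hΦ0 h0V hΦs hcl (1 / c) hR
  set D : Set E := {x | x ∈ V ∧ Φ x ≤ 1} with hD
  have hnh : D ∈ 𝓝 (0 : E) := by
    have h1 : ∀ᶠ x in 𝓝 (0 : E), Φ x < 1 :=
      (hΦs 0 h0V).continuousAt.eventually_lt continuousAt_const (by simp [hΦ0])
    filter_upwards [h1, hVo.mem_nhds h0V] with x hx hx2
    exact ⟨hx2, hx.le⟩
  have habs : Absorbent ℝ D := absorbent_nhds_zero hnh
  have hlow : ∀ x, P x ≤ gauge D x := by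
    intro x
    refine le_of_forall_gt fun r hr => ?_
    obtain ⟨s, hs0, hs1, hs⟩ := exists_lt_of_gauge_lt habs hr
    obtain ⟨d, hd, rfl⟩ := hs
    have : P d < 1 := hd.1
    show P (s • d) < r
    rw [hPs.2 s d hs0]
    nlinarith
  have hup : ∀ x, (1 - δ) * gauge D x ≤ P x := by
    intro x
    by_cases hx : x = 0
    · simp [hx, hP0]
    · have hPx := hPpos x hx
      have ha : 0 < (1 - δ) / P x := div_pos (by linarith) hPx
      have h1 : P (((1 - δ) / P x) • x) = 1 - δ := by
        rw [hPs.2 _ _ ha]; field_simp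
      have h2 : ((1 - δ) / P x) • x ∈ D := by
        refine ⟨?_, ?_⟩
        · show P _ < 1
          rw [h1]; linarith
        · rw [hΦδ _ h1.le]; exact zero_le_one
      have h3 := gauge_le_one_of_mem h2
      rw [hgs.2 _ _ ha, div_mul_eq_mul_div, div_le_one hPx] at h3
      exact h3
  refine ⟨fun x => (1 - δ) * gauge D x, ⟨fun x y => ?_, fun a x ha => ?_⟩, fun x hx => ?_,
    fun x => ⟨?_, hup x⟩⟩
  · have := hgs.1 x y
    have h : 0 ≤ 1 - δ := by linarith
    nlinarith
  · simp only [hgs.2 a x ha]; ring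
  · exact contDiffAt_const.mul (hgsm x hx)
  · have h1 := hlow x
    have h2 := hPC x
    have h3 := norm_nonneg x
    have h4 : δ * P x ≤ δ * (C * ‖x‖) := mul_le_mul_of_nonneg_left h2 hδpos.le
    have h5 : δ * C * ‖x‖ ≤ ε * ‖x‖ := mul_le_mul_of_nonneg_right hδC h3
    have h6 : (1 - δ) * P x ≤ (1 - δ) * gauge D x := mul_le_mul_of_nonneg_left h1 (by linarith)
    linarith

/-- Continuous linear functionals. -/
theorem Smb.clm {E : Type*} [NormedAddCommGroup E] [NormedSpace ℝ E] (T : E →L[ℝ] ℝ) :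
    Smb (fun x => T x) := by
  have h : IsSubl (fun x => T x) := ⟨fun x y => (map_add T x y).le, fun c x _ => by simp⟩
  refine ⟨h, fun ε hε => ⟨fun x => T x, h, fun x _ => T.contDiff.contDiffAt, fun x => ⟨?_, le_rfl⟩⟩⟩
  have : 0 ≤ ε * ‖x‖ := by positivity
  linarith

theorem Smb.add {E : Type*} [NormedAddCommGroup E] [NormedSpace ℝ E] {p p' : E → ℝ}
    (hp : Smb p) (hp' : Smb p') : Smb (fun x => p x + p' x) := by
  have hadd : ∀ {p p' : E → ℝ}, IsSubl p → IsSubl p' → IsSubl (fun x => p x + p' x) := by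
    intro p p' hp hp'
    refine ⟨fun x y => ?_, fun c x hc => ?_⟩
    · linarith [hp.1 x y, hp'.1 x y]
    · simp only [hp.2 c x hc, hp'.2 c x hc]; ring
  refine ⟨hadd hp.1 hp'.1, fun ε hε => ?_⟩
  obtain ⟨q, h1, h2, h3⟩ := hp.2 (ε / 2) (by positivity)
  obtain ⟨q', h1', h2', h3'⟩ := hp'.2 (ε / 2) (by positivity)
  refine ⟨fun x => q x + q' x, hadd h1 h1', fun x hx => (h2 x hx).add (h2' x hx), fun x => ⟨?_, ?_⟩⟩
  · linarith [(h3 x).1, (h3' x).1]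
  · linarith [(h3 x).2, (h3' x).2]

theorem Smb.const_mul {E : Type*} [NormedAddCommGroup E] [NormedSpace ℝ E] {p : E → ℝ}
    (hp : Smb p) {a : ℝ} (ha : 0 < a) : Smb (fun x => a * p x) := by
  have hmul : ∀ {p : E → ℝ}, IsSubl p → IsSubl (fun x => a * p x) := by
    intro p hp
    refine ⟨fun x y => ?_, fun c x hc => ?_⟩
    · rw [← mul_add]; exact mul_le_mul_of_nonneg_left (hp.1 x y) ha.le
    · simp only [hp.2 c x hc]; ring
  refine ⟨hmul hp.1, fun ε hε => ?_⟩
  obtain ⟨q, h1, h2, h3⟩ := hp.2 (ε / a) (by positivity)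
  refine ⟨fun x => a * q x, hmul h1, fun x hx => contDiffAt_const.mul (h2 x hx), fun x => ⟨?_, ?_⟩⟩
  · have := mul_le_mul_of_nonneg_left (h3 x).1 ha.le
    have e : a * (p x - ε / a * ‖x‖) = a * p x - ε * ‖x‖ := by field_simp
    linarith
  · exact mul_le_mul_of_nonneg_left (h3 x).2 ha.le

theorem sqrt_add_sq_le (a b c d : ℝ) (hs : 0 ≤ a + c) :
    ∀ s : ℝ, 0 ≤ s → s ≤ a + c → √(s ^ 2 + (b + d) ^ 2) ≤ √(a ^ 2 + b ^ 2) + √(c ^ 2 + d ^ 2) := by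
  intro s hs0 hsl
  have hA := Real.sqrt_nonneg (a ^ 2 + b ^ 2)
  have hB := Real.sqrt_nonneg (c ^ 2 + d ^ 2)
  apply Real.sqrt_le_iff.2
  refine ⟨by positivity, ?_⟩
  have h1 := Real.sq_sqrt (by positivity : 0 ≤ a ^ 2 + b ^ 2)
  have h2 := Real.sq_sqrt (by positivity : 0 ≤ c ^ 2 + d ^ 2)
  have h3 : a * c + b * d ≤ √(a ^ 2 + b ^ 2) * √(c ^ 2 + d ^ 2) := by
    rw [← Real.sqrt_mul (by positivity)]
    apply Real.le_sqrt_of_sq_le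
    nlinarith [sq_nonneg (a * d - b * c)]
  nlinarith

theorem IsSubl.sqrt {E : Type*} [NormedAddCommGroup E] [NormedSpace ℝ E] {p : E → ℝ}
    (hp : IsSubl p) (hnn : ∀ x, 0 ≤ p x) (T : E →L[ℝ] ℝ) :
    IsSubl (fun x => √(p x ^ 2 + T x ^ 2)) := by
  refine ⟨fun x y => ?_, fun c x hc => ?_⟩
  · simp only [map_add]
    exact sqrt_add_sq_le _ _ _ _ (add_nonneg (hnn x) (hnn y)) _ (hnn _) (hp.1 x y)
  · simp only [hp.2 c x hc, map_smul, smul_eq_mul]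
    rw [show (c * p x) ^ 2 + (c * T x) ^ 2 = c ^ 2 * (p x ^ 2 + T x ^ 2) by ring,
      Real.sqrt_mul (by positivity), Real.sqrt_sq hc.le]

theorem Smb.sqrt {E : Type*} [NormedAddCommGroup E] [NormedSpace ℝ E] {p : E → ℝ}
    (hp : Smb p) {c : ℝ} (hc : 0 < c) (hpc : ∀ x, c * ‖x‖ ≤ p x) (T : E →L[ℝ] ℝ) :
    Smb (fun x => √(p x ^ 2 + T x ^ 2)) := by
  refine ⟨hp.1.sqrt (fun x => le_trans (by positivity) (hpc x)) T, fun ε hε => ?_⟩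
  obtain ⟨q, h1, h2, h3⟩ := hp.2 (min ε (c / 2)) (by positivity)
  have hq : ∀ x, c / 2 * ‖x‖ ≤ q x := by
    intro x
    have := mul_le_mul_of_nonneg_right (min_le_right ε (c / 2)) (norm_nonneg x)
    linarith [(h3 x).1, hpc x]
  have hq0 : ∀ x, 0 ≤ q x := fun x => le_trans (by positivity) (hq x)
  refine ⟨fun x => √(q x ^ 2 + T x ^ 2), h1.sqrt hq0 T, fun x hx => ?_, fun x => ⟨?_, ?_⟩⟩
  · have hqx : 0 < q x := lt_of_lt_of_le (mul_pos (by positivity) (norm_pos_iff.2 hx)) (hq x)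
    refine ContDiffAt.sqrt (((h2 x hx).pow 2).add ((T.contDiff.contDiffAt).pow 2)) ?_
    positivity
  · have hpq : 0 ≤ p x - q x := by linarith [(h3 x).2]
    have := sqrt_add_sq_le (q x) (T x) (p x - q x) 0 (by linarith [hq0 x]) (p x)
      (by linarith [hq0 x]) (by linarith)
    simp only [add_zero] at this
    rw [show (p x - q x) ^ 2 + 0 ^ 2 = (p x - q x) ^ 2 by ring, Real.sqrt_sq hpq] at this
    have h5 := mul_le_mul_of_nonneg_right (min_le_left ε (c / 2)) (norm_nonneg x)
    linarith [(h3 x).1]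
  · apply Real.sqrt_le_sqrt
    have := (h3 x).2
    have := hq0 x
    gcongr

theorem Smb.sqrt_sum {E : Type*} [NormedAddCommGroup E] [NormedSpace ℝ E] {p : E → ℝ}
    (hp : Smb p) {c : ℝ} (hc : 0 < c) (hpc : ∀ x, c * ‖x‖ ≤ p x) {κ : Type*} (S : Finset κ)
    (T : κ → E →L[ℝ] ℝ) : Smb (fun x => √(p x ^ 2 + ∑ a ∈ S, T a x ^ 2)) := by
  classical
  have hnn : ∀ x, 0 ≤ p x := fun x => le_trans (by positivity) (hpc x)
  induction S using Finset.induction_on with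
  | empty =>
    simp only [Finset.sum_empty, add_zero]
    have : (fun x => √(p x ^ 2)) = p := funext fun x => Real.sqrt_sq (hnn x)
    rw [this]; exact hp
  | insert a S ha ih =>
    have h := ih.sqrt hc (fun x => (hpc x).trans (Real.le_sqrt_of_sq_le
      (le_add_of_nonneg_right (Finset.sum_nonneg fun _ _ => sq_nonneg _)))) (T a)
    have e : (fun x => √(p x ^ 2 + ∑ b ∈ insert a S, T b x ^ 2)) =
        fun x => √(√(p x ^ 2 + ∑ a ∈ S, T a x ^ 2) ^ 2 + T a x ^ 2) := by
      funext x
      rw [Real.sq_sqrt (add_nonneg (sq_nonneg _) (Finset.sum_nonneg fun _ _ => sq_nonneg _)),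
        Finset.sum_insert ha]
      congr 1; ring
    rw [e]; exact h



/-- The hypotheses on the building blocks of the final norm. -/
structure Blocks {E : Type*} [NormedAddCommGroup E] [NormedSpace ℝ E] (S : ℕ → E → ℝ) : Prop where
  subl : ∀ n, IsSubl (S n)
  even : ∀ n x, S n (-x) = S n x
  smooth : ∀ n, SmoothOff (S n)
  upper : ∀ n x, S n x ≤ (1 / 2) ^ n * ‖x‖
  lower : ∀ n, ∃ c > (0 : ℝ), ∀ x, c * ‖x‖ ≤ S n x

namespace Blocks

variable {E : Type*} [NormedAddCommGroup E] [NormedSpace ℝ E] {S : ℕ → E → ℝ}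

theorem nonneg (h : Blocks S) (n : ℕ) (x : E) : 0 ≤ S n x := by
  obtain ⟨c, hc, hx⟩ := h.lower n
  exact le_trans (by positivity) (hx x)

theorem homog (h : Blocks S) (n : ℕ) (c : ℝ) (x : E) : S n (c • x) = |c| * S n x := by
  rcases lt_trichotomy c 0 with hc | rfl | hc
  · rw [abs_of_neg hc, ← h.even, ← neg_smul, (h.subl n).2 _ _ (neg_pos.2 hc)]
  · simp [(h.subl n).zero]
  · rw [abs_of_pos hc, (h.subl n).2 _ _ hc]

theorem sq_le (h : Blocks S) (n : ℕ) (x : E) : S n x ^ 2 ≤ (1 / 4) ^ n * ‖x‖ ^ 2 := by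
  have h1 := pow_le_pow_left₀ (h.nonneg n x) (h.upper n x) 2
  have e : ((1 / 2 : ℝ) ^ n * ‖x‖) ^ 2 = (1 / 4) ^ n * ‖x‖ ^ 2 := by
    rw [mul_pow, ← pow_mul, mul_comm n 2, pow_mul]; norm_num
  rwa [e] at h1

theorem summable_bd (x : E) : Summable fun n : ℕ => (1 / 4 : ℝ) ^ n * ‖x‖ ^ 2 :=
  (summable_geometric_of_lt_one (by norm_num) (by norm_num)).mul_right _

theorem summable (h : Blocks S) (x : E) : Summable fun n => S n x ^ 2 :=
  Summable.of_nonneg_of_le (fun _ => sq_nonneg _) (fun n => h.sq_le n x) (summable_bd x)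

/-- partial norms -/
noncomputable def W (S : ℕ → E → ℝ) (i : ℕ) (x : E) : ℝ := √(∑ n ∈ Finset.range i, S n x ^ 2)

/-- the final norm -/
noncomputable def Wl (S : ℕ → E → ℝ) (x : E) : ℝ := √(∑' n, S n x ^ 2)

theorem W_add (h : Blocks S) (i : ℕ) (x y : E) : W S i (x + y) ≤ W S i x + W S i y := by
  induction i with
  | zero => simp [W]
  | succ i ih =>
    have e : ∀ z, W S (i + 1) z = √(W S i z ^ 2 + S i z ^ 2) := by
      intro z
      unfold W
      rw [Real.sq_sqrt (Finset.sum_nonneg fun _ _ => sq_nonneg _), Finset.sum_range_succ]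
    have hnn : ∀ z, 0 ≤ W S i z := fun z => Real.sqrt_nonneg _
    rw [e, e, e]
    refine le_trans (Real.sqrt_le_sqrt ?_) (sqrt_add_sq_le (W S i x) (S i x) (W S i y) (S i y)
      (add_nonneg (hnn x) (hnn y)) (W S i (x + y)) (hnn _) ih)
    have := pow_le_pow_left₀ (h.nonneg i (x + y)) ((h.subl i).1 x y) 2
    linarith

theorem W_le (h : Blocks S) (i : ℕ) (x : E) : W S i x ≤ Wl S x :=
  Real.sqrt_le_sqrt ((h.summable x).sum_le_tsum _ fun _ _ => sq_nonneg _)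

theorem Wl_le (h : Blocks S) (i : ℕ) (x : E) : Wl S x ≤ W S i x + 2 * (1 / 2) ^ i * ‖x‖ := by
  have h1 : ∑' n, S n x ^ 2 = ∑ n ∈ Finset.range i, S n x ^ 2 + ∑' n, S (n + i) x ^ 2 :=
    ((h.summable x).sum_add_tsum_nat_add i).symm
  have h2 : ∑' n, S (n + i) x ^ 2 ≤ ∑' n : ℕ, (1 / 4 : ℝ) ^ n * ((1 / 4) ^ i * ‖x‖ ^ 2) := by
    refine Summable.tsum_le_tsum (fun n => ?_) ((summable_nat_add_iff i).2 (h.summable x)) ?_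
    · refine (h.sq_le (n + i) x).trans (le_of_eq ?_)
      rw [pow_add]; ring
    · exact (summable_geometric_of_lt_one (by norm_num) (by norm_num)).mul_right _
  have h3 : ∑' n : ℕ, (1 / 4 : ℝ) ^ n * ((1 / 4) ^ i * ‖x‖ ^ 2) ≤ (2 * (1 / 2) ^ i * ‖x‖) ^ 2 := by
    rw [tsum_mul_right, tsum_geometric_of_lt_one (by norm_num) (by norm_num)]
    have e : (2 * (1 / 2 : ℝ) ^ i * ‖x‖) ^ 2 = 4 * ((1 / 4) ^ i * ‖x‖ ^ 2) := by
      rw [mul_pow, mul_pow, ← pow_mul, mul_comm i 2, pow_mul]; norm_num; ring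
    rw [e]
    have : 0 ≤ (1 / 4 : ℝ) ^ i * ‖x‖ ^ 2 := by positivity
    norm_num at this ⊢
    nlinarith
  have hb : 0 ≤ 2 * (1 / 2 : ℝ) ^ i * ‖x‖ := by positivity
  have hW : 0 ≤ W S i x := Real.sqrt_nonneg _
  apply Real.sqrt_le_iff.2
  refine ⟨by positivity, ?_⟩
  rw [h1]
  have h4 : W S i x ^ 2 = ∑ n ∈ Finset.range i, S n x ^ 2 :=
    Real.sq_sqrt (Finset.sum_nonneg fun _ _ => sq_nonneg _)
  rw [← h4]
  nlinarith

theorem Wl_add (h : Blocks S) (x y : E) : Wl S (x + y) ≤ Wl S x + Wl S y := by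
  have h1 : ∀ i, Wl S (x + y) ≤ Wl S x + Wl S y + (1 / 2) ^ i * (2 * ‖x + y‖) := by
    intro i
    have := h.Wl_le i (x + y)
    have := h.W_add i x y
    linarith [h.W_le i x, h.W_le i y]
  have h2 : Tendsto (fun i : ℕ => Wl S x + Wl S y + (1 / 2 : ℝ) ^ i * (2 * ‖x + y‖)) atTop
      (𝓝 (Wl S x + Wl S y + 0 * (2 * ‖x + y‖))) :=
    ((tendsto_pow_atTop_nhds_zero_of_lt_one (by norm_num) (by norm_num)).mul_const _).const_add _
  simpa using ge_of_tendsto' h2 h1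

theorem W_smul (h : Blocks S) (i : ℕ) (c : ℝ) (x : E) : W S i (c • x) = |c| * W S i x := by
  unfold W
  simp only [h.homog, mul_pow]
  rw [← Finset.mul_sum, Real.sqrt_mul (by positivity), Real.sqrt_sq (abs_nonneg c)]

theorem Wl_smul (h : Blocks S) (c : ℝ) (x : E) : Wl S (c • x) = |c| * Wl S x := by
  unfold Wl
  simp only [h.homog, mul_pow]
  rw [tsum_mul_left, Real.sqrt_mul (by positivity), Real.sqrt_sq (abs_nonneg c)]

theorem lower_W (h : Blocks S) : ∃ c > (0 : ℝ), ∀ i x, c * ‖x‖ ≤ W S (i + 1) x := by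
  obtain ⟨c, hc, hx⟩ := h.lower 0
  refine ⟨c, hc, fun i x => (hx x).trans ?_⟩
  apply Real.le_sqrt_of_sq_le
  exact Finset.single_le_sum (f := fun n => S n x ^ 2) (fun _ _ => sq_nonneg _) (by simp)

theorem upper_Wl (h : Blocks S) (x : E) : Wl S x ≤ 2 * ‖x‖ := by
  have := h.Wl_le 0 x
  simpa [W] using this

theorem equiv_of {N : E → ℝ} {c : ℝ} (hc : 0 < c) (hl : ∀ x, c * ‖x‖ ≤ N x)
    (hu : ∀ x, N x ≤ 2 * ‖x‖) (hs : ∀ (c : ℝ) x, N (c • x) = |c| * N x)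
    (ha : ∀ x y, N (x + y) ≤ N x + N y) : IsEquivNorm N := by
  refine ⟨⟨fun x => le_trans (by positivity) (hl x), fun x => ⟨fun h => ?_, ?_⟩, hs, ha⟩,
    c, 2, hc, by norm_num, fun x => ⟨hl x, hu x⟩⟩
  · have := hl x
    rw [h] at this
    by_contra hne
    have := mul_pos hc (norm_pos_iff.2 hne)
    linarith
  · rintro rfl
    have := hs 0 0
    simpa using this

theorem W_equiv (h : Blocks S) (i : ℕ) : IsEquivNorm (W S (i + 1)) := by
  obtain ⟨c, hc, hx⟩ := h.lower_W
  exact equiv_of hc (hx i) (fun x => (h.W_le _ x).trans (h.upper_Wl x)) (h.W_smul _) (h.W_add _)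

theorem Wl_equiv (h : Blocks S) : IsEquivNorm (Wl S) := by
  obtain ⟨c, hc, hx⟩ := h.lower_W
  exact equiv_of hc (fun x => (hx 0 x).trans (h.W_le _ x)) h.upper_Wl h.Wl_smul h.Wl_add

theorem W_smooth (h : Blocks S) (i : ℕ) :
    IsCkSmoothNorm ((⊤ : ℕ∞) : WithTop ℕ∞) (W S (i + 1)) := by
  intro x hx
  refine ContDiffAt.contDiffWithinAt ?_
  refine ContDiffAt.sqrt (ContDiffAt.sum fun n _ => (h.smooth n x hx).pow 2) ?_
  obtain ⟨c, hc, hl⟩ := h.lower_W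
  intro h0
  have h1 := hl i x
  unfold W at h1
  rw [h0, Real.sqrt_zero] at h1
  have := mul_pos hc (norm_pos_iff.2 hx)
  linarith

theorem Wl_smooth (h : Blocks S) : IsCkSmoothNorm 1 (Wl S) := by
  intro x0 hx0
  have hx0' : x0 ≠ 0 := hx0
  refine ContDiffAt.contDiffWithinAt ?_
  refine ContDiffAt.sqrt ?_ ?_
  · set M := 2 * ‖x0‖ with hM
    have hx0n : 0 < ‖x0‖ := norm_pos_iff.2 hx0'
    set U := Metric.ball x0 ‖x0‖ with hU
    have hU0 : ∀ x ∈ U, x ≠ 0 := by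
      rintro x hx rfl
      simp [hU] at hx
    have hUM : ∀ x ∈ U, ‖x‖ ≤ M := by
      intro x hx
      rw [hU, mem_ball_iff_norm] at hx
      have := norm_le_norm_add_norm_sub' x x0
      linarith
    let f' : ℕ → E → (E →L[ℝ] ℝ) := fun n x => (2 * S n x) • fderiv ℝ (S n) x
    have hd : ∀ n, ∀ x ∈ U, HasFDerivAt (fun y => S n y ^ 2) (f' n x) x := by
      intro n x hx
      have h1 : HasFDerivAt (S n) (fderiv ℝ (S n) x) x :=
        ((h.smooth n x (hU0 x hx)).differentiableAt (by simp)).hasFDerivAt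
      have := h1.pow 2
      refine this.congr_fderiv ?_
      simp [f']
    have hfd : ∀ n x, ‖fderiv ℝ (S n) x‖ ≤ (1 / 2) ^ n := by
      intro n x
      have hco : ((Real.toNNReal ((1 / 2 : ℝ) ^ n) : NNReal) : ℝ) = (1 / 2 : ℝ) ^ n :=
        Real.coe_toNNReal _ (by positivity)
      have hlip : LipschitzWith (Real.toNNReal ((1 / 2 : ℝ) ^ n)) (S n) := by
        refine LipschitzWith.of_le_add_mul _ fun x y => ?_
        have := (h.subl n).sub_le (h.upper n) x y
        rw [dist_eq_norm, hco]
        linarith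
      have h1 := norm_fderiv_le_of_lipschitz ℝ (x₀ := x) hlip
      rwa [hco] at h1
    have hb : ∀ n, ∀ x ∈ U, ‖f' n x‖ ≤ (1 / 2 : ℝ) ^ n * (2 * M) := by
      intro n x hx
      have hMnn : 0 ≤ M := by positivity
      have h1 : S n x ≤ M := by
        have h2 := h.upper n x
        have h3 : (1 / 2 : ℝ) ^ n ≤ 1 := pow_le_one₀ (by norm_num) (by norm_num)
        have := mul_le_mul h3 (hUM x hx) (norm_nonneg x) zero_le_one
        linarith
      have h0 := h.nonneg n x
      simp only [f']
      rw [norm_smul, Real.norm_of_nonneg (by positivity), mul_comm]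
      exact mul_le_mul (hfd n x) (by linarith) (by positivity) (by positivity)
    have hu : Summable fun n : ℕ => (1 / 2 : ℝ) ^ n * (2 * M) :=
      (summable_geometric_of_lt_one (by norm_num) (by norm_num)).mul_right _
    rw [contDiffAt_one_iff]
    refine ⟨fun x => ∑' n, f' n x, U, Metric.ball_mem_nhds x0 hx0n, ?_, fun x hx => ?_⟩
    · refine continuousOn_tsum (fun n => ?_) hu hb
      intro x hx
      refine ContinuousAt.continuousWithinAt ?_
      have hs := h.smooth n x (hU0 x hx)
      have h1 : ContinuousAt (fderiv ℝ (S n)) x :=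
        (hs.fderiv_right (m := 0) (by simp)).continuousAt
      exact (continuousAt_const.mul hs.continuousAt).smul h1
    · exact hasFDerivAt_tsum_of_isPreconnected hu Metric.isOpen_ball
        (convex_ball _ _).isPreconnected hd hb (Metric.mem_ball_self hx0n) (h.summable x0) hx
  · obtain ⟨c, hc, hl⟩ := h.lower_W
    intro h0
    have h1 := (hl 0 x0).trans (h.W_le _ x0)
    unfold Wl at h1
    rw [h0, Real.sqrt_zero] at h1
    have := mul_pos hc (norm_pos_iff.2 hx0')
    linarith

theorem Wl_limit (h : Blocks S) :
    IsUniformLimitOfCkSmoothNorms ((⊤ : ℕ∞) : WithTop ℕ∞) (Wl S) := by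
  refine ⟨fun i => W S (i + 1), fun i => ⟨h.W_equiv i, h.W_smooth i⟩, fun R hR ε hε => ?_⟩
  obtain ⟨n, hn⟩ := exists_pow_lt_of_lt_one (show 0 < ε / (2 * R) by positivity)
    (show (1 / 2 : ℝ) < 1 by norm_num)
  refine ⟨n, fun i hi y hy => ?_⟩
  have h1 := h.W_le (i + 1) y
  have h2 := h.Wl_le (i + 1) y
  have h3 : (1 / 2 : ℝ) ^ (i + 1) ≤ (1 / 2) ^ n :=
    pow_le_pow_of_le_one (by norm_num) (by norm_num) (by omega)
  have h4 : 2 * (1 / 2 : ℝ) ^ (i + 1) * ‖y‖ ≤ ε := by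
    rw [lt_div_iff₀ (by positivity)] at hn
    have : (1 / 2 : ℝ) ^ (i + 1) * ‖y‖ ≤ (1 / 2) ^ n * R :=
      mul_le_mul h3 hy (norm_nonneg _) (by positivity)
    linarith
  rw [abs_le]
  constructor <;> linarith

theorem bracket (h : Blocks S) (n : ℕ) (x y : E) :
    (S n y - S n x) ^ 2 ≤ 2 * S n y ^ 2 + 2 * S n x ^ 2 - S n (y + x) ^ 2 := by
  have h1 := pow_le_pow_left₀ (h.nonneg n (y + x)) ((h.subl n).1 y x) 2
  nlinarith

theorem bracket_le (h : Blocks S) (n : ℕ) (x y : E) :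
    2 * S n y ^ 2 + 2 * S n x ^ 2 - S n (y + x) ^ 2 ≤
      2 * Wl S y ^ 2 + 2 * Wl S x ^ 2 - Wl S (y + x) ^ 2 := by
  have hsq : ∀ z, Wl S z ^ 2 = ∑' n, S n z ^ 2 := fun z =>
    Real.sq_sqrt (tsum_nonneg fun _ => sq_nonneg _)
  have hs : HasSum (fun n => 2 * S n y ^ 2 + 2 * S n x ^ 2 - S n (y + x) ^ 2)
      (2 * Wl S y ^ 2 + 2 * Wl S x ^ 2 - Wl S (y + x) ^ 2) := by
    rw [hsq, hsq, hsq]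
    exact (((h.summable y).hasSum.mul_left 2).add ((h.summable x).hasSum.mul_left 2)).sub
      (h.summable (y + x)).hasSum
  exact le_hasSum hs n fun j _ => (sq_nonneg _).trans (h.bracket j x y)

/-- The abstract consequence of vanishing brackets. -/
theorem tendsto_of_bracket {a b : ℕ → ℝ} {c : ℝ} (hc : 0 ≤ c) (hb : ∀ r, 0 ≤ b r)
    (h1 : ∀ r, (a r - c) ^ 2 ≤ 2 * a r ^ 2 + 2 * c ^ 2 - b r ^ 2)
    (h2 : Tendsto (fun r => 2 * a r ^ 2 + 2 * c ^ 2 - b r ^ 2) atTop (𝓝 0)) :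
    Tendsto a atTop (𝓝 c) ∧ Tendsto b atTop (𝓝 (2 * c)) := by
  have h3 : Tendsto (fun r => (a r - c) ^ 2) atTop (𝓝 0) :=
    squeeze_zero (fun _ => sq_nonneg _) h1 h2
  have h4 : Tendsto a atTop (𝓝 c) := by
    rw [tendsto_iff_norm_sub_tendsto_zero]
    have := h3.sqrt
    simpa [Real.sqrt_sq_eq_abs] using this
  refine ⟨h4, ?_⟩
  have h5 : Tendsto (fun r => b r ^ 2) atTop (𝓝 ((2 * c) ^ 2)) := by
    have := (((h4.pow 2).const_mul 2).add_const (2 * c ^ 2)).sub h2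
    refine (this.congr fun r => ?_).trans (le_of_eq ?_)
    · ring
    · congr 1; ring
  have h6 := h5.sqrt
  rw [Real.sqrt_sq (by positivity)] at h6
  exact h6.congr fun r => Real.sqrt_sq (hb r)

theorem Wl_tendsto (h : Blocks S) (x : E) (xr : ℕ → E)
    (hx : Tendsto (fun r => 2 * Wl S (xr r) ^ 2 + 2 * Wl S x ^ 2 - Wl S (xr r + x) ^ 2) atTop (𝓝 0))
    (n : ℕ) : Tendsto (fun r => S n (xr r)) atTop (𝓝 (S n x)) ∧
      Tendsto (fun r => S n (xr r + x)) atTop (𝓝 (2 * S n x)) := by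
  refine tendsto_of_bracket (h.nonneg n x) (fun r => h.nonneg n _) (fun r => h.bracket n x _) ?_
  exact squeeze_zero (fun r => (sq_nonneg _).trans (h.bracket n x _))
    (fun r => h.bracket_le n x _) hx

end Blocks

/-- Abstract renorming theorem. -/
theorem renorm_of_family {E : Type*} [NormedAddCommGroup E] [NormedSpace ℝ E]
    (N : ℕ → E → ℝ) (hN : ∀ j, Smb (N j)) (hev : ∀ j x, N j (-x) = N j x)
    (hlo : ∀ j, ∃ c > (0 : ℝ), ∀ x, c * ‖x‖ ≤ N j x)
    (hup : ∀ j, ∃ C > (0 : ℝ), ∀ x, N j x ≤ C * ‖x‖)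
    (hlur : ∀ (x : E) (xr : ℕ → E), (∃ R, ∀ r, ‖xr r‖ ≤ R) →
      (∀ j, Tendsto (fun r => N j (xr r)) atTop (𝓝 (N j x)) ∧
        Tendsto (fun r => N j (xr r + x)) atTop (𝓝 (2 * N j x))) →
      Tendsto (fun r => ‖xr r - x‖) atTop (𝓝 0)) :
    ∃ N : E → ℝ, IsEquivNorm N ∧ IsCkSmoothNorm 1 N ∧ IsLUR N ∧
      IsUniformLimitOfCkSmoothNorms ((⊤ : ℕ∞) : WithTop ℕ∞) N := by
  choose c hc hcl using hlo
  choose C hC hCu using hup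
  have hex : ∀ j i : ℕ, ∃ q : E → ℝ, IsSubl q ∧ SmoothOff q ∧
      ∀ x, N j x - min (c j / 2) (1 / ((i : ℝ) + 1)) * ‖x‖ ≤ q x ∧ q x ≤ N j x := fun j i =>
    (hN j).2 _ (lt_min (half_pos (hc j)) (by positivity))
  choose q hqs hqsm hqb using hex
  let Q : ℕ → ℕ → E → ℝ := fun j i x => (q j i x + q j i (-x)) / 2
  have hQu : ∀ j i x, Q j i x ≤ N j x := by
    intro j i x
    have h1 := (hqb j i x).2
    have h2 := (hqb j i (-x)).2
    rw [hev] at h2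
    simp only [Q]; linarith
  have hQl : ∀ (j i : ℕ) (x : E), N j x - min (c j / 2) (1 / ((i : ℝ) + 1)) * ‖x‖ ≤ Q j i x := by
    intro j i x
    have h1 := (hqb j i x).1
    have h2 := (hqb j i (-x)).1
    rw [hev, norm_neg] at h2
    simp only [Q]; linarith
  let a : ℕ → ℝ := fun n => (1 / 2) ^ n / C n.unpair.1
  have ha : ∀ n, 0 < a n := fun n => div_pos (by positivity) (hC _)
  let S : ℕ → E → ℝ := fun n x => a n * Q n.unpair.1 n.unpair.2 x
  have hS : Blocks S := by
    refine ⟨fun n => ⟨fun x y => ?_, fun b x hb => ?_⟩, fun n x => ?_, fun n x hx => ?_,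
      fun n x => ?_, fun n => ?_⟩
    · have h1 := (hqs n.unpair.1 n.unpair.2).1 x y
      have h2 := (hqs n.unpair.1 n.unpair.2).1 (-x) (-y)
      rw [← neg_add] at h2
      simp only [S, Q]
      rw [← mul_add]
      refine mul_le_mul_of_nonneg_left ?_ (ha n).le
      linarith
    · have h1 := (hqs n.unpair.1 n.unpair.2).2 b x hb
      have h2 := (hqs n.unpair.1 n.unpair.2).2 b (-x) hb
      rw [smul_neg] at h2
      simp only [S, Q, h1, h2]
      ring
    · simp only [S, Q, neg_neg]; ring
    · have h1 := hqsm n.unpair.1 n.unpair.2 x hx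
      have h2 := (hqsm n.unpair.1 n.unpair.2 (-x) (neg_ne_zero.2 hx)).comp x
        (contDiff_neg.contDiffAt)
      exact contDiffAt_const.mul ((h1.add h2).div_const 2)
    · have h1 := (hQu n.unpair.1 n.unpair.2 x).trans (hCu n.unpair.1 x)
      have h2 := mul_le_mul_of_nonneg_left h1 (ha n).le
      refine h2.trans (le_of_eq ?_)
      have := (hC n.unpair.1).ne'
      simp only [a]
      field_simp
    · refine ⟨a n * (c n.unpair.1 / 2), mul_pos (ha n) (half_pos (hc _)), fun x => ?_⟩
      rw [mul_assoc]
      refine mul_le_mul_of_nonneg_left ?_ (ha n).le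
      have h1 := hQl n.unpair.1 n.unpair.2 x
      have h2 := hcl n.unpair.1 x
      have h3 := mul_le_mul_of_nonneg_right (min_le_left (c n.unpair.1 / 2)
        (1 / ((n.unpair.2 : ℝ) + 1))) (norm_nonneg x)
      linarith
  refine ⟨Blocks.Wl S, hS.Wl_equiv, hS.Wl_smooth, ?_, hS.Wl_limit⟩
  intro x xr hx
  have hT := hS.Wl_tendsto x xr hx
  have hTQ : ∀ j i, Tendsto (fun r => Q j i (xr r)) atTop (𝓝 (Q j i x)) ∧
      Tendsto (fun r => Q j i (xr r + x)) atTop (𝓝 (2 * Q j i x)) := by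
    intro j i
    have h := hT (Nat.pair j i)
    have hne := (ha (Nat.pair j i)).ne'
    simp only [S, Nat.unpair_pair] at h
    constructor
    · have := h.1.const_mul (a (Nat.pair j i))⁻¹
      simpa [inv_mul_cancel_left₀ hne] using this
    · have := h.2.const_mul (a (Nat.pair j i))⁻¹
      rw [mul_left_comm 2] at this
      simpa [inv_mul_cancel_left₀ hne] using this
  -- boundedness
  have hbd : ∃ R, ∀ r, ‖xr r‖ ≤ R := by
    obtain ⟨B, hB⟩ := (hTQ 0 0).1.bddAbove_range
    refine ⟨B / (c 0 / 2), fun r => ?_⟩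
    rw [le_div_iff₀ (half_pos (hc 0))]
    have h0 : Q 0 0 (xr r) ≤ B := hB ⟨r, rfl⟩
    have h1 := hQl 0 0 (xr r)
    have h2 := hcl 0 (xr r)
    have h3 := mul_le_mul_of_nonneg_right (min_le_left (c 0 / 2)
      (1 / (((0 : ℕ) : ℝ) + 1))) (norm_nonneg (xr r))
    linarith
  obtain ⟨R, hR⟩ := hbd
  have hlim : ∀ j (y : ℕ → E) (M : ℝ) (l : ℝ) (L : ℕ → ℝ), (∀ r, ‖y r‖ ≤ M) →
      (∀ i, Tendsto (fun r => Q j i (y r)) atTop (𝓝 (L i))) → Tendsto L atTop (𝓝 l) →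
      Tendsto (fun r => N j (y r)) atTop (𝓝 l) := by
    intro j y M l L hM hi hL
    have hu : TendstoUniformly (fun i r => Q j i (y r)) (fun r => N j (y r)) atTop := by
      rw [Metric.tendstoUniformly_iff]
      intro ε hε
      obtain ⟨i0, hi0⟩ := exists_nat_gt ((|M| + 1) / ε)
      filter_upwards [eventually_ge_atTop i0] with i hi r
      have h1 := hQl j i (y r)
      have h2 := hQu j i (y r)
      have h3 := mul_le_mul_of_nonneg_right (min_le_right (c j / 2)
        (1 / ((i : ℝ) + 1))) (norm_nonneg (y r))
      have h4 : 1 / ((i : ℝ) + 1) * ‖y r‖ < ε := by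
        have hii : (i0 : ℝ) ≤ i := by exact_mod_cast hi
        rw [div_lt_iff₀ hε] at hi0
        rw [one_div_mul_eq_div, div_lt_iff₀ (by positivity)]
        have := (hM r).trans (le_abs_self M)
        nlinarith
      rw [Real.dist_eq, abs_of_nonneg (by linarith)]
      linarith
    exact hu.tendsto_of_eventually_tendsto (Eventually.of_forall hi) hL
  have hQlim : ∀ j z, Tendsto (fun i => Q j i z) atTop (𝓝 (N j z)) := by
    intro j z
    have h1 : Tendsto (fun i : ℕ => N j z - 1 / ((i : ℝ) + 1) * ‖z‖) atTop (𝓝 (N j z)) := by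
      have := (tendsto_one_div_add_atTop_nhds_zero_nat (𝕜 := ℝ)).mul_const ‖z‖
      simpa using this.const_sub (N j z)
    refine tendsto_of_tendsto_of_tendsto_of_le_of_le h1 tendsto_const_nhds (fun i => ?_)
      (fun i => hQu j i z)
    have h3 := mul_le_mul_of_nonneg_right (min_le_right (c j / 2)
        (1 / ((i : ℝ) + 1))) (norm_nonneg z)
    have := hQl j i z
    simp only
    linarith
  have key := hlur x xr ⟨R, hR⟩ fun j =>
    ⟨hlim j xr R _ _ hR (fun i => (hTQ j i).1) (hQlim j x),
      hlim j (fun r => xr r + x) (R + ‖x‖) _ _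
        (fun r => (norm_add_le _ _).trans (by linarith [hR r])) (fun i => (hTQ j i).2)
        ((hQlim j x).const_mul 2)⟩
  refine squeeze_zero (fun r => Real.sqrt_nonneg _) (fun r => hS.upper_Wl (xr r - x)) ?_
  simpa using key.const_mul 2



set_option linter.unusedSectionVars false
set_option linter.deprecated false

namespace OrdC

variable {K : Type*} [LinearOrder K] [WellFoundedLT K] [SuccOrder K] [OrderBot K] [OrderTop K]
  [TopologicalSpace K] [OrderTopology K] [CompactSpace K]

/-- the jump functional -/
noncomputable def jump (a : K) : C(K, ℝ) →L[ℝ] ℝ :=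
  ContinuousMap.evalCLM ℝ (Order.succ a) - ContinuousMap.evalCLM ℝ a

theorem jump_apply (a : K) (f : C(K, ℝ)) : jump a f = f (Order.succ a) - f a := rfl

theorem abs_le_norm (f : C(K, ℝ)) (t : K) : |f t| ≤ ‖f‖ := f.norm_coe_le_norm t

theorem jump_abs_le (a : K) (f : C(K, ℝ)) : |jump a f| ≤ 2 * ‖f‖ := by
  rw [jump_apply]
  have h1 := abs_le_norm f (Order.succ a)
  have h2 := abs_le_norm f a
  have := abs_sub (f (Order.succ a)) (f a)
  linarith

theorem isOpen_Iic' (t : K) : IsOpen (Set.Iic t) := by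
  by_cases h : IsMax t
  · have : Set.Iic t = Set.univ := by
      ext s; simp [h.isTop s]
    rw [this]; exact isOpen_univ
  · rw [← Order.Iio_succ_of_not_isMax h]; exact isOpen_Iio

theorem exists_left (f : C(K, ℝ)) (t : K) (ht : t ≠ ⊥) (c : ℝ) {ε : ℝ} (h : |f t - c| < ε) :
    ∃ l < t, ∀ u, l < u → u ≤ t → |f u - c| < ε := by
  have hm : {u | |f u - c| < ε} ∈ 𝓝 t := by
    have : IsOpen {u | |f u - c| < ε} :=
      isOpen_lt (f.continuous.sub continuous_const).abs continuous_const
    exact this.mem_nhds h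
  obtain ⟨l, hl, hs⟩ := exists_Ioc_subset_of_mem_nhds hm ⟨⊥, bot_lt_iff_ne_bot.2 ht⟩
  exact ⟨l, hl, fun u h1 h2 => hs ⟨h1, h2⟩⟩

theorem finite_jump (f : C(K, ℝ)) {r : ℝ} (hr : 0 < r) : {a : K | r < |jump a f|}.Finite := by
  have key : (Set.univ ∩ {a : K | r < |jump a f|}).Finite := by
    refine IsCompact.induction_on (p := fun s => (s ∩ {a : K | r < |jump a f|}).Finite)
      isCompact_univ (by simp) ?_ ?_ ?_
    · intro s t hst h
      exact h.subset (Set.inter_subset_inter_left _ hst)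
    · intro s t h1 h2
      rw [Set.union_inter_distrib_right]
      exact h1.union h2
    · intro t _
      by_cases ht : t = ⊥
      · refine ⟨Set.Iic t, mem_nhdsWithin_of_mem_nhds ((isOpen_Iic' t).mem_nhds le_rfl), ?_⟩
        subst ht
        exact (Set.finite_singleton (⊥ : K)).subset (by simp)
      · obtain ⟨l, hl, hu⟩ := exists_left f t ht (f t) (ε := r / 2) (by simpa using hr)
        refine ⟨Set.Ioi l ∩ Set.Iic t, mem_nhdsWithin_of_mem_nhds
          ((isOpen_Ioi.inter (isOpen_Iic' t)).mem_nhds ⟨hl, le_rfl⟩), ?_⟩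
        refine (Set.finite_singleton t).subset ?_
        rintro a ⟨⟨h1, h2⟩, h3⟩
        by_contra hne
        have hlt : a < t := lt_of_le_of_ne h2 hne
        have h4 := hu a h1 hlt.le
        have h5 := hu (Order.succ a) (h1.trans_le (Order.le_succ a)) (Order.succ_le_of_lt hlt)
        simp only [Set.mem_setOf_eq, jump_apply] at h3
        have : |f (Order.succ a) - f a| < r := by
          rw [abs_lt] at *
          constructor <;> linarith
        linarith
  simpa using key

/-- classes determined by a finite set of points -/
def Eqv (A : Finset K) (s t : K) : Prop := ∀ a ∈ A, (a < s ↔ a < t)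

theorem Eqv.refl (A : Finset K) (s : K) : Eqv A s s := fun _ _ => Iff.rfl

theorem Eqv.symm {A : Finset K} {s t : K} (h : Eqv A s t) : Eqv A t s := fun a ha => (h a ha).symm

theorem Eqv.trans {A : Finset K} {s t u : K} (h : Eqv A s t) (h' : Eqv A t u) : Eqv A s u :=
  fun a ha => (h a ha).trans (h' a ha)

theorem Eqv.mono {A B : Finset K} (hAB : A ⊆ B) {s t : K} (h : Eqv B s t) : Eqv A s t :=
  fun a ha => h a (hAB ha)

theorem isClopen_Ioi' (a : K) : IsClopen (Set.Ioi a) :=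
  ⟨by rw [← Set.compl_Iic]; exact (isOpen_Iic' a).isClosed_compl, isOpen_Ioi⟩

theorem isOpen_class (A : Finset K) (t : K) : IsOpen {s | Eqv A s t} := by
  have : {s | Eqv A s t} = ⋂ a ∈ A, {s | a < s ↔ a < t} := by
    ext s; simp [Eqv]
  rw [this]
  refine isOpen_biInter_finset fun a _ => ?_
  by_cases h : a < t
  · simp only [h, iff_true]; exact isOpen_Ioi
  · simp only [h, iff_false, not_lt]; exact isOpen_Iic' a

theorem isClosed_eqv (A : Finset K) : IsClosed {p : K × K | Eqv A p.1 p.2} := by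
  have : {p : K × K | Eqv A p.1 p.2} = ⋂ a ∈ A, {p : K × K | a < p.1 ↔ a < p.2} := by
    ext s; simp [Eqv]
  rw [this]
  refine isClosed_biInter fun a _ => ?_
  have h1 : IsClopen {p : K × K | a < p.1} := (isClopen_Ioi' a).preimage continuous_fst
  have h2 : IsClopen {p : K × K | a < p.2} := (isClopen_Ioi' a).preimage continuous_snd
  have : {p : K × K | a < p.1 ↔ a < p.2} = ({p : K × K | a < p.1} ∩ {p : K × K | a < p.2}) ∪
      ({p : K × K | a < p.1}ᶜ ∩ {p : K × K | a < p.2}ᶜ) := by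
    ext p; simp only [Set.mem_setOf_eq, Set.mem_union, Set.mem_inter_iff, Set.mem_compl_iff]; tauto
  rw [this]
  exact ((h1.inter h2).union (h1.compl.inter h2.compl)).1

theorem isClosed_class (A : Finset K) (t : K) : IsClosed {s | Eqv A s t} :=
  (isClosed_eqv A).preimage (continuous_id.prodMk continuous_const)

theorem greedy (f : C(K, ℝ)) {ε : ℝ} (hε : 0 < ε) : ∃ A : Finset K, (∀ a ∈ A, jump a f ≠ 0) ∧
    ∀ s s', Eqv A s s' → |f s - f s'| ≤ 2 * ε := by
  classical
  have main : ∀ t : K, ∃ A : Finset K, (∀ a ∈ A, jump a f ≠ 0) ∧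
      ∀ s s', s ≤ t → s' ≤ t → Eqv A s s' → |f s - f s'| ≤ 2 * ε := by
    intro t
    induction t using WellFoundedLT.induction with
    | ind t ih =>
      let S : Set K := {s | s ≤ t ∧ ∀ u, s ≤ u → u ≤ t → |f u - f t| < ε}
      have hne : S.Nonempty := ⟨t, le_rfl, fun u h1 h2 => by
        rw [le_antisymm h2 h1]; simpa using hε⟩
      obtain ⟨s0, hs0, hmin⟩ := wellFounded_lt.has_min S hne
      have hclose : ∀ s s', s0 ≤ s → s0 ≤ s' → s ≤ t → s' ≤ t → |f s - f s'| ≤ 2 * ε := by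
        intro s s' h1 h2 h3 h4
        have h5 := hs0.2 s h1 h3
        have h6 := hs0.2 s' h2 h4
        rw [abs_lt] at h5 h6
        rw [abs_le]
        constructor <;> linarith
      by_cases hb : s0 = ⊥
      · refine ⟨∅, by simp, fun s s' h1 h2 _ => hclose s s' ?_ ?_ h1 h2⟩ <;> simp [hb]
      · obtain ⟨l, hl, hu⟩ := exists_left f s0 hb (f t) (hs0.2 s0 le_rfl hs0.1)
        have hemp : ∀ u, l < u → u < s0 → False := by
          intro u h1 h2
          refine hmin u ⟨h2.le.trans hs0.1, fun v h3 h4 => ?_⟩ h2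
          rcases le_total v s0 with h5 | h5
          · exact hu v (h1.trans_le h3) h5
          · exact hs0.2 v h5 h4
        have hsucc : Order.succ l = s0 := by
          refine le_antisymm (Order.succ_le_of_lt hl) (not_lt.1 fun h => ?_)
          exact hemp _ (Order.lt_succ_of_not_isMax hl.not_isMax) h
        have hlt : l < t := hl.trans_le hs0.1
        obtain ⟨A, hA1, hA2⟩ := ih l hlt
        refine ⟨insert l A, ?_, ?_⟩
        · intro a ha
          rcases Finset.mem_insert.1 ha with rfl | ha
          · intro h0
            rw [jump_apply, hsucc] at h0
            refine hmin a ⟨hlt.le, fun v h3 h4 => ?_⟩ hl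
            rcases h3.eq_or_lt with rfl | h3
            · have : f a = f s0 := by linarith
              rw [this]; exact hs0.2 s0 le_rfl hs0.1
            · refine hs0.2 v ?_ h4
              rw [← hsucc]; exact Order.succ_le_of_lt h3
          · exact hA1 a ha
        · intro s s' h1 h2 h3
          have h4 := h3 l (by simp)
          by_cases h5 : l < s
          · have h6 := h4.1 h5
            refine hclose s s' ?_ ?_ h1 h2 <;> rw [← hsucc] <;> exact Order.succ_le_of_lt ‹_›
          · have h6 : ¬ l < s' := fun h => h5 (h4.2 h)
            exact hA2 s s' (not_lt.1 h5) (not_lt.1 h6) (h3.mono (Finset.subset_insert _ _))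
  obtain ⟨A, h1, h2⟩ := main ⊤
  exact ⟨A, h1, fun s s' h => h2 s s' le_top le_top h⟩

theorem exists_rep (B : Finset K) (t : K) :
    ∃ ρ, Eqv B t ρ ∧ (ρ = ⊥ ∨ ∃ b ∈ B, b < t ∧ ρ = Order.succ b) := by
  classical
  by_cases hne : (B.filter (· < t)).Nonempty
  · obtain ⟨b, hb, hmax⟩ := Finset.exists_max_image _ id hne
    rw [Finset.mem_filter] at hb
    refine ⟨Order.succ b, fun a ha => ?_, Or.inr ⟨b, hb.1, hb.2, rfl⟩⟩
    rw [Order.lt_succ_iff_of_not_isMax hb.2.not_isMax]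
    exact ⟨fun h => hmax a (Finset.mem_filter.2 ⟨ha, h⟩), fun h => h.trans_lt hb.2⟩
  · refine ⟨⊥, fun a ha => ?_, Or.inl rfl⟩
    simp only [not_lt_bot, iff_false]
    exact fun h => hne ⟨a, Finset.mem_filter.2 ⟨ha, h⟩⟩

/-- sign -/
def sg (σ : Bool) : ℝ := if σ then 1 else -1

theorem sg_abs (σ : Bool) (x : ℝ) : sg σ * x ≤ |x| := by
  cases σ
  · simpa [sg] using neg_le_abs x
  · simpa [sg] using le_abs_self x

theorem exists_sg (x : ℝ) : ∃ σ, sg σ * x = |x| := by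
  rcases le_total 0 x with h | h
  · exact ⟨true, by simp [sg, abs_of_nonneg h]⟩
  · exact ⟨false, by simp [sg, abs_of_nonpos h]⟩

theorem smb_points (A : Finset K) (u : K → Bool → C(K, ℝ) → ℝ) (hu : ∀ t σ, Smb (u t σ))
    (hcls : ∀ s t σ f, Eqv A s t → u s σ f = u t σ f) (P : C(K, ℝ) → ℝ) (c C : ℝ)
    (hc : 0 < c) (hC : 0 < C) (hPc : ∀ f, c * ‖f‖ ≤ P f) (hPC : ∀ f, P f ≤ C * ‖f‖)
    (hle : ∀ t σ f, sg σ * f t + u t σ f ≤ P f)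
    (hatt : ∀ f, ∃ t σ, sg σ * f t + u t σ f = P f) : Smb P := by
  classical
  let A' : Finset K := insert ⊤ A
  refine Smb.sup (ι := K × Bool) (fun i f => sg i.2 * f i.1 + u i.1 i.2 f) ?_ P c C 2 hc hC
    (by norm_num) hPc hPC (fun i f => hle i.1 i.2 f)
    (fun i => if i.1 ∈ A' then 0 else -(sg i.2) • jump i.1)
    (fun i => if i.1 ∈ A' then 1 else 0) ?_ ?_ ?_ ?_
  · intro i
    exact (Smb.clm ((sg i.2) • (ContinuousMap.evalCLM ℝ i.1 : C(K, ℝ) →L[ℝ] ℝ))).add (hu i.1 i.2)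
  · rintro ⟨t, σ⟩ f
    have h1 := jump_abs_le t f
    have h2 := sg_abs σ (-(jump t f))
    rw [abs_neg] at h2
    by_cases h : t ∈ A'
    · simp [h]
    · simp only [h, if_false, ContinuousLinearMap.smul_apply, smul_eq_mul]
      linarith
  · rintro ⟨t, σ⟩
    by_cases h : t ∈ A' <;> simp [h]
  · intro f r hr
    refine (((A'.finite_toSet).union (finite_jump f hr)).prod
      (Set.finite_univ (α := Bool))).subset ?_
    rintro ⟨t, σ⟩ ht
    refine ⟨?_, trivial⟩
    by_cases h : t ∈ A'
    · exact Or.inl h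
    · right
      simp only [Set.mem_setOf_eq, h, if_false, ContinuousLinearMap.smul_apply, smul_eq_mul,
        add_zero] at ht ⊢
      have h2 := sg_abs σ (-(jump t f))
      rw [abs_neg] at h2
      linarith
  · intro f _
    obtain ⟨t0, σ, h0⟩ := hatt f
    have hcont : Continuous fun t => sg σ * f t + u t σ f := by
      refine (continuous_const.mul f.continuous).add ?_
      refine continuous_iff_continuousAt.2 fun t => ?_
      have : (fun s => u s σ f) =ᶠ[𝓝 t] fun _ => u t σ f := by
        filter_upwards [(isOpen_class A t).mem_nhds (Eqv.refl A t)] with s hs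
        exact hcls s t σ f hs
      exact continuousAt_const.congr this.symm
    have hcl : IsClosed {t | sg σ * f t + u t σ f = P f} := isClosed_eq hcont continuous_const
    obtain ⟨t, ht, hmax⟩ := hcl.isCompact.exists_isGreatest ⟨t0, h0⟩
    refine ⟨(t, σ), ht, ?_⟩
    by_cases h : t ∈ A'
    · simp [h]
    · simp only [h, if_false, ContinuousLinearMap.smul_apply, smul_eq_mul, add_zero]
      have hA : t ∉ A := fun h' => h (Finset.mem_insert_of_mem h')
      have htop : t < ⊤ := lt_top_iff_ne_top.2 fun h' => h (by simp [A', h'])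
      have hlt : t < Order.succ t := Order.lt_succ_of_not_isMax htop.not_isMax
      have hE : Eqv A (Order.succ t) t := by
        intro a ha
        rw [Order.lt_succ_iff_of_not_isMax htop.not_isMax]
        exact ⟨fun h' => lt_of_le_of_ne h' fun h'' => hA (h'' ▸ ha), le_of_lt⟩
      have h1 := hle (Order.succ t) σ f
      have h2 : sg σ * f (Order.succ t) + u (Order.succ t) σ f ≠ P f :=
        fun h' => absurd (hmax h') (not_le.2 hlt)
      have h3 := lt_of_le_of_ne h1 h2
      have h4 : sg σ * f t + u t σ f = P f := ht
      rw [hcls _ _ σ f hE] at h3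
      rw [jump_apply]
      linarith

theorem exists_norm_eq (f : C(K, ℝ)) : ∃ t, |f t| = ‖f‖ := by
  obtain ⟨t, -, ht⟩ := isCompact_univ.exists_isMaxOn (Set.univ_nonempty (α := K))
    (f.continuous.abs.continuousOn)
  refine ⟨t, le_antisymm (abs_le_norm f t) ?_⟩
  exact (f.norm_le (abs_nonneg _)).2 fun s => ht (Set.mem_univ s)

theorem smb_norm : Smb (fun f : C(K, ℝ) => ‖f‖) := by
  refine smb_points (∅ : Finset K) (fun _ _ _ => 0) (fun _ _ => ?_) (fun _ _ _ _ _ => rfl) _ 1 1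
    one_pos one_pos (fun f => by simp) (fun f => by simp) ?_ ?_
  · exact Smb.clm (0 : C(K, ℝ) →L[ℝ] ℝ)
  · intro t σ f
    have := sg_abs σ (f t)
    have := abs_le_norm f t
    linarith
  · intro f
    obtain ⟨t, ht⟩ := exists_norm_eq f
    obtain ⟨σ, hσ⟩ := exists_sg (f t)
    exact ⟨t, σ, by simp [hσ, ht]⟩

/-- sup of `-f` on a class -/
noncomputable def Isup (A : Finset K) (s : K) (f : C(K, ℝ)) : ℝ :=
  sSup ((fun t => - f t) '' {t | Eqv A t s})

theorem Isup_greatest (A : Finset K) (s : K) (f : C(K, ℝ)) :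
    IsGreatest ((fun t => - f t) '' {t | Eqv A t s}) (Isup A s f) :=
  ((isClosed_class A s).isCompact.image f.continuous.neg).isGreatest_sSup
    ⟨_, s, Eqv.refl A s, rfl⟩

/-- oscillation on classes -/
noncomputable def osc (A : Finset K) (f : C(K, ℝ)) : ℝ :=
  sSup ((fun p : K × K => f p.1 - f p.2) '' {p | Eqv A p.1 p.2})

theorem osc_greatest (A : Finset K) (f : C(K, ℝ)) :
    IsGreatest ((fun p : K × K => f p.1 - f p.2) '' {p | Eqv A p.1 p.2}) (osc A f) :=
  ((isClosed_eqv A).isCompact.image ((f.continuous.comp continuous_fst).sub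
    (f.continuous.comp continuous_snd))).isGreatest_sSup
    ⟨_, (⊥, ⊥), Eqv.refl A ⊥, rfl⟩

theorem le_osc {A : Finset K} (f : C(K, ℝ)) {s t : K} (h : Eqv A s t) : f s - f t ≤ osc A f :=
  (osc_greatest A f).2 ⟨(s, t), h, rfl⟩

theorem osc_att (A : Finset K) (f : C(K, ℝ)) : ∃ s t, Eqv A s t ∧ f s - f t = osc A f := by
  obtain ⟨⟨s, t⟩, h, h'⟩ := (osc_greatest A f).1
  exact ⟨s, t, h, h'⟩

theorem osc_nonneg (A : Finset K) (f : C(K, ℝ)) : 0 ≤ osc A f := by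
  have := le_osc f (Eqv.refl A ⊥)
  simpa using this

theorem osc_le (A : Finset K) (f : C(K, ℝ)) : osc A f ≤ 2 * ‖f‖ := by
  obtain ⟨s, t, _, h⟩ := osc_att A f
  have h1 := abs_le.1 (abs_le_norm f s)
  have h2 := abs_le.1 (abs_le_norm f t)
  linarith [h1.2, h2.1]

theorem osc_anti {A B : Finset K} (h : A ⊆ B) (f : C(K, ℝ)) : osc B f ≤ osc A f := by
  obtain ⟨s, t, hst, e⟩ := osc_att B f
  rw [← e]; exact le_osc f (hst.mono h)

theorem osc_neg (A : Finset K) (f : C(K, ℝ)) : osc A (-f) = osc A f := by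
  have key : ∀ g : C(K, ℝ), osc A (-g) ≤ osc A g := by
    intro g
    obtain ⟨s, t, hst, e⟩ := osc_att A (-g)
    rw [← e]
    have := le_osc g hst.symm
    simp only [ContinuousMap.neg_apply]
    linarith
  refine le_antisymm (key f) ?_
  simpa using key (-f)

theorem smb_inner (A : Finset K) (s : K) :
    Smb (fun f : C(K, ℝ) => 4 * ‖f‖ + Isup A s f) := by
  classical
  have hI : ∀ f : C(K, ℝ), - ‖f‖ ≤ Isup A s f ∧ Isup A s f ≤ ‖f‖ := by
    intro f
    obtain ⟨t, ht, e⟩ := (Isup_greatest A s f).1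
    have e' : - f t = Isup A s f := e
    have h1 := abs_le.1 (abs_le_norm f t)
    rw [← e']
    constructor <;> linarith
  have h2 : Smb (fun f : C(K, ℝ) => 2 * ‖f‖) := smb_norm.const_mul (by norm_num)
  have h4 : Smb (fun f : C(K, ℝ) => 4 * ‖f‖) := smb_norm.const_mul (by norm_num)
  refine smb_points A (fun t σ f => if σ = false ∧ Eqv A t s then 4 * ‖f‖ else 2 * ‖f‖) ?_ ?_ _
    3 5 (by norm_num) (by norm_num) (fun f => by linarith [(hI f).1])
    (fun f => by linarith [(hI f).2]) ?_ ?_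
  · intro t σ
    by_cases h : σ = false ∧ Eqv A t s
    · simpa only [h, and_self, if_true] using h4
    · simpa only [h, if_false] using h2
  · intro t t' σ f htt
    have : Eqv A t s ↔ Eqv A t' s := ⟨fun h => htt.symm.trans h, fun h => htt.trans h⟩
    simp only [this]
  · intro t σ f
    by_cases h : σ = false ∧ Eqv A t s
    · simp only [h, and_self, if_true]
      have := (Isup_greatest A s f).2 ⟨t, h.2, rfl⟩
      simp only [sg] at this ⊢
      simp only [Bool.false_eq_true, if_false]
      linarith
    · simp only [h, if_false]
      have := sg_abs σ (f t)
      have := abs_le_norm f t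
      linarith [(hI f).1]
  · intro f
    obtain ⟨t, ht, e⟩ := (Isup_greatest A s f).1
    have e' : - f t = Isup A s f := e
    have ht' : Eqv A t s := ht
    refine ⟨t, false, ?_⟩
    simp only [ht', and_self, if_true, sg, Bool.false_eq_true, if_false]
    linarith

theorem Isup_congr {A : Finset K} {s t : K} (h : Eqv A s t) (f : C(K, ℝ)) :
    Isup A s f = Isup A t f := by
  unfold Isup
  congr 2
  ext u
  exact ⟨fun h' => Eqv.trans h' h, fun h' => Eqv.trans h' h.symm⟩

theorem smb_osc (A : Finset K) : Smb (fun f : C(K, ℝ) => 4 * ‖f‖ + osc A f) := by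
  have h2 : Smb (fun f : C(K, ℝ) => 2 * ‖f‖) := smb_norm.const_mul (by norm_num)
  refine smb_points A (fun s σ f => if σ = true then 4 * ‖f‖ + Isup A s f else 2 * ‖f‖) ?_ ?_ _
    4 6 (by norm_num) (by norm_num) (fun f => by linarith [osc_nonneg A f])
    (fun f => by linarith [osc_le A f]) ?_ ?_
  · intro t σ
    by_cases h : σ = true
    · simpa only [h, if_true] using smb_inner A t
    · simpa only [if_neg h] using h2
  · intro s t σ f h
    simp only [Isup_congr h f]
  · intro t σ f
    by_cases h : σ = true
    · simp only [h, if_true]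
      obtain ⟨u, hu, e⟩ := (Isup_greatest A t f).1
      have e' : - f u = Isup A t f := e
      have := le_osc f (Eqv.symm hu)
      simp only [sg, if_true]
      linarith
    · simp only [if_neg h]
      have := sg_abs σ (f t)
      have := abs_le_norm f t
      linarith [osc_nonneg A f, norm_nonneg f]
  · intro f
    obtain ⟨s, t, hst, e⟩ := osc_att A f
    refine ⟨s, true, ?_⟩
    simp only [if_true, sg]
    have h1 := (Isup_greatest A s f).2 ⟨t, hst.symm, rfl⟩
    obtain ⟨u, hu, e2⟩ := (Isup_greatest A s f).1
    have e' : - f u = Isup A s f := e2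
    have h2 := le_osc f (Eqv.symm hu)
    simp only at h1
    linarith

end OrdC


set_option linter.unusedSectionVars false
set_option linter.deprecated false

namespace OrdC

variable {K : Type*} [LinearOrder K] [WellFoundedLT K] [SuccOrder K] [OrderBot K] [OrderTop K]
  [TopologicalSpace K] [OrderTopology K] [CompactSpace K]

/-- building block -/
noncomputable def H (m : ℝ) (A : Finset K) (f : C(K, ℝ)) : ℝ :=
  √((4 * ‖f‖ + osc A f) ^ 2 + (f ⊥ ^ 2 + ∑ a ∈ A, (m * jump a f) ^ 2))

theorem H_sq (m : ℝ) (A : Finset K) (f : C(K, ℝ)) :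
    H m A f ^ 2 = (4 * ‖f‖ + osc A f) ^ 2 + (f ⊥ ^ 2 + ∑ a ∈ A, (m * jump a f) ^ 2) :=
  Real.sq_sqrt (add_nonneg (sq_nonneg _) (add_nonneg (sq_nonneg _)
    (Finset.sum_nonneg fun _ _ => sq_nonneg _)))

theorem H_nonneg (m : ℝ) (A : Finset K) (f : C(K, ℝ)) : 0 ≤ H m A f := Real.sqrt_nonneg _

theorem H_smb (m : ℝ) (A : Finset K) : Smb (H m A) := by
  have h := Smb.sqrt_sum (smb_osc A) (c := 4) (by norm_num)
    (fun f => by linarith [osc_nonneg A f]) (Finset.insertNone A)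
    (fun i => i.elim (ContinuousMap.evalCLM ℝ (⊥ : K) : C(K, ℝ) →L[ℝ] ℝ) fun a => m • jump a)
  have e : H m A = fun f => √((4 * ‖f‖ + osc A f) ^ 2 + ∑ i ∈ Finset.insertNone A,
      (i.elim (ContinuousMap.evalCLM ℝ (⊥ : K) : C(K, ℝ) →L[ℝ] ℝ) fun a => m • jump a) f ^ 2) := by
    funext f
    rw [Finset.sum_insertNone]
    rfl
  rw [e]; exact h

theorem H_neg (m : ℝ) (A : Finset K) (f : C(K, ℝ)) : H m A (-f) = H m A f := by
  unfold H
  simp [osc_neg, map_neg]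

theorem H_lower (m : ℝ) (A : Finset K) (f : C(K, ℝ)) : 4 * ‖f‖ ≤ H m A f := by
  apply Real.le_sqrt_of_sq_le
  have h1 : (0 : ℝ) ≤ f ⊥ ^ 2 + ∑ a ∈ A, (m * jump a f) ^ 2 :=
    add_nonneg (sq_nonneg _) (Finset.sum_nonneg fun _ _ => sq_nonneg _)
  have h2 := osc_nonneg A f
  have := pow_le_pow_left₀ (by positivity) (show 4 * ‖f‖ ≤ 4 * ‖f‖ + osc A f by linarith) 2
  linarith

theorem H_insert {m : ℝ} (hm : 0 ≤ m) (A : Finset K) (a : K) (f : C(K, ℝ)) :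
    H m (insert a A) f ≤ H m A f + m * |jump a f| := by
  by_cases ha : a ∈ A
  · rw [Finset.insert_eq_of_mem ha]
    have : 0 ≤ m * |jump a f| := by positivity
    linarith
  · have hn := H_nonneg m A f
    have hp : 0 ≤ m * |jump a f| := by positivity
    refine Real.sqrt_le_iff.2 ⟨by positivity, ?_⟩
    rw [Finset.sum_insert ha]
    have h1 := H_sq m A f
    have h2 : (4 * ‖f‖ + osc (insert a A) f) ^ 2 ≤ (4 * ‖f‖ + osc A f) ^ 2 := by
      have h3 := osc_anti (Finset.subset_insert a A) f
      have h4 := osc_nonneg (insert a A) f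
      exact pow_le_pow_left₀ (by positivity) (by linarith) 2
    have h5 : (m * jump a f) ^ 2 = (m * |jump a f|) ^ 2 := by
      rw [mul_pow, mul_pow, sq_abs]
    nlinarith

theorem H_upper {m : ℝ} (hm : 0 ≤ m) (A : Finset K) :
    ∃ C > (0 : ℝ), ∀ f : C(K, ℝ), H m A f ≤ C * ‖f‖ := by
  induction A using Finset.induction with
  | empty =>
    refine ⟨7, by norm_num, fun f => ?_⟩
    refine Real.sqrt_le_iff.2 ⟨by positivity, ?_⟩
    have h1 := osc_le (∅ : Finset K) f
    have h0 := osc_nonneg (∅ : Finset K) f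
    have h2 := pow_le_pow_left₀ (abs_nonneg _) (abs_le_norm f ⊥) 2
    rw [sq_abs] at h2
    have h3 := pow_le_pow_left₀ (by positivity)
      (show 4 * ‖f‖ + osc (∅ : Finset K) f ≤ 6 * ‖f‖ by linarith) 2
    simp only [Finset.sum_empty, add_zero]
    nlinarith [sq_nonneg ‖f‖]
  | insert a A _ ih =>
    obtain ⟨C, hC, h⟩ := ih
    refine ⟨C + m * 2, by positivity, fun f => ?_⟩
    have h1 := H_insert hm A a f
    have h2 := mul_le_mul_of_nonneg_left (jump_abs_le a f) hm
    linarith [h f]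

/-- optional insertion -/
def insI (i : Option K) (A : Finset K) : Finset K := i.elim A fun a => insert a A

/-- iterated sup of the blocks -/
noncomputable def M (m : ℝ) : ℕ → Finset K → C(K, ℝ) → ℝ
  | 0, A, f => H m A f
  | j + 1, A, f => sSup (Set.range fun i : Option K => M m j (insI i A) f)

/-- facts about attained sup -/
theorem sup_att {g : Option K → ℝ} {m : ℝ} (hm : 0 < m) (f : C(K, ℝ))
    (hg : ∀ a, g (some a) ≤ g none + m * |jump a f|) :
    ∃ i, (∀ k, g k ≤ g i) ∧ ∀ a, i = some a → jump a f ≠ 0 := by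
  by_cases h : ∀ k, g k ≤ g none
  · exact ⟨none, h, by simp⟩
  · push Not at h
    obtain ⟨k, hk⟩ := h
    cases k with
    | none => exact absurd hk (lt_irrefl _)
    | some a =>
      have hpos : 0 < (g (some a) - g none) / (2 * m) := by
        apply div_pos <;> linarith
      have hfin := finite_jump f hpos
      have hbig : ∀ b, g (some a) ≤ g (some b) → (g (some a) - g none) / (2 * m) < |jump b f| := by
        intro b hb
        rw [div_lt_iff₀ (by positivity)]
        have := hg b
        nlinarith
      obtain ⟨b, hb, hmax⟩ := Set.exists_max_image _ (fun b => g (some b)) hfin ⟨a, hbig a le_rfl⟩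
      have hab : g (some a) ≤ g (some b) := hmax a (hbig a le_rfl)
      refine ⟨some b, fun k => ?_, ?_⟩
      · cases k with
        | none => linarith
        | some c =>
          by_contra hc
          push Not at hc
          have := hmax c (hbig c (hab.trans hc.le))
          linarith
      · intro c hc
        obtain rfl : b = c := by simpa using hc
        intro h0
        have hb' : (g (some a) - g none) / (2 * m) < |jump b f| := hb
        rw [h0, abs_zero] at hb'
        linarith

theorem insI_comm (i : Option K) (a : K) (A : Finset K) :
    insI i (insert a A) = insert a (insI i A) := by
  cases i with
  | none => rfl
  | some b => exact Finset.insert_comm b a A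

theorem M_insert {m : ℝ} (hm : 0 < m) (j : ℕ) : ∀ (A : Finset K) (a : K) (f : C(K, ℝ)),
    M m j (insert a A) f ≤ M m j A f + m * |jump a f| := by
  induction j with
  | zero => intro A a f; exact H_insert hm.le A a f
  | succ j ih =>
    intro A a f
    obtain ⟨i, hi, -⟩ := sup_att (g := fun i => M m j (insI i A) f) hm f (fun b => ih A b f)
    refine csSup_le (Set.range_nonempty _) ?_
    rintro _ ⟨k, rfl⟩
    simp only [insI_comm]
    refine (ih _ a f).trans ?_
    have : M m j (insI k A) f ≤ M m (j + 1) A f :=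
      le_csSup ⟨_, by rintro _ ⟨l, rfl⟩; exact hi l⟩ ⟨k, rfl⟩
    linarith

theorem M_att {m : ℝ} (hm : 0 < m) (j : ℕ) (A : Finset K) (f : C(K, ℝ)) :
    ∃ i, M m (j + 1) A f = M m j (insI i A) f ∧ ∀ a, i = some a → jump a f ≠ 0 := by
  obtain ⟨i, hi, h2⟩ := sup_att (g := fun i => M m j (insI i A) f) hm f
    (fun b => M_insert hm j A b f)
  exact ⟨i, IsGreatest.csSup_eq ⟨⟨i, rfl⟩, by rintro _ ⟨l, rfl⟩; exact hi l⟩, h2⟩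

theorem M_le {m : ℝ} (hm : 0 < m) (j : ℕ) (A : Finset K) (f : C(K, ℝ)) (i : Option K) :
    M m j (insI i A) f ≤ M m (j + 1) A f := by
  obtain ⟨k, hk, -⟩ := sup_att (g := fun i => M m j (insI i A) f) hm f
    (fun b => M_insert hm j A b f)
  exact le_csSup ⟨_, by rintro _ ⟨l, rfl⟩; exact hk l⟩ ⟨i, rfl⟩

theorem M_neg (m : ℝ) (j : ℕ) : ∀ (A : Finset K) (f : C(K, ℝ)), M m j A (-f) = M m j A f := by
  induction j with
  | zero => exact H_neg m
  | succ j ih => intro A f; simp only [M, ih]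

theorem M_lower {m : ℝ} (hm : 0 < m) (j : ℕ) (f : C(K, ℝ)) : ∀ (A : Finset K),
    4 * ‖f‖ ≤ M m j A f := by
  induction j with
  | zero => intro A; exact H_lower m A f
  | succ j ih => intro A; exact (ih A).trans (M_le hm j A f none)

theorem M_upper {m : ℝ} (hm : 0 < m) (j : ℕ) (A : Finset K) :
    ∃ C > (0 : ℝ), ∀ f : C(K, ℝ), M m j A f ≤ C * ‖f‖ := by
  induction j with
  | zero => exact H_upper hm.le A
  | succ j ih =>
    obtain ⟨C, hC, h⟩ := ih
    refine ⟨C + m * 2, by positivity, fun f => ?_⟩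
    obtain ⟨i, hi, -⟩ := M_att hm j A f
    rw [hi]
    have h0 : 0 ≤ m * (2 * ‖f‖) := by positivity
    cases i with
    | none => have := h f; simp only [insI, Option.elim]; linarith
    | some a =>
      have h1 := M_insert hm j A a f
      have h2 := mul_le_mul_of_nonneg_left (jump_abs_le a f) hm.le
      simp only [insI, Option.elim]
      linarith [h f]

theorem M_smb {m : ℝ} (hm : 0 < m) (j : ℕ) : ∀ A : Finset K, Smb (M m j A) := by
  induction j with
  | zero => exact H_smb m
  | succ j ih =>
    intro A
    obtain ⟨C, hC, hCu⟩ := M_upper (K := K) hm (j + 1) A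
    refine Smb.sup (ι := Option (K × Bool)) (fun i => M m j (insI (i.map Prod.fst) A))
      (fun i => ih _) (M m (j + 1) A) 4 C 2 (by norm_num) hC (by norm_num)
      (fun f => M_lower hm _ f A) hCu (fun i f => M_le hm j A f _)
      (fun i => i.elim 0 fun p => sg p.2 • jump p.1) (fun i => i.elim 1 fun _ => 0) ?_ ?_ ?_ ?_
    · intro i f
      cases i with
      | none => simp
      | some p =>
        have h1 := jump_abs_le p.1 f
        have h2 := sg_abs p.2 (jump p.1 f)
        simp only [Option.elim, ContinuousLinearMap.smul_apply, smul_eq_mul]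
        linarith
    · intro i
      cases i <;> simp
    · intro f r hr
      refine ((((finite_jump f hr).prod (Set.finite_univ (α := Bool))).image some).union
        (Set.finite_singleton none)).subset ?_
      intro i hi
      cases i with
      | none => right; rfl
      | some p =>
        left
        refine ⟨p, ⟨?_, trivial⟩, rfl⟩
        have h2 := sg_abs p.2 (jump p.1 f)
        simp only [Set.mem_setOf_eq, Option.elim, ContinuousLinearMap.smul_apply, smul_eq_mul,
          add_zero] at hi ⊢
        linarith
    · intro f _
      obtain ⟨i, hi, h2⟩ := M_att hm j A f
      cases i with
      | none => exact ⟨none, hi.symm, by simp⟩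
      | some a =>
        obtain ⟨σ, hσ⟩ := exists_sg (jump a f)
        refine ⟨some (a, σ), hi.symm, ?_⟩
        have := abs_pos.2 (h2 a rfl)
        simp only [Option.elim, ContinuousLinearMap.smul_apply, smul_eq_mul, add_zero]
        linarith

theorem H_le_M {m : ℝ} (hm : 0 < m) (j : ℕ) (f : C(K, ℝ)) : ∀ (A B : Finset K), B.card ≤ j →
    H m (A ∪ B) f ≤ M m j A f := by
  induction j with
  | zero =>
    intro A B hB
    have : B = ∅ := by simpa using hB
    subst this
    simp [M]
  | succ j ih =>
    intro A B hB
    rcases B.eq_empty_or_nonempty with rfl | ⟨b, hb⟩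
    · exact (ih A ∅ (by simp)).trans (M_le hm j A f none)
    · have h1 := ih (insert b A) (B.erase b) (by rw [Finset.card_erase_of_mem hb]; omega)
      have e : insert b A ∪ B.erase b = A ∪ B := by
        ext x; by_cases hx : x = b <;> simp [hx, hb]
      rw [e] at h1
      exact h1.trans (M_le hm j A f (some b))

theorem M_eq_H {m : ℝ} (hm : 0 < m) (j : ℕ) (f : C(K, ℝ)) : ∀ (A : Finset K),
    ∃ B : Finset K, B.card ≤ j ∧ M m j A f = H m (A ∪ B) f := by
  induction j with
  | zero => intro A; exact ⟨∅, by simp, by simp [M]⟩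
  | succ j ih =>
    intro A
    obtain ⟨i, hi, -⟩ := M_att hm j A f
    obtain ⟨B, hB, h⟩ := ih (insI i A)
    cases i with
    | none => exact ⟨B, by omega, hi.trans h⟩
    | some a =>
      refine ⟨insert a B, (Finset.card_insert_le _ _).trans (by omega), ?_⟩
      rw [hi, h]
      simp [insI]

end OrdC


set_option linter.unusedSectionVars false
set_option linter.deprecated false

namespace OrdC

variable {K : Type*} [LinearOrder K] [WellFoundedLT K] [SuccOrder K] [OrderBot K] [OrderTop K]
  [TopologicalSpace K] [OrderTopology K] [CompactSpace K]

theorem sum_gap (w : K → ℝ) (B : Finset K) {μ ν : ℝ} (hν : 0 ≤ ν) (hνμ : ν < μ)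
    (hB : ∀ a ∈ B, μ ≤ w a) (hB' : ∀ a ∉ B, w a ≤ ν) (A : Finset K) (hA : A.card ≤ B.card)
    (hne : A ≠ B) : ∑ a ∈ A, w a + (μ - ν) ≤ ∑ a ∈ B, w a := by
  have h1 := Finset.sum_inter_add_sum_sdiff A B w
  have h2 := Finset.sum_inter_add_sum_sdiff B A w
  rw [Finset.inter_comm] at h2
  have h3 : ∑ a ∈ A \ B, w a ≤ (A \ B).card * ν := by
    have := Finset.sum_le_card_nsmul (A \ B) w ν fun a ha => hB' a (Finset.mem_sdiff.1 ha).2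
    simpa using this
  have h4 : (B \ A).card * μ ≤ ∑ a ∈ B \ A, w a := by
    have := Finset.card_nsmul_le_sum (B \ A) w μ fun a ha => hB a (Finset.mem_sdiff.1 ha).1
    simpa using this
  have h5 : (A \ B).card ≤ (B \ A).card := by
    have e1 := Finset.card_sdiff_add_card_inter A B
    have e2 := Finset.card_sdiff_add_card_inter B A
    rw [Finset.inter_comm] at e2
    omega
  have h6 : 1 ≤ (B \ A).card := by
    rw [Nat.one_le_iff_ne_zero, Ne, Finset.card_eq_zero, Finset.sdiff_eq_empty_iff_subset]
    exact fun h => hne (Finset.eq_of_subset_of_card_le h hA).symm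
  have h5' : ((A \ B).card : ℝ) ≤ (B \ A).card := by exact_mod_cast h5
  have h6' : (1 : ℝ) ≤ (B \ A).card := by exact_mod_cast h6
  nlinarith

theorem exists_B (f : C(K, ℝ)) (A₀ : Finset K) (hA₀ : ∀ a ∈ A₀, jump a f ≠ 0) :
    ∃ (B : Finset K) (μ ν : ℝ), A₀ ⊆ B ∧ 0 ≤ ν ∧ ν < μ ∧ (∀ a ∈ B, μ ≤ jump a f ^ 2) ∧
      ∀ a ∉ B, jump a f ^ 2 ≤ ν := by
  classical
  have hμ : ∃ μ > (0 : ℝ), ∀ a ∈ A₀, μ ≤ |jump a f| := by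
    rcases A₀.eq_empty_or_nonempty with rfl | hne
    · exact ⟨1, one_pos, by simp⟩
    · obtain ⟨b, hb, hmin⟩ := Finset.exists_min_image A₀ (fun a => |jump a f|) hne
      exact ⟨|jump b f|, abs_pos.2 (hA₀ b hb), hmin⟩
  obtain ⟨μ, hμ, hA⟩ := hμ
  have hfin := finite_jump f (half_pos hμ)
  let F := hfin.toFinset
  have hF : ∀ a, a ∈ F ↔ μ / 2 < |jump a f| := fun a => hfin.mem_toFinset
  let B := F.filter fun a => μ ≤ |jump a f|
  have hν : ∃ ν, 0 ≤ ν ∧ ν < μ ∧ ∀ a ∉ B, |jump a f| ≤ ν := by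
    rcases (F \ B).eq_empty_or_nonempty with he | hne
    · refine ⟨μ / 2, by positivity, by linarith, fun a ha => ?_⟩
      by_contra hc
      have : a ∈ F \ B := Finset.mem_sdiff.2 ⟨(hF a).2 (not_le.1 hc), ha⟩
      rw [he] at this
      simp at this
    · obtain ⟨b, hb, hmax⟩ := Finset.exists_max_image _ (fun a => |jump a f|) hne
      have hb1 := Finset.mem_sdiff.1 hb
      have hb2 := (hF b).1 hb1.1
      refine ⟨|jump b f|, abs_nonneg _, ?_, fun a ha => ?_⟩
      · by_contra hc
        exact hb1.2 (Finset.mem_filter.2 ⟨hb1.1, not_lt.1 hc⟩)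
      · by_cases hc : a ∈ F
        · exact hmax a (Finset.mem_sdiff.2 ⟨hc, ha⟩)
        · rw [hF, not_lt] at hc
          linarith
  obtain ⟨ν, h0, h1, h2⟩ := hν
  refine ⟨B, μ ^ 2, ν ^ 2, fun a ha => ?_, by positivity, ?_, fun a ha => ?_, fun a ha => ?_⟩
  · exact Finset.mem_filter.2 ⟨(hF a).2 (by linarith [hA a ha]), hA a ha⟩
  · exact pow_lt_pow_left₀ h1 h0 (by norm_num)
  · rw [← sq_abs (jump a f)]
    exact pow_le_pow_left₀ hμ.le (Finset.mem_filter.1 ha).2 2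
  · rw [← sq_abs (jump a f)]
    exact pow_le_pow_left₀ (abs_nonneg _) (h2 a ha) 2

/-- choice of the weight -/
theorem exists_m (f : C(K, ℝ)) (B : Finset K) {μ ν : ℝ} (hν : 0 ≤ ν) (hνμ : ν < μ)
    (hB : ∀ a ∈ B, μ ≤ jump a f ^ 2) (hB' : ∀ a ∉ B, jump a f ^ 2 ≤ ν) :
    ∃ m : ℕ, ∀ A : Finset K, A.card ≤ B.card → A ≠ B →
      H ((m : ℝ) + 1) A f ^ 2 ≤ H ((m : ℝ) + 1) B f ^ 2 - 1 := by
  obtain ⟨m, hm⟩ := exists_nat_gt ((37 * ‖f‖ ^ 2 + 1) / (μ - ν))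
  refine ⟨m, fun A hA hne => ?_⟩
  have hgap := sum_gap (fun a => jump a f ^ 2) B hν hνμ hB hB' A hA hne
  rw [div_lt_iff₀ (by linarith)] at hm
  rw [H_sq, H_sq]
  simp only [mul_pow, ← Finset.mul_sum]
  have h1 := osc_le A f
  have h0 := osc_nonneg A f
  have h3 := pow_le_pow_left₀ (by positivity)
      (show 4 * ‖f‖ + osc A f ≤ 6 * ‖f‖ by linarith) 2
  have hmm : (m : ℝ) ≤ ((m : ℝ) + 1) ^ 2 := by nlinarith [(Nat.cast_nonneg m : (0 : ℝ) ≤ m)]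
  have h4 := mul_le_mul_of_nonneg_left hgap (sq_nonneg ((m : ℝ) + 1))
  have h5 := mul_le_mul_of_nonneg_right hmm (show 0 ≤ μ - ν by linarith)
  nlinarith [sq_nonneg (4 * ‖f‖ + osc B f), sq_nonneg ‖f‖]

theorem lur_H {m : ℝ} (hm : 0 < m) (f : C(K, ℝ)) (fr : ℕ → C(K, ℝ)) (B : Finset K)
    (hgap : ∀ A : Finset K, A.card ≤ B.card → A ≠ B → H m A f ^ 2 ≤ H m B f ^ 2 - 1)
    (h1 : Tendsto (fun r => M m B.card ∅ (fr r)) atTop (𝓝 (M m B.card ∅ f)))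
    (h2 : Tendsto (fun r => M m B.card ∅ (fr r + f)) atTop (𝓝 (2 * M m B.card ∅ f))) :
    Tendsto (fun r => H m B (fr r)) atTop (𝓝 (H m B f)) ∧
      Tendsto (fun r => H m B (fr r + f)) atTop (𝓝 (2 * H m B f)) := by
  have hle : ∀ (A : Finset K) g, A.card ≤ B.card → H m A g ≤ M m B.card ∅ g := by
    intro A g hA
    simpa using H_le_M hm B.card g ∅ A hA
  have heq : ∀ g : C(K, ℝ), ∃ A : Finset K, A.card ≤ B.card ∧ M m B.card ∅ g = H m A g := by
    intro g
    obtain ⟨A, hA, h⟩ := M_eq_H hm B.card g ∅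
    exact ⟨A, hA, by simpa using h⟩
  have hHB : M m B.card ∅ f = H m B f := by
    obtain ⟨A, hA, h⟩ := heq f
    by_cases hAB : A = B
    · rw [h, hAB]
    · have h3 := hgap A hA hAB
      have h4 := hle B f le_rfl
      rw [h] at h4
      have := pow_le_pow_left₀ (H_nonneg m B f) h4 2
      linarith
  rw [hHB] at h1 h2
  choose A hA hAe using fun r => heq (fr r + f)
  have hsub : ∀ (A : Finset K) (g h : C(K, ℝ)), H m A (g + h) ≤ H m A g + H m A h :=
    fun A => (H_smb m A).1.1
  have hev : ∀ᶠ r in atTop, A r = B := by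
    have hlim : Tendsto (fun r => M m B.card ∅ (fr r + f) - M m B.card ∅ (fr r)) atTop
        (𝓝 (2 * H m B f - H m B f)) := h2.sub h1
    by_cases hpos : H m B f = 0
    · refine Eventually.of_forall fun r => ?_
      by_contra hne
      have := hgap (A r) (hA r) hne
      rw [hpos] at this
      nlinarith [sq_nonneg (H m (A r) f)]
    · have hpos' : 0 < H m B f := lt_of_le_of_ne (H_nonneg m B f) (Ne.symm hpos)
      have hδ : 0 < 1 / (2 * H m B f) := by positivity
      filter_upwards [hlim.eventually (lt_mem_nhds
        (show H m B f - 1 / (2 * H m B f) < 2 * H m B f - H m B f by linarith))] with r hr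
      by_contra hne
      have h3 := hgap (A r) (hA r) hne
      have h4 : M m B.card ∅ (fr r + f) ≤ M m B.card ∅ (fr r) + H m (A r) f := by
        rw [hAe]
        linarith [hsub (A r) (fr r) f, hle (A r) (fr r) (hA r)]
      have h5 : H m B f - 1 / (2 * H m B f) < H m (A r) f := by linarith
      have h6 : H m B f * (1 / (2 * H m B f)) = 1 / 2 := by field_simp
      have h7 := H_nonneg m (A r) f
      have h8 : H m (A r) f < H m B f := by
        by_contra hc
        have := pow_le_pow_left₀ hpos'.le (not_lt.1 hc) 2
        linarith
      nlinarith
  have hsum : Tendsto (fun r => H m B (fr r + f)) atTop (𝓝 (2 * H m B f)) := by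
    refine h2.congr' ?_
    filter_upwards [hev] with r hr
    rw [hAe, hr]
  refine ⟨?_, hsum⟩
  have hlow : Tendsto (fun r => H m B (fr r + f) - H m B f) atTop (𝓝 (H m B f)) := by
    have := hsum.sub_const (H m B f)
    rwa [show 2 * H m B f - H m B f = H m B f by ring] at this
  exact tendsto_of_tendsto_of_tendsto_of_le_of_le hlow h1
    (fun r => by have := hsub B (fr r) f; simp only; linarith)
    (fun r => hle B _ le_rfl)

theorem tendsto_of_sq_le {x : ℕ → ℝ} {c : ℝ} {b : ℕ → ℝ} (h : ∀ r, (x r - c) ^ 2 ≤ b r)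
    (hb : Tendsto b atTop (𝓝 0)) : Tendsto x atTop (𝓝 c) := by
  have h3 : Tendsto (fun r => (x r - c) ^ 2) atTop (𝓝 0) :=
    squeeze_zero (fun _ => sq_nonneg _) h hb
  rw [tendsto_iff_norm_sub_tendsto_zero]
  have := h3.sqrt
  simpa [Real.sqrt_sq_eq_abs] using this

theorem lur_parts {m : ℝ} (hm : 0 < m) (f : C(K, ℝ)) (fr : ℕ → C(K, ℝ)) (B : Finset K)
    (h1 : Tendsto (fun r => H m B (fr r)) atTop (𝓝 (H m B f)))
    (h2 : Tendsto (fun r => H m B (fr r + f)) atTop (𝓝 (2 * H m B f))) :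
    Tendsto (fun r => 4 * ‖fr r‖ + osc B (fr r)) atTop (𝓝 (4 * ‖f‖ + osc B f)) ∧
    Tendsto (fun r => fr r ⊥) atTop (𝓝 (f ⊥)) ∧
    ∀ b ∈ B, Tendsto (fun r => jump b (fr r)) atTop (𝓝 (jump b f)) := by
  have hbr : Tendsto (fun r => 2 * H m B (fr r) ^ 2 + 2 * H m B f ^ 2 - H m B (fr r + f) ^ 2)
      atTop (𝓝 0) := by
    have := (((h1.pow 2).const_mul 2).add_const (2 * H m B f ^ 2)).sub (h2.pow 2)
    rwa [show 2 * H m B f ^ 2 + 2 * H m B f ^ 2 - (2 * H m B f) ^ 2 = 0 by ring] at this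
  have key : ∀ r, (4 * ‖fr r‖ + osc B (fr r) - (4 * ‖f‖ + osc B f)) ^ 2 +
      (fr r ⊥ - f ⊥) ^ 2 + ∑ b ∈ B, (m * (jump b (fr r) - jump b f)) ^ 2 ≤
      2 * H m B (fr r) ^ 2 + 2 * H m B f ^ 2 - H m B (fr r + f) ^ 2 := by
    intro r
    rw [H_sq, H_sq, H_sq]
    have e1 : ∑ b ∈ B, (m * (jump b (fr r) - jump b f)) ^ 2 =
        2 * ∑ b ∈ B, (m * jump b (fr r)) ^ 2 + 2 * ∑ b ∈ B, (m * jump b f) ^ 2 -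
          ∑ b ∈ B, (m * jump b (fr r + f)) ^ 2 := by
      rw [Finset.mul_sum, Finset.mul_sum, ← Finset.sum_add_distrib, ← Finset.sum_sub_distrib]
      refine Finset.sum_congr rfl fun b _ => ?_
      rw [map_add]; ring
    have e2 : (fr r ⊥ - f ⊥) ^ 2 = 2 * fr r ⊥ ^ 2 + 2 * f ⊥ ^ 2 - (fr r + f) ⊥ ^ 2 := by
      rw [ContinuousMap.add_apply]; ring
    have h3 := (smb_osc B).1.1 (fr r) f
    have h0 : 0 ≤ 4 * ‖fr r + f‖ + osc B (fr r + f) := by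
      have := osc_nonneg B (fr r + f); positivity
    have h4 := pow_le_pow_left₀ h0 h3 2
    rw [e1, e2]
    nlinarith
  have hs : ∀ r, 0 ≤ ∑ b ∈ B, (m * (jump b (fr r) - jump b f)) ^ 2 := fun r =>
    Finset.sum_nonneg fun _ _ => sq_nonneg _
  refine ⟨tendsto_of_sq_le (fun r => ?_) hbr, tendsto_of_sq_le (fun r => ?_) hbr,
    fun b hb => ?_⟩
  · have := key r; have := hs r
    linarith [sq_nonneg (fr r ⊥ - f ⊥)]
  · have := key r; have := hs r
    linarith [sq_nonneg (4 * ‖fr r‖ + osc B (fr r) - (4 * ‖f‖ + osc B f))]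
  · have hT : Tendsto (fun r => m * jump b (fr r)) atTop (𝓝 (m * jump b f)) := by
      refine tendsto_of_sq_le (fun r => ?_) hbr
      have h3 := key r
      have h4 : (m * (jump b (fr r) - jump b f)) ^ 2 ≤
          ∑ b ∈ B, (m * (jump b (fr r) - jump b f)) ^ 2 :=
        Finset.single_le_sum (f := fun b => (m * (jump b (fr r) - jump b f)) ^ 2)
          (fun _ _ => sq_nonneg _) hb
      rw [← mul_sub]
      nlinarith [sq_nonneg (4 * ‖fr r‖ + osc B (fr r) - (4 * ‖f‖ + osc B f)),
        sq_nonneg (fr r ⊥ - f ⊥)]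
    have := hT.const_mul m⁻¹
    simpa [inv_mul_cancel_left₀ hm.ne'] using this

theorem conv_of_parts (f : C(K, ℝ)) (fr : ℕ → C(K, ℝ))
    (h0 : Tendsto (fun r => fr r ⊥) atTop (𝓝 (f ⊥)))
    (h : ∀ ε > (0 : ℝ), ∃ B : Finset K, osc B f ≤ ε ∧ (∀ᶠ r in atTop, osc B (fr r) ≤ ε) ∧
      ∀ b ∈ B, Tendsto (fun r => jump b (fr r)) atTop (𝓝 (jump b f))) :
    Tendsto (fun r => ‖fr r - f‖) atTop (𝓝 0) := by
  classical
  have hest : ∀ (B : Finset K) (g : C(K, ℝ)) (t ρ : K) (ε : ℝ), Eqv B t ρ → osc B f ≤ ε →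
      osc B g ≤ ε → |g t - f t| ≤ |g ρ - f ρ| + 2 * ε := by
    intro B g t ρ ε hE h1 h2
    have a1 := le_osc f hE
    have a2 := le_osc f hE.symm
    have a3 := le_osc g hE
    have a4 := le_osc g hE.symm
    have a5 := abs_le.1 (le_refl |g ρ - f ρ|)
    rw [abs_le]
    constructor <;> linarith
  have hpt : ∀ t, Tendsto (fun r => fr r t) atTop (𝓝 (f t)) := by
    intro t
    induction t using WellFoundedLT.induction with
    | ind t ih =>
      rw [Metric.tendsto_atTop']
      intro ε hε
      obtain ⟨B, hB1, hB2, hB3⟩ := h (ε / 4) (by positivity)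
      obtain ⟨ρ, hE, hρ⟩ := exists_rep B t
      have hρt : Tendsto (fun r => fr r ρ) atTop (𝓝 (f ρ)) := by
        rcases hρ with rfl | ⟨b, hb, hbt, rfl⟩
        · exact h0
        · have := (hB3 b hb).add (ih b hbt)
          simpa [jump_apply] using this
      have hρ' := hρt.eventually (Metric.ball_mem_nhds (f ρ) (show 0 < ε / 2 by positivity))
      obtain ⟨N, hN⟩ := eventually_atTop.1 (hρ'.and hB2)
      refine ⟨N, fun r hr => ?_⟩
      obtain ⟨h3, h4⟩ := hN r hr.le
      rw [Real.dist_eq]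
      have h5 := hest B (fr r) t ρ _ hE hB1 h4
      rw [Real.dist_eq] at h3
      linarith
  rw [Metric.tendsto_atTop']
  intro ε hε
  obtain ⟨B, hB1, hB2, hB3⟩ := h (ε / 8) (by positivity)
  let R : Finset K := insert ⊥ (B.image Order.succ)
  have hR : ∀ᶠ r in atTop, ∀ ρ ∈ R, |fr r ρ - f ρ| < ε / 2 := by
    rw [Finset.eventually_all]
    intro ρ _
    have hρ' := (hpt ρ).eventually (Metric.ball_mem_nhds (f ρ) (show 0 < ε / 2 by positivity))
    filter_upwards [hρ'] with r hr
    rwa [Real.dist_eq] at hr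
  obtain ⟨N, hN⟩ := eventually_atTop.1 (hR.and hB2)
  refine ⟨N, fun r hr => ?_⟩
  obtain ⟨h3, h4⟩ := hN r hr.le
  have h6 : ‖fr r - f‖ ≤ ε / 2 + 2 * (ε / 8) := by
    refine (ContinuousMap.norm_le _ (by positivity)).2 fun t => ?_
    obtain ⟨ρ, hE, hρ⟩ := exists_rep B t
    have hρR : ρ ∈ R := by
      rcases hρ with rfl | ⟨b, hb, -, rfl⟩
      · simp [R]
      · exact Finset.mem_insert_of_mem (Finset.mem_image_of_mem _ hb)
    have h5 := hest B (fr r) t ρ _ hE hB1 h4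
    have := h3 ρ hρR
    rw [ContinuousMap.sub_apply, Real.norm_eq_abs]
    linarith
  rw [Real.dist_eq, sub_zero, abs_of_nonneg (norm_nonneg _)]
  linarith

/-- the family of norms -/
noncomputable def fam : ℕ → C(K, ℝ) → ℝ
  | 0, f => ‖f‖
  | j + 1, f => M ((j.unpair.1 : ℝ) + 1) j.unpair.2 ∅ f

theorem main : ∃ N : C(K, ℝ) → ℝ, IsEquivNorm N ∧ IsCkSmoothNorm 1 N ∧ IsLUR N ∧
      IsUniformLimitOfCkSmoothNorms ((⊤ : ℕ∞) : WithTop ℕ∞) N := by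
  have hp : ∀ n : ℕ, (0 : ℝ) < (n : ℝ) + 1 := fun n => by positivity
  refine renorm_of_family fam ?_ ?_ ?_ ?_ ?_
  · intro j
    cases j with
    | zero => exact smb_norm
    | succ j => exact M_smb (hp _) _ _
  · intro j f
    cases j with
    | zero => exact norm_neg f
    | succ j => exact M_neg _ _ _ _
  · intro j
    cases j with
    | zero => exact ⟨1, one_pos, fun f => by simp [fam]⟩
    | succ j => exact ⟨4, by norm_num, fun f => M_lower (hp _) _ _ _⟩
  · intro j
    cases j with
    | zero => exact ⟨1, one_pos, fun f => by simp [fam]⟩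
    | succ j => exact M_upper (hp _) _ _
  · intro f fr _ hT
    have hn : Tendsto (fun r => ‖fr r‖) atTop (𝓝 ‖f‖) := (hT 0).1
    have step : ∀ ε > (0 : ℝ), ∃ B : Finset K, osc B f ≤ ε ∧
        Tendsto (fun r => 4 * ‖fr r‖ + osc B (fr r)) atTop (𝓝 (4 * ‖f‖ + osc B f)) ∧
        Tendsto (fun r => fr r ⊥) atTop (𝓝 (f ⊥)) ∧
        ∀ b ∈ B, Tendsto (fun r => jump b (fr r)) atTop (𝓝 (jump b f)) := by
      intro ε hε
      obtain ⟨A₀, hA1, hA2⟩ := greedy f (half_pos hε)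
      obtain ⟨B, μ, ν, hsub, hν, hνμ, hB, hB'⟩ := exists_B f A₀ hA1
      obtain ⟨m, hm⟩ := exists_m f B hν hνμ hB hB'
      have hj := hT (Nat.pair m B.card + 1)
      simp only [fam, Nat.unpair_pair] at hj
      obtain ⟨h1, h2⟩ := lur_H (hp m) f fr B hm hj.1 hj.2
      refine ⟨B, ?_, lur_parts (hp m) f fr B h1 h2⟩
      obtain ⟨s, t, hst, e⟩ := osc_att B f
      rw [← e]
      have := (abs_le.1 (hA2 s t (hst.mono hsub))).2
      linarith
    refine conv_of_parts f fr ?_ fun ε hε => ?_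
    · obtain ⟨B, -, -, h, -⟩ := step 1 one_pos
      exact h
    · obtain ⟨B, h1, h2, -, h3⟩ := step (ε / 2) (half_pos hε)
      refine ⟨B, by linarith, ?_, h3⟩
      have h4 : Tendsto (fun r => osc B (fr r)) atTop (𝓝 (osc B f)) := by
        have := h2.sub (hn.const_mul 4)
        simpa using this
      filter_upwards [h4.eventually (gt_mem_nhds (show osc B f < ε by linarith))] with r hr
      exact hr.le

end OrdC

/-- **Hájek–Procházka, Corollary 3.2.** For every ordinal `α`, the Banach space `C([0, α])`
of continuous real functions on the compact ordinal interval `[0, α]`, with the supremum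
norm, admits an equivalent norm which is `C¹`-smooth, LUR, and a limit, uniform on bounded
sets, of `C^∞`-smooth norms. -/
theorem renorming_of_continuous_functions_on_ordinal_interval (α : Ordinal) :
    ∃ N : C(Set.Iic α, ℝ) → ℝ, IsEquivNorm N ∧ IsCkSmoothNorm 1 N ∧ IsLUR N ∧
      IsUniformLimitOfCkSmoothNorms ((⊤ : ℕ∞) : WithTop ℕ∞) N := by
  let _ : SuccOrder (Set.Iic α) := SuccOrder.ofLinearWellFoundedLT (Set.Iic α)
  have : OrderTopology (Set.Iic α) := orderTopology_of_ordConnected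
  exact OrdC.main
end

section
/- Fix 0 < η < 1 and a function φ_η : [0,∞) → [0,∞) which is convex, C^∞-smooth, strictly convex on [1−η,∞), with φ_η([0,1−η]) = {0} and φ_η(1) = 1. Define Φ_η(x) = Σ_{γ∈Γ} φ_η(|x(γ)|) and let Z_η be the Minkowski functional of C = {x ∈ ℓ∞(Γ) : Φ_η(x) < 1/2}. Then Z_η is a strongly lattice seminorm on ℓ∞(Γ) with (1−η)Z_η(x) ≤ ‖x‖∞ for all x, and on the set A_η(Γ) := {x ∈ ℓ∞(Γ) : ⌊x⌋ < (1−η)‖x‖∞} the function Z_η is strictly positive, C^∞-Fréchet smooth, and locally depends on finitely many coordinates; moreover (1−η)Z_η(x) < ‖x‖∞ for all x ∈ A_η(Γ). -/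
open Filter Topology
open scoped ENNReal

/-- `f` locally depends on finitely many coordinates at `x`: on some neighborhood of `x`,
`f` factors through the restriction to a finite set of coordinates. -/
def LFCAt {Γ : Type*} (f : lp (fun _ : Γ => ℝ) ∞ → ℝ) (x : lp (fun _ : Γ => ℝ) ∞) : Prop :=
  ∃ U ∈ 𝓝 x, ∃ M : Finset Γ, ∃ g : (M → ℝ) → ℝ, ∀ y ∈ U, f y = g fun γ => y ↑γ

/-- `f : ℓ∞(Γ) → ℝ` is strongly lattice: `f x ≤ f y` whenever `|x γ| ≤ |y γ|` for all `γ`. -/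
def StronglyLattice {Γ : Type*} (f : lp (fun _ : Γ => ℝ) ∞ → ℝ) : Prop :=
  ∀ x y : lp (fun _ : Γ => ℝ) ∞, (∀ γ : Γ, |x γ| ≤ |y γ|) → f x ≤ f y

/-- `⌊x⌋ = inf {t ≥ 0 : {γ : |x γ| > t} is finite}`. -/
noncomputable def ftop {Γ : Type*} (x : lp (fun _ : Γ => ℝ) ∞) : ℝ :=
  sInf {t : ℝ | 0 ≤ t ∧ {γ : Γ | t < |x γ|}.Finite}

/-- `Φ_η(x) = ∑_{γ ∈ Γ} φ_η(|x γ|)`, computed in `[0, ∞]`. -/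
noncomputable def PhiSum {Γ : Type*} (φ : ℝ → ℝ) (x : lp (fun _ : Γ => ℝ) ∞) : ℝ≥0∞ :=
  ∑' γ : Γ, ENNReal.ofReal (φ |x γ|)

/-- The Minkowski functional `Z_η` of the set `{x : Φ_η(x) < 1/2}`. -/
noncomputable def Zeta {Γ : Type*} (φ : ℝ → ℝ) : lp (fun _ : Γ => ℝ) ∞ → ℝ :=
  gauge {x | PhiSum φ x < 1 / 2}

/-- The set `A_η(Γ) = {x ∈ ℓ∞(Γ) : ⌊x⌋ < (1-η) ‖x‖∞}`. -/
def Aeta (Γ : Type*) (η : ℝ) : Set (lp (fun _ : Γ => ℝ) ∞) :=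
  {x | ftop x < (1 - η) * ‖x‖}

/-- `φ` is (the extension to `ℝ` of) one of the functions `φ_η`: convex, `C^∞`-smooth,
strictly convex on `[1-η, ∞)`, vanishing on `(-∞, 1-η]`, non-negative on `[0,∞)`, and
with `φ(1) = 1`. -/
def IsPhiEta (η : ℝ) (φ : ℝ → ℝ) : Prop :=
  ContDiff ℝ ((⊤ : ℕ∞) : WithTop ℕ∞) φ ∧ (∀ t : ℝ, 0 ≤ t → 0 ≤ φ t) ∧
    ConvexOn ℝ (Set.Ici 0) φ ∧ StrictConvexOn ℝ (Set.Ici (1 - η)) φ ∧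
    (∀ t : ℝ, t ≤ 1 - η → φ t = 0) ∧ φ 1 = 1

/-- Coordinate evaluation as a continuous linear map. -/
noncomputable def evZ {Γ : Type*} (γ : Γ) : lp (fun _ : Γ => ℝ) ∞ →L[ℝ] ℝ :=
  LinearMap.mkContinuous
    { toFun := fun x => x γ
      map_add' := fun x y => by simp
      map_smul' := fun c x => by simp } 1 (fun x => by
        rw [one_mul]
        exact lp.norm_apply_le_norm ENNReal.top_ne_zero x γ)

theorem evZ_apply {Γ : Type*} (γ : Γ) (x : lp (fun _ : Γ => ℝ) ∞) : evZ γ x = x γ := rfl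

theorem abs_apply_le {Γ : Type*} (x : lp (fun _ : Γ => ℝ) ∞) (γ : Γ) : |x γ| ≤ ‖x‖ :=
  lp.norm_apply_le_norm ENNReal.top_ne_zero x γ

theorem phi_scale {η : ℝ} {φ : ℝ → ℝ} (hη1 : η < 1) (hφ : IsPhiEta η φ)
    {c t : ℝ} (hc0 : 0 ≤ c) (hc1 : c ≤ 1) (ht : 0 ≤ t) : φ (c * t) ≤ c * φ t := by
  obtain ⟨-, -, hcv, -, h0, -⟩ := hφ
  have := hcv.2 (x := t) ht (y := 0) (Set.mem_Ici.2 le_rfl) hc0 (sub_nonneg.2 hc1) (by ring)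
  simpa [h0 0 (by linarith)] using this

theorem phi_mono {η : ℝ} {φ : ℝ → ℝ} (hη1 : η < 1) (hφ : IsPhiEta η φ)
    {s t : ℝ} (hs : 0 ≤ s) (hst : s ≤ t) : φ s ≤ φ t := by
  have ht : 0 ≤ t := hs.trans hst
  rcases ht.eq_or_lt with h | h
  · have : s = t := by linarith
    rw [this]
  · have h1 : s / t ≤ 1 := (div_le_one h).2 hst
    have := phi_scale hη1 hφ (div_nonneg hs ht) h1 ht
    rw [div_mul_cancel₀ _ h.ne'] at this
    exact this.trans (mul_le_of_le_one_left (hφ.2.1 t ht) h1)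

theorem phi_abs {η : ℝ} {φ : ℝ → ℝ} (hη1 : η < 1) (hφ : IsPhiEta η φ) (t : ℝ) :
    φ |t| = φ t + φ (-t) := by
  obtain ⟨-, -, -, -, h0, -⟩ := hφ
  rcases le_total 0 t with h | h
  · rw [abs_of_nonneg h, h0 (-t) (by linarith), add_zero]
  · rw [abs_of_nonpos h, h0 t (by linarith), zero_add]

theorem PhiSum_mono {Γ : Type*} {η : ℝ} {φ : ℝ → ℝ} (hη1 : η < 1) (hφ : IsPhiEta η φ)
    {x y : lp (fun _ : Γ => ℝ) ∞} (h : ∀ γ, |x γ| ≤ |y γ|) : PhiSum φ x ≤ PhiSum φ y :=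
  ENNReal.tsum_le_tsum fun γ =>
    ENNReal.ofReal_le_ofReal (phi_mono hη1 hφ (abs_nonneg _) (h γ))

theorem PhiSum_smul_le {Γ : Type*} {η : ℝ} {φ : ℝ → ℝ} (hη1 : η < 1) (hφ : IsPhiEta η φ)
    {c : ℝ} (hc0 : 0 ≤ c) (hc1 : c ≤ 1)
    (x : lp (fun _ : Γ => ℝ) ∞) : PhiSum φ (c • x) ≤ ENNReal.ofReal c * PhiSum φ x := by
  unfold PhiSum
  rw [← ENNReal.tsum_mul_left]
  refine ENNReal.tsum_le_tsum fun γ => ?_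
  rw [← ENNReal.ofReal_mul hc0]
  refine ENNReal.ofReal_le_ofReal ?_
  have := phi_scale hη1 hφ hc0 hc1 (abs_nonneg (x γ))
  simpa [abs_mul, abs_of_nonneg hc0] using this

theorem PhiSum_finset {Γ : Type*} {η : ℝ} {φ : ℝ → ℝ} (hφ : IsPhiEta η φ)
    (F : Finset Γ) (x : lp (fun _ : Γ => ℝ) ∞) (h : ∀ γ ∉ F, |x γ| ≤ 1 - η) :
    PhiSum φ x = ENNReal.ofReal (∑ γ ∈ F, φ |x γ|) := by
  unfold PhiSum
  rw [ENNReal.ofReal_sum_of_nonneg (fun γ _ => hφ.2.1 _ (abs_nonneg _))]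
  refine tsum_eq_sum fun γ hγ => ?_
  rw [hφ.2.2.2.2.1 _ (h γ hγ), ENNReal.ofReal_zero]

theorem ball_subset {Γ : Type*} {η : ℝ} {φ : ℝ → ℝ} (hφ : IsPhiEta η φ) :
    Metric.ball (0 : lp (fun _ : Γ => ℝ) ∞) (1 - η) ⊆ {x | PhiSum φ x < 1 / 2} := by
  intro x hx
  have hx' : ‖x‖ < 1 - η := by simpa using hx
  have := PhiSum_finset hφ ∅ x (fun γ _ => (abs_apply_le x γ).trans hx'.le)
  simp only [Set.mem_ofPred_eq, this]
  simp

theorem absorb {Γ : Type*} {η : ℝ} {φ : ℝ → ℝ} (hη1 : η < 1) (hφ : IsPhiEta η φ) :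
    Absorbent ℝ {x : lp (fun _ : Γ => ℝ) ∞ | PhiSum φ x < 1 / 2} :=
  (absorbent_ball_zero (sub_pos.2 hη1)).mono (ball_subset hφ)

theorem convex_sublevel {Γ : Type*} {η : ℝ} {φ : ℝ → ℝ} (hη1 : η < 1) (hφ : IsPhiEta η φ) :
    Convex ℝ {x : lp (fun _ : Γ => ℝ) ∞ | PhiSum φ x < 1 / 2} := by
  intro x hx y hy s t hs ht hst
  have hx' : PhiSum φ x < 1 / 2 := hx
  have hy' : PhiSum φ y < 1 / 2 := hy
  have key : PhiSum φ (s • x + t • y) ≤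
      ENNReal.ofReal s * PhiSum φ x + ENNReal.ofReal t * PhiSum φ y := by
    unfold PhiSum
    rw [← ENNReal.tsum_mul_left, ← ENNReal.tsum_mul_left, ← ENNReal.tsum_add]
    refine ENNReal.tsum_le_tsum fun γ => ?_
    have h1 := hφ.2.1 _ (abs_nonneg (x γ))
    have h2 := hφ.2.1 _ (abs_nonneg (y γ))
    rw [← ENNReal.ofReal_mul hs, ← ENNReal.ofReal_mul ht,
      ← ENNReal.ofReal_add (by positivity) (by positivity)]
    refine ENNReal.ofReal_le_ofReal ?_
    have h3 := hφ.2.2.1.2 (x := |x γ|) (Set.mem_Ici.2 (abs_nonneg _))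
      (y := |y γ|) (Set.mem_Ici.2 (abs_nonneg _)) hs ht hst
    refine le_trans (phi_mono hη1 hφ (abs_nonneg _) ?_) h3
    have := abs_add_le (s * x γ) (t * y γ)
    rw [abs_mul, abs_mul, abs_of_nonneg hs, abs_of_nonneg ht] at this
    exact this
  refine lt_of_le_of_lt key ?_
  set m := max (PhiSum φ x) (PhiSum φ y) with hm
  have hm2 : m < 1 / 2 := max_lt hx' hy'
  calc _ ≤ ENNReal.ofReal s * m + ENNReal.ofReal t * m := by
        gcongr
        · exact le_max_left _ _
        · exact le_max_right _ _
    _ = m := by rw [← add_mul, ← ENNReal.ofReal_add hs ht, hst]; simp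
    _ < _ := hm2

theorem Zeta_lattice {Γ : Type*} {η : ℝ} {φ : ℝ → ℝ} (hη1 : η < 1) (hφ : IsPhiEta η φ) :
    StronglyLattice (Zeta (Γ := Γ) φ) := by
  intro x y h
  unfold Zeta
  rw [gauge_def', gauge_def']
  refine csInf_le_csInf ⟨0, fun r hr => le_of_lt hr.1⟩ ?_ ?_
  · have := (absorb (Γ := Γ) hη1 hφ).gauge_set_nonempty (x := y)
    obtain ⟨r, hr, hr'⟩ := this
    exact ⟨r, hr, (Set.mem_smul_set_iff_inv_smul_mem₀ (ne_of_gt hr) _ _).1 hr'⟩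
  · rintro r ⟨hr, hr'⟩
    refine ⟨hr, lt_of_le_of_lt (PhiSum_mono hη1 hφ fun γ => ?_) hr'⟩
    have : |r⁻¹| * |x γ| ≤ |r⁻¹| * |y γ| := 
      mul_le_mul_of_nonneg_left (h γ) (abs_nonneg _)
    simpa [abs_mul] using this

theorem Zeta_smul {Γ : Type*} {η : ℝ} {φ : ℝ → ℝ} (hη1 : η < 1) (hφ : IsPhiEta η φ)
    (c : ℝ) (x : lp (fun _ : Γ => ℝ) ∞) : Zeta φ (c • x) = |c| * Zeta φ x := by
  have h1 : Zeta φ (|c| • x) = |c| * Zeta φ x := by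
    unfold Zeta
    rw [gauge_smul_of_nonneg (abs_nonneg c), smul_eq_mul]
  rw [← h1]
  apply le_antisymm <;> refine Zeta_lattice hη1 hφ _ _ fun γ => ?_ <;> simp [abs_mul]

theorem Zeta_eq {Γ : Type*} {η : ℝ} {φ : ℝ → ℝ} (hη1 : η < 1) (hφ : IsPhiEta η φ)
    {x : lp (fun _ : Γ => ℝ) ∞} {l : ℝ} (hl : 0 < l) (h : PhiSum φ (l⁻¹ • x) = 1 / 2) :
    Zeta φ x = l := by
  unfold Zeta
  rw [gauge_def']
  have hup : ∀ r, l < r → r ∈ {r ∈ Set.Ioi (0 : ℝ) | r⁻¹ • x ∈ {x | PhiSum φ x < 1 / 2}} := by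
    intro r hr
    have hr0 : 0 < r := hl.trans hr
    refine ⟨hr0, ?_⟩
    have e : r⁻¹ • x = (l / r) • (l⁻¹ • x) := by
      rw [smul_smul]; congr 1; field_simp
    have hlr : l / r < 1 := (div_lt_one hr0).2 hr
    have h2 := PhiSum_smul_le hη1 hφ (by positivity) hlr.le (l⁻¹ • x)
    rw [← e, h] at h2
    refine lt_of_le_of_lt h2 ?_
    have : ENNReal.ofReal (l / r) < 1 := by
      rw [← ENNReal.ofReal_one]; exact (ENNReal.ofReal_lt_ofReal_iff one_pos).2 hlr
    calc _ < 1 * (1 / 2 : ℝ≥0∞) := ENNReal.mul_lt_mul_left (by simp) (by simp) this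
      _ = _ := one_mul _
  refine csInf_eq_of_forall_ge_of_forall_gt_exists_lt ⟨l + 1, hup _ (by linarith)⟩ ?_ ?_
  · rintro r ⟨hr, hr'⟩
    by_contra! hlt
    have hr0 : 0 < r := hr
    have h1 : PhiSum φ (r⁻¹ • x) < 1 / 2 := hr'
    have h2 : PhiSum φ (l⁻¹ • x) ≤ PhiSum φ (r⁻¹ • x) := by
      refine PhiSum_mono hη1 hφ fun γ => ?_
      have : |l⁻¹| * |x γ| ≤ |r⁻¹| * |x γ| := by
        rw [abs_of_pos (inv_pos.2 hl), abs_of_pos (inv_pos.2 hr0)]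
        gcongr
      simpa [abs_mul] using this
    rw [h] at h2
    exact absurd h1 (not_lt.2 h2)
  · intro w hw
    obtain ⟨r, h1, h2⟩ := exists_between hw
    exact ⟨r, hup r h1, h2⟩

/-- The finite part of the sum as a function of the point and the scale. -/
noncomputable def GZ {Γ : Type*} (φ : ℝ → ℝ) (F : Finset Γ)
    (p : lp (fun _ : Γ => ℝ) ∞ × ℝ) : ℝ :=
  ∑ γ ∈ F, φ |p.2⁻¹ * p.1 γ|

theorem GZ_contDiffAt {Γ : Type*} {η : ℝ} {φ : ℝ → ℝ} (hη1 : η < 1) (hφ : IsPhiEta η φ)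
    (F : Finset Γ) (p : lp (fun _ : Γ => ℝ) ∞ × ℝ) (hp : p.2 ≠ 0) :
    ContDiffAt ℝ ((⊤ : ℕ∞) : WithTop ℕ∞) (GZ φ F) p := by
  have e : GZ φ F = fun p : lp (fun _ : Γ => ℝ) ∞ × ℝ =>
      ∑ γ ∈ F, (φ (p.2⁻¹ * evZ γ p.1) + φ (-(p.2⁻¹ * evZ γ p.1))) := by
    funext p
    simp only [GZ, phi_abs hη1 hφ, evZ_apply]
  rw [e]
  refine ContDiffAt.sum fun γ _ => ?_
  have h1 : ContDiffAt ℝ ((⊤ : ℕ∞) : WithTop ℕ∞)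
      (fun p : lp (fun _ : Γ => ℝ) ∞ × ℝ => p.2⁻¹ * evZ γ p.1) p :=
    (contDiffAt_snd.inv hp).mul ((evZ γ).contDiff.contDiffAt.comp p contDiffAt_fst)
  exact (hφ.1.contDiffAt.comp p h1).add (hφ.1.contDiffAt.comp p h1.neg)

theorem GZ_anti {Γ : Type*} {η : ℝ} {φ : ℝ → ℝ} (hη1 : η < 1) (hφ : IsPhiEta η φ)
    (F : Finset Γ) (x : lp (fun _ : Γ => ℝ) ∞) :
    AntitoneOn (fun s : ℝ => s * GZ φ F (x, s)) (Set.Ioi 0) := by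
  intro s hs s' hs' hss
  have hs : 0 < s := hs
  have hs' : 0 < s' := hs'
  simp only [GZ, Finset.mul_sum]
  refine Finset.sum_le_sum fun γ _ => ?_
  have h := phi_scale hη1 hφ (c := s / s') (by positivity) ((div_le_one hs').2 hss)
    (abs_nonneg (s⁻¹ * x γ))
  have e : s / s' * |s⁻¹ * x γ| = |s'⁻¹ * x γ| := by
    rw [abs_mul, abs_mul, abs_of_pos (inv_pos.2 hs), abs_of_pos (inv_pos.2 hs')]
    field_simp
  rw [e] at h
  calc s' * φ |s'⁻¹ * x γ| ≤ s' * (s / s' * φ |s⁻¹ * x γ|) := by gcongr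
    _ = _ := by field_simp

theorem GZ_invertible {Γ : Type*} {η : ℝ} {φ : ℝ → ℝ} (hη1 : η < 1) (hφ : IsPhiEta η φ)
    (F : Finset Γ) (x : lp (fun _ : Γ => ℝ) ∞) {l : ℝ} (hl : 0 < l)
    (h : GZ φ F (x, l) = 1 / 2) :
    (fderiv ℝ (GZ φ F) (x, l) ∘L .inr ℝ (lp (fun _ : Γ => ℝ) ∞) ℝ).IsInvertible := by
  set D := fderiv ℝ (GZ φ F) (x, l) ∘L .inr ℝ (lp (fun _ : Γ => ℝ) ∞) ℝ with hD
  have hd : HasFDerivAt (GZ φ F) (fderiv ℝ (GZ φ F) (x, l)) (x, l) :=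
    ((GZ_contDiffAt hη1 hφ F (x, l) hl.ne').differentiableAt (by simp)).hasFDerivAt
  have hd1 : HasFDerivAt (fun s : ℝ => GZ φ F (x, s)) D l :=
    HasFDerivAt.comp l hd (hasFDerivAt_prodMk_right x l)
  have hd2 : HasDerivAt (fun s : ℝ => GZ φ F (x, s)) (D 1) l := hd1.hasDerivAt
  have hne : D 1 ≠ 0 := by
    intro h0
    have hd3 := (hasDerivAt_id l).mul hd2
    simp only [h0, h, id] at hd3
    have h4 := (GZ_anti hη1 hφ F x).derivWithin_nonpos (x := l)
    have h5 := (hd3.hasDerivWithinAt (s := Set.Ioi 0)).derivWithin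
      (isOpen_Ioi.uniqueDiffWithinAt hl)
    have h6 : derivWithin (fun s : ℝ => s * GZ φ F (x, s)) (Set.Ioi 0) l = 1 * (1 / 2) + l * 0 := h5
    rw [h6] at h4
    norm_num at h4
  refine ⟨ContinuousLinearEquiv.unitsEquivAut ℝ (Units.mk0 (D 1) hne), ?_⟩
  ext
  simp [ContinuousLinearEquiv.unitsEquivAut]

theorem Zeta_eq_of_GZ {Γ : Type*} {η : ℝ} {φ : ℝ → ℝ} (hη1 : η < 1) (hφ : IsPhiEta η φ)
    (F : Finset Γ) {y : lp (fun _ : Γ => ℝ) ∞} {l : ℝ} (hl : 0 < l)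
    (hF : ∀ γ ∉ F, |y γ| ≤ (1 - η) * l) (h : GZ φ F (y, l) = 1 / 2) : Zeta φ y = l := by
  refine Zeta_eq hη1 hφ hl ?_
  rw [PhiSum_finset hφ F]
  · have : ∑ γ ∈ F, φ |(l⁻¹ • y) γ| = 1 / 2 := by
      simpa [GZ] using h
    rw [this, ENNReal.ofReal_div_of_pos two_pos]; simp
  · intro γ hγ
    have e : |(l⁻¹ • y) γ| = l⁻¹ * |y γ| := by
      simp [abs_mul, abs_of_pos hl]
    rw [e, inv_mul_le_iff₀ hl, mul_comm]
    exact hF γ hγ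

theorem Zeta_on_A {Γ : Type*} {η : ℝ} {φ : ℝ → ℝ} (hη0 : 0 < η) (hη1 : η < 1)
    (hφ : IsPhiEta η φ) (x : lp (fun _ : Γ => ℝ) ∞) (hx : x ∈ Aeta Γ η) :
    0 < Zeta φ x ∧
      ContDiffAt ℝ ((⊤ : ℕ∞) : WithTop ℕ∞) (Zeta φ) x ∧
      LFCAt (Zeta φ) x ∧ (1 - η) * Zeta φ x < ‖x‖ := by
  have ha : 0 < 1 - η := by linarith
  have hx' : sInf {t : ℝ | 0 ≤ t ∧ {γ : Γ | t < |x γ|}.Finite} < (1 - η) * ‖x‖ := hx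
  have hne0 : {t : ℝ | 0 ≤ t ∧ {γ : Γ | t < |x γ|}.Finite}.Nonempty := by
    refine ⟨‖x‖, norm_nonneg x, ?_⟩
    have he : {γ : Γ | ‖x‖ < |x γ|} = ∅ := by
      ext γ
      simpa using abs_apply_le x γ
    rw [he]
    exact Set.finite_empty
  obtain ⟨t, ⟨ht0, htfin⟩, htN⟩ := exists_lt_of_csInf_lt hne0 hx'
  have hN : 0 < ‖x‖ := by
    by_contra hcon
    have : ‖x‖ = 0 := le_antisymm (not_lt.1 hcon) (norm_nonneg x)
    rw [this] at htN
    linarith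
  set N := ‖x‖ with hNdef
  have haN : (1 - η) * N < N := by nlinarith
  set F : Finset Γ := htfin.toFinset with hFdef
  have hF : ∀ γ, γ ∉ F → |x γ| ≤ t := by
    intro γ hγ
    simpa [hFdef] using hγ
  -- the supremum is attained
  obtain ⟨γ₀, hγ₀F, hγ₀⟩ : ∃ γ ∈ F, |x γ| = N := by
    have hne : F.Nonempty := by
      by_contra hcon
      rw [Finset.not_nonempty_iff_eq_empty] at hcon
      have : N ≤ t := lp.norm_le_of_forall_le ht0 fun γ => hF γ (by simp [hcon])
      linarith
    obtain ⟨γ₀, h1, h2⟩ := F.exists_max_image (fun γ => |x γ|) hne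
    refine ⟨γ₀, h1, le_antisymm (abs_apply_le x γ₀) ?_⟩
    have h3 : t < |x γ₀| := by simpa [hFdef] using h1
    refine lp.norm_le_of_forall_le (abs_nonneg _) fun γ => ?_
    by_cases hγ : γ ∈ F
    · exact h2 γ hγ
    · exact (hF γ hγ).trans h3.le
  have hNN : N < N / (1 - η) := by rw [lt_div_iff₀ ha]; linarith
  have hG0 : GZ φ F (x, N / (1 - η)) = 0 := by
    refine Finset.sum_eq_zero fun γ _ => hφ.2.2.2.2.1 _ ?_
    rw [abs_mul, abs_of_pos (by positivity : 0 < (N / (1 - η))⁻¹), inv_div, div_mul_eq_mul_div,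
      div_le_iff₀ hN]
    exact mul_le_mul_of_nonneg_left (abs_apply_le x γ) ha.le
  have hG1 : 1 ≤ GZ φ F (x, N) := by
    have h1 : φ |N⁻¹ * x γ₀| = 1 := by
      rw [abs_mul, hγ₀, abs_of_pos (inv_pos.2 hN), inv_mul_cancel₀ hN.ne', hφ.2.2.2.2.2]
    rw [← h1]
    exact Finset.single_le_sum (f := fun γ => φ |N⁻¹ * x γ|)
      (fun γ _ => hφ.2.1 _ (abs_nonneg _)) hγ₀F
  have hcont : ContinuousOn (fun s : ℝ => GZ φ F (x, s)) (Set.Icc N (N / (1 - η))) := by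
    intro s hs
    have hs0 : s ≠ 0 := (hN.trans_le hs.1).ne'
    have h1 : ContinuousAt (GZ φ F) (x, s) := (GZ_contDiffAt hη1 hφ F (x, s) hs0).continuousAt
    exact (ContinuousAt.comp (f := fun s : ℝ => (x, s)) h1 (by fun_prop)).continuousWithinAt
  obtain ⟨l, hl, hGl⟩ : (1 / 2 : ℝ) ∈ (fun s : ℝ => GZ φ F (x, s)) '' Set.Icc N (N / (1 - η)) :=
    intermediate_value_Icc' hNN.le hcont ⟨by rw [hG0]; norm_num, by linarith⟩
  simp only at hGl
  have hl0 : 0 < l := hN.trans_le hl.1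
  have hltop : l < N / (1 - η) := by
    refine lt_of_le_of_ne hl.2 fun hcon => ?_
    rw [hcon, hG0] at hGl
    norm_num at hGl
  have htl : t < (1 - η) * l := htN.trans_le (mul_le_mul_of_nonneg_left hl.1 ha.le)
  have hZx : Zeta φ x = l :=
    Zeta_eq_of_GZ hη1 hφ F hl0 (fun γ hγ => (hF γ hγ).trans htl.le) hGl
  -- implicit function
  have cdf := GZ_contDiffAt hη1 hφ F (x, l) hl0.ne'
  have hinv := GZ_invertible hη1 hφ F x hl0 hGl
  have hn : ((⊤ : ℕ∞) : WithTop ℕ∞) ≠ 0 := by simp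
  obtain ⟨h, hh⟩ : ∃ h, h = cdf.implicitFunction hn hinv := ⟨_, rfl⟩
  have hhx : h x = l := hh ▸ cdf.implicitFunction_apply_self hn hinv
  have hhG : ∀ᶠ y in 𝓝 x, GZ φ F (y, h y) = GZ φ F (x, l) :=
    hh ▸ cdf.eventually_apply_implicitFunction hn hinv
  have hhC : ContDiffAt ℝ ((⊤ : ℕ∞) : WithTop ℕ∞) h x :=
    hh ▸ cdf.contDiffAt_implicitFunction hn hinv
  obtain ⟨d, hd1, hd2⟩ := exists_between htl
  have hhc : Tendsto h (𝓝 x) (𝓝 l) := by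
    have := hhC.continuousAt.tendsto
    rwa [hhx] at this
  have hd3 : d / (1 - η) < l := by rw [div_lt_iff₀ ha]; linarith
  have e1 : ∀ᶠ y in 𝓝 x, d / (1 - η) < h y := hhc.eventually (lt_mem_nhds hd3)
  have e2 : ∀ᶠ y in 𝓝 x, dist y x < d - t := Metric.ball_mem_nhds x (by linarith)
  have hd0 : 0 ≤ d := ht0.trans hd1.le
  have hU : {y | GZ φ F (y, h y) = 1 / 2 ∧ d / (1 - η) < h y ∧ dist y x < d - t} ∈ 𝓝 x := by
    filter_upwards [hhG, e1, e2] with y h1 h2 h3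
    exact ⟨h1.trans hGl, h2, h3⟩
  have hoff : ∀ y : lp (fun _ : Γ => ℝ) ∞, ∀ s : ℝ, dist y x < d - t → d / (1 - η) < s →
      ∀ γ ∉ F, |y γ| ≤ (1 - η) * s := by
    intro y s hy hs γ hγ
    have h1 := hF γ hγ
    have h2 : |(y - x) γ| ≤ dist y x := by
      rw [dist_eq_norm]; exact abs_apply_le _ _
    have h3 : |y γ| ≤ |(y - x) γ| + |x γ| := by
      have := abs_add_le ((y - x) γ) (x γ)
      simpa using this
    rw [div_lt_iff₀ ha] at hs
    linarith
  have hpos : ∀ s, d / (1 - η) < s → 0 < s := fun s hs => lt_of_le_of_lt (by positivity) hs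
  refine ⟨hZx ▸ hl0, ?_, ?_, ?_⟩
  · refine hhC.congr_of_eventuallyEq ?_
    filter_upwards [hU] with y hy
    exact Zeta_eq_of_GZ hη1 hφ F (hpos _ hy.2.1) (hoff y _ hy.2.2 hy.2.1) hy.1
  · refine ⟨_, hU, F, ?_⟩
    set U := {y | GZ φ F (y, h y) = 1 / 2 ∧ d / (1 - η) < h y ∧ dist y x < d - t} with hUdef
    let r : U → (F → ℝ) := fun y γ => (y : lp (fun _ : Γ => ℝ) ∞) γ
    let z : U → ℝ := fun y => Zeta φ (y : lp (fun _ : Γ => ℝ) ∞)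
    have hfac : Function.FactorsThrough z r := by
      intro y y' hyy
      have hy := y.2
      have hy' := y'.2
      have h1 : z y = h y :=
        Zeta_eq_of_GZ hη1 hφ F (hpos _ hy.2.1) (hoff _ _ hy.2.2 hy.2.1) hy.1
      have h2 : GZ φ F ((y' : lp (fun _ : Γ => ℝ) ∞), h y) = 1 / 2 := by
        rw [← hy.1]
        refine Finset.sum_congr rfl fun γ hγ => ?_
        have := congrFun hyy ⟨γ, hγ⟩
        simp only [r] at this
        simp only [this]
      have h3 : z y' = h y :=
        Zeta_eq_of_GZ hη1 hφ F (hpos _ hy.2.1) (hoff _ _ hy'.2.2 hy.2.1) h2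
      rw [h1, h3]
    refine ⟨Function.extend r z 0, fun y hy => ?_⟩
    exact (hfac.extend_apply 0 ⟨y, hy⟩).symm
  · rw [hZx, mul_comm]
    exact (lt_div_iff₀ ha).1 hltop

/-- **Hájek–Procházka, Lemma 5.1.** `Z_η` is a strongly lattice seminorm on `ℓ∞(Γ)` with
`(1-η) Z_η(x) ≤ ‖x‖∞`, and on `A_η(Γ)` it is strictly positive, `C^∞`-Fréchet smooth and
locally dependent on finitely many coordinates; moreover `(1-η) Z_η(x) < ‖x‖∞` on
`A_η(Γ)`. -/
theorem Zeta_seminorm_properties {Γ : Type*} (η : ℝ) (hη0 : 0 < η) (hη1 : η < 1)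
    (φ : ℝ → ℝ) (hφ : IsPhiEta η φ) :
    (∀ x : lp (fun _ : Γ => ℝ) ∞, 0 ≤ Zeta φ x) ∧
    (∀ (c : ℝ) (x : lp (fun _ : Γ => ℝ) ∞), Zeta φ (c • x) = |c| * Zeta φ x) ∧
    (∀ x y : lp (fun _ : Γ => ℝ) ∞, Zeta φ (x + y) ≤ Zeta φ x + Zeta φ y) ∧
    StronglyLattice (Zeta (Γ := Γ) φ) ∧
    (∀ x : lp (fun _ : Γ => ℝ) ∞, (1 - η) * Zeta φ x ≤ ‖x‖) ∧
    (∀ x ∈ Aeta Γ η, 0 < Zeta φ x ∧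
      ContDiffAt ℝ ((⊤ : ℕ∞) : WithTop ℕ∞) (Zeta φ) x ∧
      LFCAt (Zeta φ) x ∧ (1 - η) * Zeta φ x < ‖x‖) := by
  refine ⟨fun x => gauge_nonneg x, Zeta_smul hη1 hφ,
    fun x y => gauge_add_le (convex_sublevel hη1 hφ) (absorb hη1 hφ) x y, Zeta_lattice hη1 hφ,
    fun x => mul_gauge_le_norm (ball_subset hφ), Zeta_on_A hη0 hη1 hφ⟩
end

section
/- Fix 0 < η < 1 and a function φ_η : [0,∞) → [0,∞) which is convex, C^∞-smooth, strictly convex on [1−η,∞), with φ_η([0,1−η]) = {0} and φ_η(1) = 1; let Z_η be the Minkowski functional of {x ∈ ℓ∞(Γ) : Φ_η(x) < 1/2}, where Φ_η(x) = Σ_{γ∈Γ} φ_η(|x(γ)|). Let x_r, x ∈ A_η(Γ) (r ∈ ℕ) be non-negative elements (i.e. x(γ) ≥ 0 and x_r(γ) ≥ 0 for all γ) such that 2Z_η²(x) + 2Z_η²(x_r) − Z_η²(x + x_r) → 0 as r → ∞. Then x_r(γ) → x(γ) for every γ ∈ Γ with x(γ) > Z_η(x)(1−η). -/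
open Filter Topology
open scoped ENNReal

namespace ZetaAux

lemma phi_pos {η : ℝ} (hη1 : η < 1) {φ : ℝ → ℝ} (hφ : IsPhiEta η φ) {t : ℝ}
    (ht : 1 - η < t) : 0 < φ t := by
  obtain ⟨-, hnn, -, hs, h0, -⟩ := hφ
  have h := hs.2 (show 1 - η ∈ Set.Ici (1 - η) by simp) (show t ∈ Set.Ici (1 - η) by simpa using ht.le) ht.ne
    (show (0 : ℝ) < 1 / 2 by norm_num) (show (0 : ℝ) < 1 / 2 by norm_num) (by norm_num)
  have h1 := h0 (1 - η) le_rfl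
  simp only [smul_eq_mul, h1] at h
  have h2 := hnn (1 / 2 * (1 - η) + 1 / 2 * t) (by linarith)
  linarith

lemma phi_nn {η : ℝ} (hη1 : η < 1) {φ : ℝ → ℝ} (hφ : IsPhiEta η φ) (t : ℝ) : 0 ≤ φ t := by
  rcases le_or_gt t (1 - η) with h | h
  · exact (hφ.2.2.2.2.1 t h).ge
  · exact (phi_pos hη1 hφ h).le

lemma phi_mono {η : ℝ} (hη1 : η < 1) {φ : ℝ → ℝ} (hφ : IsPhiEta η φ) : Monotone φ := by
  intro s t hst
  rcases le_or_gt s (1 - η) with h | h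
  · rw [hφ.2.2.2.2.1 s h]; exact phi_nn hη1 hφ t
  · have hd : 0 < t - (1 - η) := by linarith
    have hc := hφ.2.2.1.2 (show 1 - η ∈ Set.Ici (0 : ℝ) by simp; linarith)
      (show t ∈ Set.Ici (0 : ℝ) by simp; linarith)
      (show 0 ≤ (t - s) / (t - (1 - η)) from div_nonneg (by linarith) hd.le)
      (show 0 ≤ (s - (1 - η)) / (t - (1 - η)) from div_nonneg (by linarith) hd.le)
      (by field_simp; ring)
    have e : (t - s) / (t - (1 - η)) * (1 - η) + (s - (1 - η)) / (t - (1 - η)) * t = s := by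
      field_simp; ring
    simp only [smul_eq_mul, e, hφ.2.2.2.2.1 (1 - η) le_rfl, mul_zero, zero_add] at hc
    have hb : (s - (1 - η)) / (t - (1 - η)) ≤ 1 := by
      rw [div_le_one hd]; linarith
    have := mul_le_mul_of_nonneg_right hb (phi_nn hη1 hφ t)
    linarith

lemma phi_mid {η : ℝ} {φ : ℝ → ℝ} (hφ : IsPhiEta η φ) {s t : ℝ}
    (hs : 0 ≤ s) (ht : 0 ≤ t) : 2 * φ ((s + t) / 2) ≤ φ s + φ t := by
  have hc := hφ.2.2.1.2 (show s ∈ Set.Ici (0 : ℝ) by simpa using hs)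
      (show t ∈ Set.Ici (0 : ℝ) by simpa using ht)
      (show (0 : ℝ) ≤ 1 / 2 by norm_num) (show (0 : ℝ) ≤ 1 / 2 by norm_num) (by norm_num)
  simp only [smul_eq_mul] at hc
  rw [show (s + t) / 2 = 1 / 2 * s + 1 / 2 * t by ring]
  linarith

lemma phi_mid_strict {η : ℝ} (hη1 : η < 1) {φ : ℝ → ℝ} (hφ : IsPhiEta η φ) {s t : ℝ}
    (hs : 1 - η < s) (hne : t ≠ s) : 2 * φ ((s + t) / 2) < φ s + φ t := by
  have key : ∀ t, 1 - η ≤ t → t ≠ s → 2 * φ ((s + t) / 2) < φ s + φ t := by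
    intro t ht hne
    have hc := hφ.2.2.2.1.2 (show s ∈ Set.Ici (1 - η) by simpa using hs.le)
      (show t ∈ Set.Ici (1 - η) by simpa using ht) hne.symm
      (show (0 : ℝ) < 1 / 2 by norm_num) (show (0 : ℝ) < 1 / 2 by norm_num) (by norm_num)
    simp only [smul_eq_mul] at hc
    rw [show (s + t) / 2 = 1 / 2 * s + 1 / 2 * t by ring]
    linarith
  rcases le_or_gt (1 - η) t with h | h
  · exact key t h hne
  · have h1 := key (1 - η) le_rfl hs.ne
    have h2 := phi_mono hη1 hφ (show (s + t) / 2 ≤ (s + (1 - η)) / 2 by linarith)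
    rw [hφ.2.2.2.2.1 t h.le]
    rw [hφ.2.2.2.2.1 (1 - η) le_rfl] at h1
    linarith

lemma phi_cont {η : ℝ} {φ : ℝ → ℝ} (hφ : IsPhiEta η φ) : Continuous φ := hφ.1.continuous

/-- uniform strict midpoint convexity -/
lemma phi_gap {η : ℝ} (hη1 : η < 1) {φ : ℝ → ℝ} (hφ : IsPhiEta η φ) {s : ℝ}
    (hs : 1 - η < s) {ε : ℝ} (hε : 0 < ε) :
    ∃ δ > 0, ∀ t, 0 ≤ t → t ≤ 1 → ε ≤ |t - s| → 2 * φ ((s + t) / 2) + 2 * δ ≤ φ s + φ t := by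
  have hc := phi_cont hφ
  let K : Set ℝ := Set.Icc 0 1 ∩ {t | ε ≤ |t - s|}
  have hK : IsCompact K := by
    apply isCompact_Icc.inter_right
    exact isClosed_le continuous_const (by fun_prop)
  rcases K.eq_empty_or_nonempty with h | h
  · refine ⟨1, one_pos, fun t h0 h1 h2 => ?_⟩
    have : t ∈ K := ⟨⟨h0, h1⟩, h2⟩
    simp [h] at this
  · obtain ⟨t0, ht0, hmin⟩ := hK.exists_isMinOn h
      (f := fun t => φ s + φ t - 2 * φ ((s + t) / 2)) (by fun_prop)
    have hne : t0 ≠ s := by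
      rintro rfl
      have : ε ≤ |t0 - t0| := ht0.2
      simp at this; linarith
    have hp := phi_mid_strict hη1 hφ hs hne
    refine ⟨(φ s + φ t0 - 2 * φ ((s + t0) / 2)) / 2, by linarith, fun t h0 h1 h2 => ?_⟩
    have := hmin (show t ∈ K from ⟨⟨h0, h1⟩, h2⟩)
    simp only [Set.mem_ofPred_eq] at this
    linarith

variable {Γ : Type*}

lemma PhiSum_le_iff {η : ℝ} (hη1 : η < 1) {φ : ℝ → ℝ} (hφ : IsPhiEta η φ)
    (y : lp (fun _ : Γ => ℝ) ∞) {c : ℝ} (hc : 0 ≤ c) :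
    PhiSum φ y ≤ ENNReal.ofReal c ↔ ∀ F : Finset Γ, ∑ γ ∈ F, φ |y γ| ≤ c := by
  unfold PhiSum
  rw [ENNReal.tsum_eq_iSup_sum, iSup_le_iff]
  refine forall_congr' fun F => ?_
  rw [← ENNReal.ofReal_sum_of_nonneg (fun i _ => phi_nn hη1 hφ _), ENNReal.ofReal_le_ofReal_iff hc]

lemma half_eq : (1 / 2 : ℝ≥0∞) = ENNReal.ofReal (1 / 2) := by
  rw [ENNReal.ofReal_div_of_pos (by norm_num)]; simp

lemma convex_C {η : ℝ} (hη1 : η < 1) {φ : ℝ → ℝ} (hφ : IsPhiEta η φ) :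
    Convex ℝ {x : lp (fun _ : Γ => ℝ) ∞ | PhiSum φ x < 1 / 2} := by
  intro y hy z hz a b ha hb hab
  have hm : max (PhiSum φ y) (PhiSum φ z) < 1 / 2 := max_lt hy hz
  refine lt_of_le_of_lt ?_ hm
  calc PhiSum φ (a • y + b • z)
      ≤ ∑' γ, (ENNReal.ofReal a * ENNReal.ofReal (φ |y γ|)
          + ENNReal.ofReal b * ENNReal.ofReal (φ |z γ|)) := by
        refine ENNReal.tsum_le_tsum fun γ => ?_
        rw [← ENNReal.ofReal_mul ha, ← ENNReal.ofReal_mul hb,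
          ← ENNReal.ofReal_add (mul_nonneg ha (phi_nn hη1 hφ _)) (mul_nonneg hb (phi_nn hη1 hφ _))]
        apply ENNReal.ofReal_le_ofReal
        have h1 : |(a • y + b • z : lp (fun _ : Γ => ℝ) ∞) γ| ≤ a * |y γ| + b * |z γ| := by
          rw [lp.coeFn_add, lp.coeFn_smul, lp.coeFn_smul]
          simp only [Pi.add_apply, Pi.smul_apply, smul_eq_mul]
          refine (abs_add_le _ _).trans ?_
          rw [abs_mul, abs_mul, abs_of_nonneg ha, abs_of_nonneg hb]
        refine (phi_mono hη1 hφ h1).trans ?_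
        have := hφ.2.2.1.2 (show |y γ| ∈ Set.Ici (0 : ℝ) by simp) (show |z γ| ∈ Set.Ici (0 : ℝ) by simp) ha hb hab
        simpa using this
    _ = ENNReal.ofReal a * PhiSum φ y + ENNReal.ofReal b * PhiSum φ z := by
        rw [ENNReal.tsum_add, ENNReal.tsum_mul_left, ENNReal.tsum_mul_left]; rfl
    _ ≤ ENNReal.ofReal a * max (PhiSum φ y) (PhiSum φ z)
        + ENNReal.ofReal b * max (PhiSum φ y) (PhiSum φ z) := by
        gcongr
        · exact le_max_left _ _
        · exact le_max_right _ _
    _ = max (PhiSum φ y) (PhiSum φ z) := by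
        rw [← add_mul, ← ENNReal.ofReal_add ha hb, hab]; simp

lemma absorbent_C {η : ℝ} (hη1 : η < 1) {φ : ℝ → ℝ} (hφ : IsPhiEta η φ) :
    Absorbent ℝ {x : lp (fun _ : Γ => ℝ) ∞ | PhiSum φ x < 1 / 2} := by
  apply absorbent_nhds_zero
  refine mem_of_superset (Metric.ball_mem_nhds 0 (show 0 < 1 - η by linarith)) fun y hy => ?_
  have h : PhiSum φ y = 0 := by
    unfold PhiSum
    rw [ENNReal.tsum_eq_zero]
    intro γ
    have h1 : ‖y γ‖ ≤ ‖y‖ := lp.norm_apply_le_norm (by simp) y γ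
    rw [Real.norm_eq_abs] at h1
    rw [mem_ball_zero_iff] at hy
    rw [hφ.2.2.2.2.1 _ (by linarith)]; simp
  simp [h]

lemma Zeta_add_le {η : ℝ} (hη1 : η < 1) {φ : ℝ → ℝ} (hφ : IsPhiEta η φ)
    (x y : lp (fun _ : Γ => ℝ) ∞) : Zeta φ (x + y) ≤ Zeta φ x + Zeta φ y :=
  gauge_add_le (convex_C hη1 hφ) (absorbent_C hη1 hφ) x y

lemma Zeta_smul (φ : ℝ → ℝ) {a : ℝ} (ha : 0 ≤ a) (x : lp (fun _ : Γ => ℝ) ∞) :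
    Zeta φ (a • x) = a * Zeta φ x := by
  exact gauge_smul_of_nonneg (s := {x : lp (fun _ : Γ => ℝ) ∞ | PhiSum φ x < 1 / 2}) ha x

lemma Zeta_nonneg (φ : ℝ → ℝ) (x : lp (fun _ : Γ => ℝ) ∞) : 0 ≤ Zeta φ x := gauge_nonneg _

lemma sum_le_of_gt {η : ℝ} (hη1 : η < 1) {φ : ℝ → ℝ} (hφ : IsPhiEta η φ)
    (x : lp (fun _ : Γ => ℝ) ∞) {l : ℝ} (hl : Zeta φ x < l) (F : Finset Γ) :
    ∑ γ ∈ F, φ (|x γ| / l) ≤ 1 / 2 := by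
  obtain ⟨b, hb0, hbl, hb⟩ := exists_lt_of_gauge_lt (absorbent_C hη1 hφ) hl
  obtain ⟨y, hy, rfl⟩ := hb
  have hy' : PhiSum φ y < 1 / 2 := hy
  rw [half_eq] at hy'
  refine le_trans ?_ ((PhiSum_le_iff hη1 hφ y (by norm_num)).1 hy'.le F)
  refine Finset.sum_le_sum fun γ _ => phi_mono hη1 hφ ?_
  simp only [lp.coeFn_smul, Pi.smul_apply, smul_eq_mul, abs_mul, abs_of_pos hb0]
  rw [div_le_iff₀ (by linarith), mul_comm]
  exact mul_le_mul_of_nonneg_left hbl.le (abs_nonneg _)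

lemma sum_le_Zeta {η : ℝ} (hη1 : η < 1) {φ : ℝ → ℝ} (hφ : IsPhiEta η φ)
    (x : lp (fun _ : Γ => ℝ) ∞) (h0 : 0 < Zeta φ x) (F : Finset Γ) :
    ∑ γ ∈ F, φ (|x γ| / Zeta φ x) ≤ 1 / 2 := by
  have hc := phi_cont hφ
  have ht : Tendsto (fun l => ∑ γ ∈ F, φ (|x γ| / l)) (𝓝[>] (Zeta φ x))
      (𝓝 (∑ γ ∈ F, φ (|x γ| / Zeta φ x))) := by
    apply tendsto_finsetSum
    intro γ _
    apply (hc.tendsto _).comp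
    exact (tendsto_const_nhds.div tendsto_id h0.ne').mono_left nhdsWithin_le_nhds
  refine le_of_tendsto ht ?_
  filter_upwards [self_mem_nhdsWithin] with l hl
  exact sum_le_of_gt hη1 hφ x hl F

lemma le_one_of_phi {η : ℝ} (hη1 : η < 1) {φ : ℝ → ℝ} (hφ : IsPhiEta η φ)
    {t : ℝ} (h : φ t ≤ 1 / 2) : t ≤ 1 := by
  by_contra! hc
  have := phi_mono hη1 hφ hc.le
  rw [hφ.2.2.2.2.2] at this
  linarith

lemma abs_le_Zeta {η : ℝ} (hη1 : η < 1) {φ : ℝ → ℝ} (hφ : IsPhiEta η φ)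
    (x : lp (fun _ : Γ => ℝ) ∞) (γ : Γ) : |x γ| ≤ Zeta φ x := by
  refine le_of_forall_gt_imp_ge_of_dense fun l hl => ?_
  have h := sum_le_of_gt hη1 hφ x hl {γ}
  simp only [Finset.sum_singleton] at h
  have := le_one_of_phi hη1 hφ h
  rwa [div_le_one ((Zeta_nonneg φ x).trans_lt hl)] at this

lemma norm_le_Zeta {η : ℝ} (hη1 : η < 1) {φ : ℝ → ℝ} (hφ : IsPhiEta η φ)
    (x : lp (fun _ : Γ => ℝ) ∞) : ‖x‖ ≤ Zeta φ x :=
  lp.norm_le_of_forall_le (Zeta_nonneg φ x) fun γ => abs_le_Zeta hη1 hφ x γ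

lemma Aeta_finite {η : ℝ} {x : lp (fun _ : Γ => ℝ) ∞} (hη1 : η < 1) (hx : x ∈ Aeta Γ η) :
    0 < ‖x‖ ∧ ∃ t < (1 - η) * ‖x‖, 0 ≤ t ∧ {γ : Γ | t < |x γ|}.Finite := by
  have hx' : sInf {t : ℝ | 0 ≤ t ∧ {γ : Γ | t < |x γ|}.Finite} < (1 - η) * ‖x‖ := hx
  constructor
  · have : 0 ≤ sInf {t : ℝ | 0 ≤ t ∧ {γ : Γ | t < |x γ|}.Finite} :=
      Real.sInf_nonneg fun t ht => ht.1
    by_contra! h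
    nlinarith
  · have hne : {t : ℝ | 0 ≤ t ∧ {γ : Γ | t < |x γ|}.Finite}.Nonempty := by
      refine ⟨‖x‖, norm_nonneg _, ?_⟩
      convert Set.finite_empty
      ext γ
      have h1 : ‖x γ‖ ≤ ‖x‖ := lp.norm_apply_le_norm (by simp) x γ
      simpa using h1
    obtain ⟨t, ht, h⟩ := exists_lt_of_csInf_lt hne hx'
    exact ⟨t, h, ht.1, ht.2⟩

/-- Key lemma. -/
lemma key {η : ℝ} (hη1 : η < 1) {φ : ℝ → ℝ} (hφ : IsPhiEta η φ)
    (u : lp (fun _ : Γ => ℝ) ∞) (hu0 : ∀ γ, 0 ≤ u γ)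
    (hu : ∀ F : Finset Γ, ∑ γ ∈ F, φ (u γ) ≤ 1 / 2)
    {c : ℝ} (hc : c < 1 - η) (hfin : {γ | c < u γ}.Finite) (γ₀ : Γ) (hγ : 1 - η < u γ₀)
    {ε : ℝ} (hε : 0 < ε) :
    ∃ l > 1, ∀ w : lp (fun _ : Γ => ℝ) ∞, (∀ γ, 0 ≤ w γ) →
      (∀ F : Finset Γ, ∑ γ ∈ F, φ (w γ) ≤ 1 / 2) → ε ≤ |w γ₀ - u γ₀| →
      Zeta φ (u + w) ≤ 2 / l := by
  classical
  obtain ⟨δ, hδ, hgap⟩ := phi_gap hη1 hφ hγ hε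
  have hcont := phi_cont hφ
  set d := (1 - η) - c with hd
  have hd0 : 0 < d := by linarith
  have ha := phi_pos hη1 hφ (show 1 - η < 1 - η + d / 2 by linarith)
  set A := φ (1 - η + d / 2) with hA
  set N : ℝ := hfin.toFinset.card + 1 / A with hN
  have hN0 : 0 < N := by positivity
  -- uniform continuity
  have huc : UniformContinuousOn φ (Set.Icc 0 2) :=
    isCompact_Icc.uniformContinuousOn_of_continuous hcont.continuousOn
  obtain ⟨ρ, hρ, hρ'⟩ := Metric.uniformContinuousOn_iff.1 huc (δ / (2 * N)) (by positivity)
  obtain ⟨l, hl1, hl2, hlρ, hld⟩ : ∃ l : ℝ, 1 < l ∧ l ≤ 2 ∧ l - 1 < ρ ∧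
      l * ((1 - η) - d / 4) ≤ 1 - η := by
    have h1 : ∀ᶠ l : ℝ in 𝓝[>] 1, l - 1 < ρ := by
      apply nhdsWithin_le_nhds
      exact (by fun_prop : Continuous fun l : ℝ => l - 1).continuousAt.eventually_lt
        continuousAt_const (by simpa)
    have h2 : ∀ᶠ l : ℝ in 𝓝[>] 1, l * ((1 - η) - d / 4) < 1 - η := by
      apply nhdsWithin_le_nhds
      exact (by fun_prop : Continuous fun l : ℝ => l * ((1 - η) - d / 4)).continuousAt.eventually_lt
        continuousAt_const (by linarith)
    have h3 : ∀ᶠ l : ℝ in 𝓝[>] 1, l < 2 := by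
      apply nhdsWithin_le_nhds
      exact eventually_lt_nhds (by norm_num)
    obtain ⟨l, ⟨h1, h2, h3⟩, h4⟩ := ((h1.and (h2.and h3)).and self_mem_nhdsWithin).exists
    exact ⟨l, h4, h3.le, h1, h2.le⟩
  refine ⟨l, hl1, fun w hw0 hw hwε => ?_⟩
  have hu1 : ∀ γ, u γ ≤ 1 := fun γ => le_one_of_phi hη1 hφ (by simpa using hu {γ})
  have hw1 : ∀ γ, w γ ≤ 1 := fun γ => le_one_of_phi hη1 hφ (by simpa using hw {γ})
  -- sums at the midpoint
  have hmid : ∀ G : Finset Γ, ∑ γ ∈ G, φ ((u γ + w γ) / 2) ≤ 1 / 2 - δ := by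
    intro G
    have h1 : ∑ γ ∈ G, φ ((u γ + w γ) / 2) ≤ ∑ γ ∈ insert γ₀ G, φ ((u γ + w γ) / 2) :=
      Finset.sum_le_sum_of_subset_of_nonneg (Finset.subset_insert _ _)
        fun _ _ _ => phi_nn hη1 hφ _
    have h2 : ∑ γ ∈ insert γ₀ G, (2 * φ ((u γ + w γ) / 2) + if γ = γ₀ then 2 * δ else 0) ≤
        ∑ γ ∈ insert γ₀ G, (φ (u γ) + φ (w γ)) := by
      refine Finset.sum_le_sum fun γ _ => ?_
      split_ifs with h
      · subst h; exact hgap _ (hw0 _) (hw1 _) hwε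
      · simpa using phi_mid hφ (hu0 γ) (hw0 γ)
    rw [Finset.sum_add_distrib, Finset.sum_add_distrib, ← Finset.mul_sum,
      Finset.sum_ite_eq' , if_pos (Finset.mem_insert_self _ _)] at h2
    have := hu (insert γ₀ G)
    have := hw (insert γ₀ G)
    linarith
  -- dilated sums
  have hdil : ∀ G : Finset Γ, ∑ γ ∈ G, φ (l * ((u γ + w γ) / 2)) ≤ 1 / 2 - δ / 2 := by
    intro G
    set G' := G.filter (fun γ => 1 - η < l * ((u γ + w γ) / 2)) with hG'
    have h1 : ∑ γ ∈ G, φ (l * ((u γ + w γ) / 2)) = ∑ γ ∈ G', φ (l * ((u γ + w γ) / 2)) := by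
      symm
      apply Finset.sum_filter_of_ne
      intro γ _ hne
      by_contra! hle
      exact hne (hφ.2.2.2.2.1 _ hle)
    have hcard : (G'.card : ℝ) ≤ N := by
      set H := G'.filter (fun γ => 1 - η + d / 2 ≤ w γ) with hH
      have hsub : G' ⊆ hfin.toFinset ∪ H := by
        intro γ hγ'
        rw [Finset.mem_union, Set.Finite.mem_toFinset]
        by_cases hcu : c < u γ
        · exact Or.inl hcu
        · right
          rw [hH, Finset.mem_filter]
          refine ⟨hγ', ?_⟩
          have h3 := (Finset.mem_filter.1 hγ').2
          by_contra! hlt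
          have : (u γ + w γ) / 2 ≤ (1 - η) - d / 4 := by linarith
          have := mul_le_mul_of_nonneg_left this (show 0 ≤ l by linarith)
          linarith
      have hc1 : (G'.card : ℝ) ≤ hfin.toFinset.card + H.card := by
        exact_mod_cast (Finset.card_le_card hsub).trans (Finset.card_union_le _ _)
      have hc2 : (H.card : ℝ) * A ≤ 1 / 2 := by
        refine le_trans ?_ (hw H)
        rw [← nsmul_eq_mul]
        exact Finset.card_nsmul_le_sum _ _ _ fun γ hγ' =>
          phi_mono hη1 hφ (Finset.mem_filter.1 hγ').2
      have hc3 : (H.card : ℝ) ≤ 1 / A := by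
        rw [le_div_iff₀ ha]; linarith
      linarith
    rw [h1]
    have h2 : ∑ γ ∈ G', φ (l * ((u γ + w γ) / 2)) ≤
        ∑ γ ∈ G', (φ ((u γ + w γ) / 2) + δ / (2 * N)) := by
      refine Finset.sum_le_sum fun γ _ => ?_
      have hv0 : 0 ≤ (u γ + w γ) / 2 := by have := hu0 γ; have := hw0 γ; linarith
      have hv1 : (u γ + w γ) / 2 ≤ 1 := by have := hu1 γ; have := hw1 γ; linarith
      set v := (u γ + w γ) / 2
      have h3 := hρ' (l * v) ⟨by positivity, by nlinarith⟩ v ⟨hv0, by linarith⟩ (by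
        rw [Real.dist_eq, show l * v - v = (l - 1) * v by ring,
          abs_of_nonneg (mul_nonneg (by linarith) hv0)]
        nlinarith)
      rw [Real.dist_eq] at h3
      have := le_abs_self (φ (l * v) - φ v)
      linarith
    rw [Finset.sum_add_distrib, Finset.sum_const, nsmul_eq_mul] at h2
    have h4 : (G'.card : ℝ) * (δ / (2 * N)) ≤ N * (δ / (2 * N)) :=
      mul_le_mul_of_nonneg_right hcard (by positivity)
    have h5 : N * (δ / (2 * N)) = δ / 2 := by field_simp
    have := hmid G'
    linarith
  have hmem : PhiSum φ ((l / 2) • (u + w)) < 1 / 2 := by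
    have hδ2 : 0 ≤ 1 / 2 - δ / 2 := by simpa using hdil ∅
    have h1 : PhiSum φ ((l / 2) • (u + w)) ≤ ENNReal.ofReal (1 / 2 - δ / 2) := by
      rw [PhiSum_le_iff hη1 hφ _ hδ2]
      intro F
      refine le_trans (le_of_eq ?_) (hdil F)
      refine Finset.sum_congr rfl fun γ _ => ?_
      congr 1
      simp only [lp.coeFn_smul, lp.coeFn_add, Pi.smul_apply, Pi.add_apply, smul_eq_mul]
      rw [abs_of_nonneg (mul_nonneg (by linarith) (add_nonneg (hu0 γ) (hw0 γ)))]
      ring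
    refine h1.trans_lt ?_
    rw [half_eq]
    exact (ENNReal.ofReal_lt_ofReal_iff (by norm_num)).2 (by linarith)
  have h := gauge_le_one_of_mem (s := {x : lp (fun _ : Γ => ℝ) ∞ | PhiSum φ x < 1 / 2}) hmem
  have h' : Zeta φ ((l / 2) • (u + w)) ≤ 1 := h
  rw [Zeta_smul φ (by linarith)] at h'
  rw [le_div_iff₀ (by linarith)]
  linarith

end ZetaAux

open ZetaAux in
/-- **Hájek–Procházka, Lemma 5.3.** Let `x_r, x ∈ A_η(Γ)` be non-negative with
`2 Z_η(x)² + 2 Z_η(x_r)² - Z_η(x + x_r)² → 0`. Then `x_r(γ) → x(γ)` for every coordinate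
`γ` with `x(γ) > Z_η(x)(1 - η)`. -/
theorem Zeta_coordinate_convergence {Γ : Type*} (η : ℝ) (hη0 : 0 < η) (hη1 : η < 1)
    (φ : ℝ → ℝ) (hφ : IsPhiEta η φ)
    (x : lp (fun _ : Γ => ℝ) ∞) (xr : ℕ → lp (fun _ : Γ => ℝ) ∞)
    (hx : x ∈ Aeta Γ η) (hxr : ∀ r, xr r ∈ Aeta Γ η)
    (hxnn : ∀ γ : Γ, 0 ≤ x γ) (hxrnn : ∀ (r : ℕ) (γ : Γ), 0 ≤ xr r γ)
    (hlim : Tendsto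
      (fun r => 2 * Zeta φ x ^ 2 + 2 * Zeta φ (xr r) ^ 2 - Zeta φ (x + xr r) ^ 2)
      atTop (𝓝 0)) :
    ∀ γ : Γ, Zeta φ x * (1 - η) < x γ →
      Tendsto (fun r => xr r γ) atTop (𝓝 (x γ)) := by
  intro γ₀ hγ₀
  obtain ⟨hxn, t, ht, ht0, hfin⟩ := Aeta_finite hη1 hx
  have hnz := norm_le_Zeta hη1 hφ x
  set z := Zeta φ x with hz
  have hz0 : 0 < z := hxn.trans_le hnz
  -- convergence of the norms
  have hsub : ∀ r, Zeta φ (x + xr r) ≤ z + Zeta φ (xr r) := fun r => Zeta_add_le hη1 hφ _ _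
  have hsq : Tendsto (fun r => (Zeta φ (xr r) - z) ^ 2) atTop (𝓝 0) := by
    refine squeeze_zero (fun r => sq_nonneg _) (fun r => ?_) hlim
    have h1 := hsub r
    have h2 := Zeta_nonneg φ (x + xr r)
    nlinarith
  have hzr : Tendsto (fun r => Zeta φ (xr r)) atTop (𝓝 z) := by
    have h1 : Tendsto (fun r => |Zeta φ (xr r) - z|) atTop (𝓝 0) := by
      have := (Real.continuous_sqrt.tendsto 0).comp hsq
      simpa [Function.comp_def, Real.sqrt_sq_eq_abs] using this
    have h2 := (tendsto_zero_iff_abs_tendsto_zero _).2 h1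
    simpa using h2.add_const z
  have hzs : Tendsto (fun r => Zeta φ (x + xr r)) atTop (𝓝 (2 * z)) := by
    have h1 : Tendsto (fun r => Zeta φ (x + xr r) ^ 2) atTop (𝓝 ((2 * z) ^ 2)) := by
      have := ((tendsto_const_nhds (x := 2 * z ^ 2)).add ((hzr.pow 2).const_mul 2)).sub hlim
      convert this using 2 <;> ring
    have h2 := (Real.continuous_sqrt.tendsto _).comp h1
    rw [Real.sqrt_sq (by positivity)] at h2
    refine h2.congr fun r => ?_
    simp [Real.sqrt_sq (Zeta_nonneg φ (x + xr r))]
  have hpos : ∀ᶠ r in atTop, 0 < Zeta φ (xr r) := hzr.eventually (lt_mem_nhds hz0)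
  have hu0 : ∀ γ, 0 ≤ (z⁻¹ • x) γ := fun γ => by
    simpa using mul_nonneg (inv_nonneg.2 hz0.le) (hxnn γ)
  have hsumform : ∀ y : lp (fun _ : Γ => ℝ) ∞, (∀ γ, 0 ≤ y γ) → 0 < Zeta φ y →
      ∀ F : Finset Γ, ∑ γ ∈ F, φ (((Zeta φ y)⁻¹ • y) γ) ≤ 1 / 2 := by
    intro y hy h0 F
    refine le_trans (le_of_eq ?_) (sum_le_Zeta hη1 hφ y h0 F)
    refine Finset.sum_congr rfl fun γ _ => ?_
    congr 1
    simp only [lp.coeFn_smul, Pi.smul_apply, smul_eq_mul]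
    rw [abs_of_nonneg (hy γ)]; field_simp
  have hc : t / z < 1 - η := by
    rw [div_lt_iff₀ hz0]
    have := mul_le_mul_of_nonneg_left hnz (show 0 ≤ 1 - η by linarith)
    linarith
  have hfin' : {γ | t / z < (z⁻¹ • x) γ}.Finite := by
    refine hfin.subset fun γ hγ => ?_
    simp only [Set.mem_ofPred_eq, lp.coeFn_smul, Pi.smul_apply, smul_eq_mul] at hγ ⊢
    rw [abs_of_nonneg (hxnn γ)]
    rw [inv_mul_eq_div] at hγ
    exact (div_lt_div_iff_of_pos_right hz0).1 hγ
  have hγ' : 1 - η < (z⁻¹ • x) γ₀ := by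
    simp only [lp.coeFn_smul, Pi.smul_apply, smul_eq_mul]
    rw [inv_mul_eq_div, lt_div_iff₀ hz0]; linarith
  -- lower bound for the normalized sum
  have hlow : Tendsto (fun r => z⁻¹ * Zeta φ (x + xr r) - |z⁻¹ - (Zeta φ (xr r))⁻¹| * Zeta φ (xr r))
      atTop (𝓝 2) := by
    have h1 := (hzs.const_mul z⁻¹).sub (((hzr.inv₀ hz0.ne').const_sub z⁻¹).abs.mul hzr)
    convert h1 using 2
    field_simp
    simp
  have hlow' : ∀ r, z⁻¹ * Zeta φ (x + xr r) - |z⁻¹ - (Zeta φ (xr r))⁻¹| * Zeta φ (xr r) ≤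
      Zeta φ (z⁻¹ • x + (Zeta φ (xr r))⁻¹ • xr r) := by
    intro r
    set b := (Zeta φ (xr r))⁻¹
    have hsm : Zeta φ ((z⁻¹ - b) • xr r) ≤ |z⁻¹ - b| * Zeta φ (xr r) := by
      rcases le_total 0 (z⁻¹ - b) with h | h
      · rw [Zeta_smul φ h, abs_of_nonneg h]
      · have e : Zeta φ ((z⁻¹ - b) • xr r) = Zeta φ (|z⁻¹ - b| • xr r) := by
          have hs : ∀ y ∈ {x : lp (fun _ : Γ => ℝ) ∞ | PhiSum φ x < 1 / 2},
              -y ∈ {x : lp (fun _ : Γ => ℝ) ∞ | PhiSum φ x < 1 / 2} := by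
            intro y hy
            have : PhiSum φ (-y) = PhiSum φ y := by simp [PhiSum]
            simpa [this] using hy
          rw [abs_of_nonpos h, neg_smul]
          exact (gauge_neg hs _).symm
        rw [e, Zeta_smul φ (abs_nonneg _)]
    have h1 := Zeta_add_le hη1 hφ (z⁻¹ • x + b • xr r) ((z⁻¹ - b) • xr r)
    have e : z⁻¹ • x + b • xr r + (z⁻¹ - b) • xr r = z⁻¹ • (x + xr r) := by
      module
    rw [e, Zeta_smul φ (inv_nonneg.2 hz0.le)] at h1
    linarith
  have hmain : Tendsto (fun r => ((Zeta φ (xr r))⁻¹ • xr r) γ₀) atTop (𝓝 ((z⁻¹ • x) γ₀)) := by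
    rw [Metric.tendsto_nhds]
    intro ε hε
    obtain ⟨l, hl, hkey⟩ := key hη1 hφ (z⁻¹ • x) hu0 (hsumform x hxnn hz0) hc hfin' γ₀ hγ' hε
    have h2 : 2 / l < 2 := by
      rw [div_lt_iff₀ (by linarith)]; linarith
    filter_upwards [hpos, hlow.eventually (lt_mem_nhds h2)] with r hr hr2
    by_contra! hcon
    have h3 := hkey ((Zeta φ (xr r))⁻¹ • xr r) (fun γ => by
      simpa using mul_nonneg (inv_nonneg.2 hr.le) (hxrnn r γ)) (hsumform _ (hxrnn r) hr) hcon
    have := hlow' r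
    linarith
  have hfinal := hzr.mul hmain
  have e : z * (z⁻¹ • x) γ₀ = x γ₀ := by
    simp only [lp.coeFn_smul, Pi.smul_apply, smul_eq_mul]; field_simp
  rw [e] at hfinal
  refine hfinal.congr' ?_
  filter_upwards [hpos] with r hr
  simp only [lp.coeFn_smul, Pi.smul_apply, smul_eq_mul]; field_simp
end
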